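/- Assume the curve setup with counterclockwise orientation and let a well distributed mesh with parameters κ ≥ 2 and M > 0 be given. Then there exist C > 0 and N₀ such that the following holds for every N ≥ N₀. Let f : ℝ → ℝ be an L-periodic function of class C^κ with ∫₀^L f = 0, let γ ∈ ℝ, and suppose γ^N ∈ ℝ^N satisfies (1/N)·Σ_{j=1}^{N} γ^N_j·((l(s̃_i^N) − l(s_j^N))·τ(s̃_i^N))/‖l(s̃_i^N) − l(s_j^N)‖² = f(s̃_i^N) for all 1 ≤ i ≤ N−1, together with N^{−1}·Σ_{j=1}^{N} γ^N_j = γ. Define f_app^N(s) = (1/N)·Σ_{j=1}^{N} γ^N_j·((l(s) − l(s_j^N))·τ(s))/‖l(s) − l(s_j^N)‖². Then for every infinitely differentiable L-periodic function φ : ℝ → ℝ, |p.v.∫₀^L f_app^N(s)·φ(s) ds − ∫₀^L f(s)·φ(s) ds| ≤ C·N^{−κ}·(‖f‖_{C^κ} + |γ|)·‖φ‖_{C^{κ+1}}, where p.v.∫₀^L f_app^N·φ denotes the limit as ε → 0⁺ of the integral of f_app^N·φ over the set of s ∈ [0, L) whose distance modulo L to every point s_j^N is at least ε. -/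

import Mathlib

open Real MeasureTheory Filter Topology

/-- Dot product of two points of the plane `ℝ² ≃ ℂ`. -/
noncomputable def dotR (z w : ℂ) : ℝ := z.re * w.re + z.im * w.im

/-- The `C^m` norm of a function. -/
noncomputable def Cnorm (m : ℕ) (g : ℝ → ℝ) : ℝ :=
  ⨆ p : Fin (m + 1) × ℝ, |iteratedDeriv (p.1 : ℕ) g p.2|

theorem contDiff_param_nat (n : ℕ) : ∀ (G : Type) [NormedAddCommGroup G] [NormedSpace ℝ G]
    [CompleteSpace G]
    (f : (ℝ × ℝ) × ℝ → G), ContDiff ℝ (⊤ : ℕ∞) f →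
    ContDiff ℝ n (fun p : ℝ × ℝ => ∫ y in (0:ℝ)..1, f (p, y)) := by
  induction n with
  | zero =>
    intro G _ _ _ f hf
    have hc : Continuous f := hf.continuous
    simp only [Nat.cast_zero, contDiff_zero]
    exact intervalIntegral.continuous_parametric_intervalIntegral_of_continuous' (μ := volume)
      (f := fun p y => f (p, y)) hc 0 1
  | succ n ih =>
    intro G _ _ _ f hf
    set f' : (ℝ × ℝ) × ℝ → ((ℝ × ℝ) →L[ℝ] G) := fun q =>
      (fderiv ℝ f q).comp (ContinuousLinearMap.inl ℝ (ℝ × ℝ) ℝ) with hf'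
    have hf's : ContDiff ℝ (⊤ : ℕ∞) f' := by
      have h1 : ContDiff ℝ (⊤ : ℕ∞) (fderiv ℝ f) := hf.fderiv_right (by simp)
      exact h1.clm_comp contDiff_const
    have hcf : Continuous f := hf.continuous
    have hcf' : Continuous f' := hf's.continuous
    rw [Nat.cast_add, Nat.cast_one, contDiff_succ_iff_hasFDerivAt]
    refine ⟨fun p => ∫ y in (0:ℝ)..1, f' (p, y), ih _ f' hf's, ?_⟩
    intro p
    obtain ⟨C, hC⟩ := ((isCompact_closedBall p 1).prod (isCompact_Icc (a := (0:ℝ)) (b := 1))).exists_bound_of_continuousOn hcf'.continuousOn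
    refine intervalIntegral.hasFDerivAt_integral_of_dominated_of_fderiv_le (𝕜 := ℝ) (bound := fun _ => C)
      (s := Metric.closedBall p 1) (F := fun p y => f (p, y)) (F' := fun p y => f' (p, y))
      (Metric.closedBall_mem_nhds p one_pos) ?_ ?_ ?_ ?_ ?_ ?_
    · exact Eventually.of_forall fun x => (by fun_prop : Continuous fun y => f (x, y)).aestronglyMeasurable
    · exact (by fun_prop : Continuous fun y => f (p, y)).intervalIntegrable _ _
    · exact (by fun_prop : Continuous fun y => f' (p, y)).aestronglyMeasurable
    · refine Eventually.of_forall fun t ht x hx => hC _ ⟨hx, ?_⟩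
      rw [Set.uIoc_of_le zero_le_one] at ht
      exact ⟨ht.1.le, ht.2⟩
    · simp
    · refine Eventually.of_forall fun t ht x hx => ?_
      have h1 : HasFDerivAt f (fderiv ℝ f (x, t)) (x, t) :=
        (hf.differentiable (by simp)).differentiableAt.hasFDerivAt
      have h2 : HasFDerivAt (fun x : ℝ × ℝ => (x, t)) (ContinuousLinearMap.inl ℝ (ℝ × ℝ) ℝ) x :=
        hasFDerivAt_prodMk_left x t
      exact h1.comp x h2

theorem contDiff_param {G : Type} [NormedAddCommGroup G] [NormedSpace ℝ G]
    [CompleteSpace G] (f : (ℝ × ℝ) × ℝ → G) (hf : ContDiff ℝ (⊤ : ℕ∞) f) :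
    ContDiff ℝ (⊤ : ℕ∞) (fun p : ℝ × ℝ => ∫ y in (0:ℝ)..1, f (p, y)) := by
  rw [contDiff_infty]
  exact fun n => contDiff_param_nat n G f hf

open Real MeasureTheory Filter Topology

/-- parametrisation of the unit circle of period `L` -/
noncomputable def zc (L s : ℝ) : ℂ := Complex.exp (((2 * π / L * s : ℝ) : ℂ) * Complex.I)

noncomputable def had (ψ : ℝ → ℂ) (p : ℝ × ℝ) : ℂ :=
  ∫ y in (0:ℝ)..1, deriv ψ (p.2 + y * (p.1 - p.2))

noncomputable def DD (L : ℝ) (ψ : ℝ → ℂ) (p : ℝ × ℝ) : ℂ :=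
  open Classical in
  if zc L p.1 = zc L p.2 then deriv ψ p.1 / deriv (zc L) p.1
  else (ψ p.1 - ψ p.2) / (zc L p.1 - zc L p.2)

noncomputable def cc (L x : ℝ) : ℝ := π / L * (cos (π * x / L) / sin (π * x / L))

theorem zc_ne_zero (L s : ℝ) : zc L s ≠ 0 := Complex.exp_ne_zero _

theorem zc_norm (L s : ℝ) : ‖zc L s‖ = 1 := Complex.norm_exp_ofReal_mul_I _

theorem zc_smooth (L : ℝ) : ContDiff ℝ (⊤ : ℕ∞) (zc L) := by
  unfold zc
  apply ContDiff.cexp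
  apply ContDiff.mul _ contDiff_const
  exact Complex.ofRealCLM.contDiff.comp (by fun_prop : ContDiff ℝ _ fun s : ℝ => 2 * π / L * s)

theorem zc_hasDerivAt (L s : ℝ) :
    HasDerivAt (zc L) (((2 * π / L : ℝ) : ℂ) * Complex.I * zc L s) s := by
  have h1 : HasDerivAt (fun s : ℝ => ((2 * π / L * s : ℝ) : ℂ) * Complex.I)
      (((2 * π / L * 1 : ℝ) : ℂ) * Complex.I) s :=
    (((hasDerivAt_id s).const_mul (2 * π / L)).ofReal_comp).mul_const _
  have h2 := h1.cexp
  have e : ((2 * π / L : ℝ) : ℂ) * Complex.I * zc L s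
      = Complex.exp (((2 * π / L * s : ℝ) : ℂ) * Complex.I) * (((2 * π / L * 1 : ℝ) : ℂ) * Complex.I) := by
    rw [mul_one, zc]; ring
  rw [e]; exact h2

theorem zc_deriv_ne {L : ℝ} (hL : 0 < L) (s : ℝ) : deriv (zc L) s ≠ 0 := by
  rw [(zc_hasDerivAt L s).deriv]
  refine mul_ne_zero (mul_ne_zero ?_ Complex.I_ne_zero) (zc_ne_zero _ _)
  have : 0 < 2 * π / L := by positivity
  exact_mod_cast this.ne'

theorem zc_eq_iff {L : ℝ} (hL : 0 < L) (s t : ℝ) : zc L s = zc L t ↔ ∃ k : ℤ, s = t + k * L := by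
  unfold zc
  rw [Complex.exp_eq_exp_iff_exists_int]
  refine exists_congr fun k => ?_
  have hpi := pi_ne_zero
  constructor
  · intro h
    have h2 : ((2 * π / L * s : ℝ) : ℂ) = ((2 * π / L * t + k * (2 * π) : ℝ) : ℂ) := by
      have := mul_right_cancel₀ Complex.I_ne_zero (h.trans (by ring :
        _ = (((2 * π / L * t : ℝ) : ℂ) + k * (2 * π)) * Complex.I))
      rw [this]; push_cast; ring
    have h3 := Complex.ofReal_injective h2
    field_simp at h3
    linarith
  · rintro rfl
    have : (2 * π / L * (t + k * L) : ℝ) = 2 * π / L * t + k * (2 * π) := by field_simp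
    rw [this]; push_cast; ring

theorem zc_period {L : ℝ} (hL : 0 < L) (s : ℝ) : zc L (s + L) = zc L s :=
  (zc_eq_iff hL _ _).2 ⟨1, by simp⟩

theorem per_int {E : Type*} {ψ : ℝ → E} {L : ℝ} (h : ∀ s, ψ (s + L) = ψ s) (k : ℤ) (s : ℝ) :
    ψ (s + k * L) = ψ s := by
  have := (show Function.Periodic ψ L from h).int_mul k
  exact this s

theorem per_deriv {E : Type*} [NormedAddCommGroup E] [NormedSpace ℝ E] {ψ : ℝ → E} {L : ℝ}
    (h : ∀ s, ψ (s + L) = ψ s) (s : ℝ) : deriv ψ (s + L) = deriv ψ s := by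
  rw [← deriv_comp_add_const]
  congr 1
  funext x; exact h x

theorem had_smooth {ψ : ℝ → ℂ} (h : ContDiff ℝ (⊤ : ℕ∞) ψ) : ContDiff ℝ (⊤ : ℕ∞) (had ψ) := by
  have h1 : ContDiff ℝ (⊤ : ℕ∞) (deriv ψ) := (contDiff_infty_iff_deriv.1 h).2
  exact contDiff_param (fun q : (ℝ × ℝ) × ℝ => deriv ψ (q.1.2 + q.2 * (q.1.1 - q.1.2)))
    (h1.comp (by fun_prop))

theorem had_spec {ψ : ℝ → ℂ} (h : ContDiff ℝ (⊤ : ℕ∞) ψ) (s t : ℝ) :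
    ψ s - ψ t = ((s - t : ℝ) : ℂ) * had ψ (s, t) := by
  have h1 : Continuous (deriv ψ) := (contDiff_infty_iff_deriv.1 h).2.continuous
  have h2 : ∀ x, HasDerivAt ψ (deriv ψ x) x := fun x => (h.differentiable (by simp)).differentiableAt.hasDerivAt
  have h3 : ∀ y : ℝ, HasDerivAt (fun y : ℝ => ψ (t + y * (s - t)))
      ((s - t) • deriv ψ (t + y * (s - t))) y := by
    intro y
    have h4 : HasDerivAt (fun y : ℝ => t + y * (s - t)) (s - t) y := by
      simpa using ((hasDerivAt_id y).mul_const (s - t)).const_add t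
    exact (h2 _).scomp y h4
  have h5 := intervalIntegral.integral_eq_sub_of_hasDerivAt (a := 0) (b := 1) (fun y _ => h3 y)
    ((by fun_prop : Continuous fun y : ℝ => (s - t) • deriv ψ (t + y * (s - t))).intervalIntegrable _ _)
  rw [intervalIntegral.integral_smul] at h5
  simp only [one_mul, zero_mul, add_zero, add_sub_cancel] at h5
  rw [← h5, had, Complex.real_smul]

theorem had_diag (ψ : ℝ → ℂ) (t : ℝ) : had ψ (t, t) = deriv ψ t := by
  simp [had]

theorem zc_ne_of_lt {L : ℝ} (hL : 0 < L) {s t : ℝ} (h : |s - t| < L) (hne : s ≠ t) :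
    zc L s ≠ zc L t := by
  rw [Ne, zc_eq_iff hL]
  rintro ⟨k, rfl⟩
  rw [add_sub_cancel_left, abs_mul, abs_of_pos hL] at h
  have h1 : |(k : ℝ)| < 1 := by
    by_contra hh
    push Not at hh
    nlinarith
  have h2 : |k| < 1 := by exact_mod_cast h1
  rw [Int.abs_lt_one_iff] at h2
  simp [h2] at hne

theorem had_zc_ne {L : ℝ} (hL : 0 < L) {s t : ℝ} (h : |s - t| < L) : had (zc L) (s, t) ≠ 0 := by
  by_cases hst : s = t
  · subst hst; rw [had_diag]; exact zc_deriv_ne hL s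
  · intro h0
    have := had_spec (zc_smooth L) s t
    rw [h0, mul_zero, sub_eq_zero] at this
    exact zc_ne_of_lt hL h hst this

theorem DD_near {L : ℝ} (hL : 0 < L) {ψ : ℝ → ℂ} (hψ : ContDiff ℝ (⊤ : ℕ∞) ψ)
    (hper : ∀ s, ψ (s + L) = ψ s) (k : ℤ) {s t : ℝ} (h : |s - k * L - t| < L) :
    DD L ψ (s, t) = had ψ (s - k * L, t) / had (zc L) (s - k * L, t) := by
  have e1 : s = (s - k * L) + k * L := by ring
  set s' := s - k * L with hs'
  rw [e1]
  unfold DD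
  simp only
  rw [per_int (zc_period hL), per_int hper, per_int (per_deriv (zc_period hL)),
    per_int (per_deriv hper)]
  by_cases hst : s' = t
  · rw [hst]; simp [had_diag]
  · rw [if_neg (zc_ne_of_lt hL h hst), had_spec hψ, had_spec (zc_smooth L)]
    have : ((s' - t : ℝ) : ℂ) ≠ 0 := by
      exact_mod_cast sub_ne_zero.2 hst
    rw [mul_div_mul_left _ _ this]

theorem contDiffAt_divC {E : Type*} [NormedAddCommGroup E] [NormedSpace ℝ E] {n : WithTop ℕ∞}
    {f g : E → ℂ} {x : E} (hf : ContDiffAt ℝ n f x) (hg : ContDiffAt ℝ n g x) (h : g x ≠ 0) :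
    ContDiffAt ℝ n (fun x => f x / g x) x := by
  simp only [div_eq_mul_inv]
  exact hf.mul (hg.inv h)

theorem DD_smooth {L : ℝ} (hL : 0 < L) {ψ : ℝ → ℂ} (hψ : ContDiff ℝ (⊤ : ℕ∞) ψ)
    (hper : ∀ s, ψ (s + L) = ψ s) : ContDiff ℝ (⊤ : ℕ∞) (DD L ψ) := by
  rw [contDiff_iff_contDiffAt]
  rintro ⟨s, t⟩
  have hz := zc_smooth L
  by_cases hst : zc L s = zc L t
  · obtain ⟨k, hk⟩ := (zc_eq_iff hL _ _).1 hst
    have hev : ∀ᶠ p : ℝ × ℝ in 𝓝 (s, t), |p.1 - k * L - p.2| < L := by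
      have : Continuous fun p : ℝ × ℝ => |p.1 - k * L - p.2| := by fun_prop
      apply this.continuousAt.eventually_lt continuousAt_const
      simp [hk, hL]
    have h1 : ContDiffAt ℝ (⊤ : ℕ∞) (fun p : ℝ × ℝ => had ψ (p.1 - k * L, p.2) / had (zc L) (p.1 - k * L, p.2)) (s, t) := by
      apply contDiffAt_divC
      · exact ((had_smooth hψ).comp (by fun_prop)).contDiffAt
      · exact ((had_smooth hz).comp (by fun_prop)).contDiffAt
      · exact had_zc_ne hL hev.self_of_nhds
    refine h1.congr_of_eventuallyEq ?_
    filter_upwards [hev] with p hp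
    exact DD_near hL hψ hper k hp
  · have hev : ∀ᶠ p : ℝ × ℝ in 𝓝 (s, t), zc L p.1 ≠ zc L p.2 := by
      have h1 := hz.continuous
      have : Continuous fun p : ℝ × ℝ => zc L p.1 - zc L p.2 := by fun_prop
      have := this.continuousAt.eventually_ne (x := (s, t)) (y := (0:ℂ)) (sub_ne_zero.2 hst)
      filter_upwards [this] with p hp
      exact sub_ne_zero.1 hp
    have h1 : ContDiffAt ℝ (⊤ : ℕ∞) (fun p : ℝ × ℝ => (ψ p.1 - ψ p.2) / (zc L p.1 - zc L p.2)) (s, t) := by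
      apply contDiffAt_divC
      · exact ((hψ.comp contDiff_fst).sub (hψ.comp contDiff_snd)).contDiffAt
      · exact ((hz.comp contDiff_fst).sub (hz.comp contDiff_snd)).contDiffAt
      · exact sub_ne_zero.2 hst
    refine h1.congr_of_eventuallyEq ?_
    filter_upwards [hev] with p hp
    simp [DD, hp]

theorem DD_per1 {L : ℝ} (hL : 0 < L) {ψ : ℝ → ℂ} 
    (hper : ∀ s, ψ (s + L) = ψ s) (s t : ℝ) : DD L ψ (s + L, t) = DD L ψ (s, t) := by
  simp only [DD, zc_period hL, hper, per_deriv hper, per_deriv (zc_period hL)]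

theorem DD_per2 {L : ℝ} (hL : 0 < L) {ψ : ℝ → ℂ} 
    (hper : ∀ s, ψ (s + L) = ψ s) (s t : ℝ) : DD L ψ (s, t + L) = DD L ψ (s, t) := by
  simp only [DD, zc_period hL, hper]

theorem DD_spec {L : ℝ} (hL : 0 < L) {ψ : ℝ → ℂ} 
    (hper : ∀ s, ψ (s + L) = ψ s) (s t : ℝ) :
    ψ s - ψ t = DD L ψ (s, t) * (zc L s - zc L t) := by
  by_cases hst : zc L s = zc L t
  · obtain ⟨k, hk⟩ := (zc_eq_iff hL _ _).1 hst
    rw [hst, hk, per_int hper]; simp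
  · have := sub_ne_zero.2 hst
    simp only [DD, hst, if_false]
    field_simp

theorem inj_z {L : ℝ} (hL : 0 < L) {l : ℝ → ℂ} (hper : ∀ s, l (s + L) = l s)
    (hinj : Set.InjOn l (Set.Ico 0 L)) {s t : ℝ} (h : l s = l t) : zc L s = zc L t := by
  have e1 := toIcoMod_add_toIcoDiv_zsmul hL 0 s
  have e2 := toIcoMod_add_toIcoDiv_zsmul hL 0 t
  have m1 := toIcoMod_mem_Ico' hL s
  have m2 := toIcoMod_mem_Ico' hL t
  rw [zsmul_eq_mul] at e1 e2
  rw [← e1, ← e2, per_int hper, per_int hper] at h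
  have := hinj m1 m2 h
  rw [← e1, ← e2, per_int (zc_period hL), per_int (zc_period hL), this]

theorem DD_ne {L : ℝ} (hL : 0 < L) {l : ℝ → ℂ} (hper : ∀ s, l (s + L) = l s)
    (harc : ∀ s, ‖deriv l s‖ = 1) (hinj : Set.InjOn l (Set.Ico 0 L)) (p : ℝ × ℝ) :
    DD L l p ≠ 0 := by
  obtain ⟨s, t⟩ := p
  by_cases hst : zc L s = zc L t
  · simp only [DD, hst, if_true]
    refine div_ne_zero ?_ (zc_deriv_ne hL s)
    intro h0
    have := harc s
    rw [h0] at this; simp at this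
  · intro h0
    have := DD_spec hL hper s t
    rw [h0, zero_mul, sub_eq_zero] at this
    exact hst (inj_z hL hper hinj this)

open Real MeasureTheory Filter Topology

noncomputable def KK (l : ℝ → ℂ) (s t : ℝ) : ℝ :=
  dotR (l s - l t) (deriv l s) / ‖l s - l t‖ ^ 2

noncomputable def RR (L : ℝ) (l : ℝ → ℂ) (p : ℝ × ℝ) : ℝ :=
  (fderiv ℝ (DD L l) p (1, 0) / DD L l p).re

theorem dotR_div (ζ τ : ℂ) : dotR ζ τ / ‖ζ‖ ^ 2 = (τ / ζ).re := by
  rw [Complex.div_re, ← Complex.normSq_eq_norm_sq, dotR]; ring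

theorem hasDerivAt_log_norm {f : ℝ → ℂ} {f' : ℂ} {s : ℝ} (hf : HasDerivAt f f' s) (h : f s ≠ 0) :
    HasDerivAt (fun s => Real.log ‖f s‖) (f' / f s).re s := by
  have h1 : HasDerivAt (fun s => (f s).re) f'.re s := by
    exact (Complex.reCLM.hasFDerivAt.comp_hasDerivAt s hf)
  have h2 : HasDerivAt (fun s => (f s).im) f'.im s := by
    exact (Complex.imCLM.hasFDerivAt.comp_hasDerivAt s hf)
  have h3 : (fun s => Real.log ‖f s‖) = fun s => (1 / 2) * Real.log ((f s).re * (f s).re + (f s).im * (f s).im) := by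
    funext s
    rw [← Complex.normSq_apply, Complex.normSq_eq_norm_sq, Real.log_pow]; push_cast; ring
  have h4 : (f s).re * (f s).re + (f s).im * (f s).im ≠ 0 := by
    rw [← Complex.normSq_apply]; simpa using h
  rw [h3]
  have h5 := (((h1.mul h1).add (h2.mul h2)).log h4).const_mul (1/2)
  refine h5.congr_deriv ?_
  rw [Complex.div_re, Complex.normSq_apply]
  simp only [Pi.add_apply, Pi.mul_apply]
  field_simp; ring

theorem zc_sub {L : ℝ} (hL : 0 < L) (s t : ℝ) : zc L s - zc L t =
    Complex.exp (((π * (s + t) / L : ℝ) : ℂ) * Complex.I) * ((2 * sin (π * (s - t) / L) : ℝ) : ℂ) * Complex.I := by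
  have h1 : zc L s = Complex.exp (((π * (s + t) / L : ℝ) : ℂ) * Complex.I) *
      Complex.exp (((π * (s - t) / L : ℝ) : ℂ) * Complex.I) := by
    rw [zc, ← Complex.exp_add]; congr 1
    rw [← add_mul, ← Complex.ofReal_add]; congr 2; field_simp; ring
  have h2 : zc L t = Complex.exp (((π * (s + t) / L : ℝ) : ℂ) * Complex.I) *
      Complex.exp (-((π * (s - t) / L : ℝ) : ℂ) * Complex.I) := by
    rw [zc, ← Complex.exp_add]; congr 1
    rw [← add_mul, ← Complex.ofReal_neg, ← Complex.ofReal_add]; congr 2; field_simp; ring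
  rw [h1, h2, ← mul_sub, Complex.ofReal_mul, Complex.ofReal_sin, Complex.sin]
  push_cast
  linear_combination (-Complex.exp (π * (s + t) / L * Complex.I)) * (Complex.exp (-(π * (s - t) / L) * Complex.I) - Complex.exp ((π * (s - t) / L) * Complex.I)) * Complex.I_sq

theorem zc_sub_norm {L : ℝ} (hL : 0 < L) (s t : ℝ) : ‖zc L s - zc L t‖ = 2 * |sin (π * (s - t) / L)| := by
  rw [zc_sub hL, norm_mul, norm_mul, Complex.norm_exp_ofReal_mul_I, Complex.norm_I, Complex.norm_real,
    Real.norm_eq_abs, abs_mul]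
  simp

theorem sin_ne_iff {L : ℝ} (hL : 0 < L) (s t : ℝ) : sin (π * (s - t) / L) ≠ 0 ↔ zc L s ≠ zc L t := by
  rw [not_iff_not, ← sub_eq_zero (a := zc L s), ← norm_eq_zero (a := zc L s - zc L t), zc_sub_norm hL]
  simp

theorem zc_add {L : ℝ} (hL : 0 < L) (s t : ℝ) : zc L s + zc L t =
    Complex.exp (((π * (s + t) / L : ℝ) : ℂ) * Complex.I) * ((2 * cos (π * (s - t) / L) : ℝ) : ℂ) := by
  have h1 : zc L s = Complex.exp (((π * (s + t) / L : ℝ) : ℂ) * Complex.I) *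
      Complex.exp (((π * (s - t) / L : ℝ) : ℂ) * Complex.I) := by
    rw [zc, ← Complex.exp_add]; congr 1
    rw [← add_mul, ← Complex.ofReal_add]; congr 2; field_simp; ring
  have h2 : zc L t = Complex.exp (((π * (s + t) / L : ℝ) : ℂ) * Complex.I) *
      Complex.exp (-((π * (s - t) / L : ℝ) : ℂ) * Complex.I) := by
    rw [zc, ← Complex.exp_add]; congr 1
    rw [← add_mul, ← Complex.ofReal_neg, ← Complex.ofReal_add]; congr 2; field_simp; ring
  rw [h1, h2, ← mul_add, Complex.ofReal_mul, Complex.ofReal_cos, Complex.cos]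
  push_cast
  ring

/-- `i (z + w) / (z - w) = cot` -/
theorem cot_eq {L : ℝ} (hL : 0 < L) {s t : ℝ} (h : zc L s ≠ zc L t) :
    ((π / L : ℝ) : ℂ) * Complex.I * (zc L s + zc L t) = (cc L (s - t) : ℂ) * (zc L s - zc L t) := by
  have h0 := (sin_ne_iff hL s t).2 h
  rw [zc_add hL, zc_sub hL, cc]
  have h1 : (sin (π * (s - t) / L) : ℂ) ≠ 0 := by exact_mod_cast h0
  push_cast at h1 ⊢
  field_simp

theorem DD_hasDerivAt {L : ℝ} (hL : 0 < L) {ψ : ℝ → ℂ} (hψ : ContDiff ℝ (⊤ : ℕ∞) ψ)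
    (hper : ∀ s, ψ (s + L) = ψ s) (s t : ℝ) :
    HasDerivAt (fun s => DD L ψ (s, t)) (fderiv ℝ (DD L ψ) (s, t) (1, 0)) s := by
  have h1 : HasFDerivAt (DD L ψ) (fderiv ℝ (DD L ψ) (s, t)) (s, t) :=
    ((DD_smooth hL hψ hper).differentiable (by simp)).differentiableAt.hasFDerivAt
  have h2 : HasDerivAt (fun s : ℝ => (s, t)) (1, 0) s := (hasDerivAt_id s).prodMk (hasDerivAt_const s t)
  exact h1.comp_hasDerivAt s h2

theorem KK_eq {L : ℝ} (hL : 0 < L) {l : ℝ → ℂ} (hl : ContDiff ℝ (⊤ : ℕ∞) l)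
    (hper : ∀ s, l (s + L) = l s) 
    (harc : ∀ s, ‖deriv l s‖ = 1) (hinj : Set.InjOn l (Set.Ico 0 L)) {s t : ℝ} (h : zc L s ≠ zc L t) :
    KK l s t = cc L (s - t) + RR L l (s, t) := by
  have hD := DD_ne hL hper harc hinj (s, t)
  have h1 := ((DD_hasDerivAt hL hl hper s t).mul ((zc_hasDerivAt L s).sub_const (zc L t)))
  have h2 : ((fun s => DD L l (s, t)) * fun s => zc L s - zc L t) = fun s => l s - l t := by
    funext s; exact (DD_spec hL hper s t).symm
  rw [h2] at h1
  have h3 : HasDerivAt (fun s => l s - l t) (deriv l s) s :=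
    ((hl.differentiable (by simp)).differentiableAt.hasDerivAt).sub_const _
  have h4 := h3.unique h1
  rw [KK, dotR_div, h4, RR, DD_spec hL hper s t]
  have hz := sub_ne_zero.2 h
  have h5 : (fderiv ℝ (DD L l) (s, t) (1, 0) * (zc L s - zc L t) + DD L l (s, t) * (((2 * π / L : ℝ) : ℂ) * Complex.I * zc L s)) /
      (DD L l (s, t) * (zc L s - zc L t)) = fderiv ℝ (DD L l) (s, t) (1, 0) / DD L l (s, t) +
        ((π / L : ℝ) : ℂ) * Complex.I + (cc L (s - t) : ℂ) := by
    have h6 : (cc L (s - t) : ℂ) = ((π / L : ℝ) : ℂ) * Complex.I * (zc L s + zc L t) / (zc L s - zc L t) := by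
      rw [cot_eq hL h]; field_simp
    rw [h6]
    have h7 : ((2 * π / L : ℝ) : ℂ) = 2 * ((π / L : ℝ) : ℂ) := by push_cast; ring
    rw [h7]
    field_simp
    ring
  rw [h5]
  simp
  ring

theorem RR_smooth {L : ℝ} (hL : 0 < L) {l : ℝ → ℂ} (hl : ContDiff ℝ (⊤ : ℕ∞) l)
    (hper : ∀ s, l (s + L) = l s) 
    (harc : ∀ s, ‖deriv l s‖ = 1) (hinj : Set.InjOn l (Set.Ico 0 L)) : ContDiff ℝ (⊤ : ℕ∞) (RR L l) := by
  have h1 := DD_smooth hL hl hper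
  have h2 : ContDiff ℝ (⊤ : ℕ∞) (fderiv ℝ (DD L l)) := h1.fderiv_right (by simp)
  have h3 : ContDiff ℝ (⊤ : ℕ∞) (fun p => fderiv ℝ (DD L l) p (1, 0)) := h2.clm_apply contDiff_const
  refine Complex.reCLM.contDiff.comp
    (f := fun p => fderiv ℝ (DD L l) p (1, 0) / DD L l p) ?_
  rw [contDiff_iff_contDiffAt]
  intro p
  exact contDiffAt_divC h3.contDiffAt h1.contDiffAt (DD_ne hL hper harc hinj p)

theorem fderiv_per {F : Type*} [NormedAddCommGroup F] [NormedSpace ℝ F] {f : ℝ × ℝ → F} (a : ℝ × ℝ)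
    (h : ∀ p, f (p + a) = f p) (p : ℝ × ℝ) : fderiv ℝ f (p + a) = fderiv ℝ f p := by
  rw [← fderiv_comp_add_right]
  congr 1
  funext x; exact h x

theorem RR_per1 {L : ℝ} (hL : 0 < L) {l : ℝ → ℂ} (hper : ∀ s, l (s + L) = l s) (s t : ℝ) :
    RR L l (s + L, t) = RR L l (s, t) := by
  have := fderiv_per (f := DD L l) (L, 0) (fun p => by
    obtain ⟨a, b⟩ := p
    simpa using DD_per1 hL hper a b) (s, t)
  simp only [Prod.mk_add_mk, add_zero] at this
  rw [RR, RR, this, DD_per1 hL hper]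

theorem RR_per2 {L : ℝ} (hL : 0 < L) {l : ℝ → ℂ} (hper : ∀ s, l (s + L) = l s) (s t : ℝ) :
    RR L l (s, t + L) = RR L l (s, t) := by
  have := fderiv_per (f := DD L l) (0, L) (fun p => by
    obtain ⟨a, b⟩ := p
    simpa using DD_per2 hL hper a b) (s, t)
  simp only [Prod.mk_add_mk, add_zero] at this
  rw [RR, RR, this, DD_per2 hL hper]

theorem RR_hasDerivAt {L : ℝ} (hL : 0 < L) {l : ℝ → ℂ} (hl : ContDiff ℝ (⊤ : ℕ∞) l)
    (hper : ∀ s, l (s + L) = l s) 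
    (harc : ∀ s, ‖deriv l s‖ = 1) (hinj : Set.InjOn l (Set.Ico 0 L)) (s t : ℝ) :
    HasDerivAt (fun s => Real.log ‖DD L l (s, t)‖) (RR L l (s, t)) s :=
  hasDerivAt_log_norm (DD_hasDerivAt hL hl hper s t) (DD_ne hL hper harc hinj _)

theorem RR_integral {L : ℝ} (hL : 0 < L) {l : ℝ → ℂ} (hl : ContDiff ℝ (⊤ : ℕ∞) l)
    (hper : ∀ s, l (s + L) = l s) 
    (harc : ∀ s, ‖deriv l s‖ = 1) (hinj : Set.InjOn l (Set.Ico 0 L)) (t : ℝ) :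
    ∫ s in (0:ℝ)..L, RR L l (s, t) = 0 := by
  have hc := (RR_smooth hL hl hper harc hinj).continuous
  rw [intervalIntegral.integral_eq_sub_of_hasDerivAt (fun s _ => RR_hasDerivAt hL hl hper harc hinj s t)
    ((by fun_prop : Continuous fun s => RR L l (s, t)).intervalIntegrable _ _)]
  have := DD_per1 hL hper 0 t
  rw [zero_add] at this
  rw [this, sub_self]

open Real MeasureTheory Filter Topology

theorem mul_bd {A : Type*} [NormedField A] [NormedAlgebra ℝ A] {f g : ℝ → A} {k : ℕ} {s a b : ℝ}
    (hf : ContDiffAt ℝ k f s) (hg : ContDiffAt ℝ k g s) (ha : 0 ≤ a)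
    (h1 : ∀ i ≤ k, ‖iteratedDeriv i f s‖ ≤ a) (h2 : ∀ i ≤ k, ‖iteratedDeriv i g s‖ ≤ b) :
    ‖iteratedDeriv k (fun x => f x * g x) s‖ ≤ 2 ^ k * (a * b) := by
  rw [iteratedDeriv_fun_mul hf hg]
  refine (norm_sum_le _ _).trans ?_
  have e : (2:ℝ) ^ k * (a * b) = ∑ i ∈ Finset.range (k+1), (k.choose i : ℝ) * (a * b) := by
    rw [← Finset.sum_mul]; congr 1; exact_mod_cast (Nat.sum_range_choose k).symm
  rw [e]
  refine Finset.sum_le_sum fun i hi => ?_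
  have hi' : i ≤ k := by simpa [Nat.lt_succ_iff] using hi
  rw [norm_mul, norm_mul]
  have hn : ‖((k.choose i : ℕ) : A)‖ = (k.choose i : ℝ) := by
    have : ((k.choose i : ℕ) : A) = algebraMap ℝ A (k.choose i : ℝ) := by simp
    rw [this, norm_algebraMap']; simp
  rw [hn, mul_assoc]
  have := h1 i hi'
  have := h2 (k - i) (Nat.sub_le _ _)
  gcongr

theorem exists_red {L : ℝ} (hL : 0 < L) (s t : ℝ) : ∃ k : ℤ, |s + k * L - t| ≤ L / 2 := by
  refine ⟨-round ((s - t) / L), ?_⟩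
  have h := abs_sub_round ((s - t) / L)
  have e : s + ((-round ((s - t) / L) : ℤ) : ℝ) * L - t = ((s - t) / L - round ((s - t) / L)) * L := by
    push_cast; field_simp; ring
  rw [e, abs_mul, abs_of_pos hL]
  nlinarith

theorem per_bdd {E : Type*} [NormedAddCommGroup E] {L : ℝ} (hL : 0 < L) {ψ : ℝ → E} (hc : Continuous ψ)
    (hper : ∀ s, ψ (s + L) = ψ s) : ∃ C, ∀ s, ‖ψ s‖ ≤ C := by
  obtain ⟨C, hC⟩ := (isCompact_Icc (a := -(L/2)) (b := L/2)).exists_bound_of_continuousOn hc.continuousOn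
  refine ⟨C, fun s => ?_⟩
  obtain ⟨k, hk⟩ := exists_red hL s 0
  rw [← per_int hper k]
  apply hC
  simpa [abs_le] using hk

theorem per_bdd2 {E : Type*} [NormedAddCommGroup E] {L : ℝ} (hL : 0 < L) {F : ℝ × ℝ → E} (hc : Continuous F)
    (h1 : ∀ s t, F (s + L, t) = F (s, t)) (h2 : ∀ s t, F (s, t + L) = F (s, t)) :
    ∃ C, ∀ p, ‖F p‖ ≤ C := by
  obtain ⟨C, hC⟩ := ((isCompact_Icc (a := -(L/2)) (b := L/2)).prod
    (isCompact_Icc (a := -(L/2)) (b := L/2))).exists_bound_of_continuousOn hc.continuousOn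
  refine ⟨C, ?_⟩
  rintro ⟨s, t⟩
  obtain ⟨k, hk⟩ := exists_red hL s 0
  obtain ⟨k', hk'⟩ := exists_red hL t 0
  rw [← per_int (ψ := fun s => F (s, t)) (fun s => h1 s t) k, ← per_int (ψ := fun t => F (_, t)) (fun t => h2 _ t) k']
  apply hC
  constructor
  · simpa [abs_le] using hk
  · simpa [abs_le] using hk'

theorem slice_bd {E : Type*} [NormedAddCommGroup E] [NormedSpace ℝ E] {L : ℝ} (hL : 0 < L) (k : ℕ) :
    ∀ {F : ℝ × ℝ → E} (_ : ContDiff ℝ (⊤ : ℕ∞) F)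
    (_ : ∀ s t, F (s + L, t) = F (s, t)) (_ : ∀ s t, F (s, t + L) = F (s, t)),
    ∃ C, ∀ s t, ‖iteratedDeriv k (fun s => F (s, t)) s‖ ≤ C := by
  induction k with
  | zero =>
    intro F hF h1 h2
    obtain ⟨C, hC⟩ := per_bdd2 hL hF.continuous h1 h2
    exact ⟨C, fun s t => by simpa using hC (s, t)⟩
  | succ k ih =>
    intro F hF h1 h2
    have h3 : ContDiff ℝ (⊤ : ℕ∞) (fderiv ℝ F) := hF.fderiv_right (by simp)
    have h4 : ContDiff ℝ (⊤ : ℕ∞) (fun p => fderiv ℝ F p (1, 0)) := h3.clm_apply contDiff_const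
    have p1 := fderiv_per (f := F) (L, 0) (fun p => by obtain ⟨a, b⟩ := p; simpa using h1 a b)
    have p2 := fderiv_per (f := F) (0, L) (fun p => by obtain ⟨a, b⟩ := p; simpa using h2 a b)
    obtain ⟨C, hC⟩ := ih h4 (fun s t => by have := p1 (s, t); simp only [Prod.mk_add_mk, add_zero] at this; rw [this])
      (fun s t => by have := p2 (s, t); simp only [Prod.mk_add_mk, add_zero] at this; rw [this])
    refine ⟨C, fun s t => ?_⟩
    rw [iteratedDeriv_succ']
    convert hC s t using 3
    funext s
    have h5 : HasFDerivAt F (fderiv ℝ F (s, t)) (s, t) :=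
      (hF.differentiable (by simp)).differentiableAt.hasFDerivAt
    have h6 : HasDerivAt (fun s : ℝ => (s, t)) (1, 0) s := (hasDerivAt_id s).prodMk (hasDerivAt_const s t)
    exact (h5.comp_hasDerivAt s h6).deriv

theorem J_hasDerivAt {L : ℝ} (hL : 0 < L) {ψ : ℝ → ℂ} (hψ : ContDiff ℝ (⊤ : ℕ∞) ψ)
    (hper : ∀ s, ψ (s + L) = ψ s) (m : ℕ) (t s : ℝ) :
    HasDerivAt (fun s => ∫ y in (0:ℝ)..1, (y:ℂ) ^ m * ψ (t + y * (s - t)))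
      (∫ y in (0:ℝ)..1, (y:ℂ) ^ (m+1) * deriv ψ (t + y * (s - t))) s := by
  have h1 : Continuous (deriv ψ) := (contDiff_infty_iff_deriv.1 hψ).2.continuous
  have h0 : Continuous ψ := hψ.continuous
  obtain ⟨C, hC⟩ := per_bdd hL h1 (per_deriv hper)
  refine (intervalIntegral.hasDerivAt_integral_of_dominated_loc_of_deriv_le (𝕜 := ℝ)
    (F := fun s y => (y:ℂ) ^ m * ψ (t + y * (s - t)))
    (F' := fun s y => (y:ℂ) ^ (m+1) * deriv ψ (t + y * (s - t)))
    (s := Set.univ) (bound := fun _ => C) univ_mem ?_ ?_ ?_ ?_ ?_ ?_).2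
  · exact Eventually.of_forall fun x => (by fun_prop : Continuous fun y : ℝ => (y:ℂ) ^ m * ψ (t + y * (x - t))).aestronglyMeasurable
  · exact (by fun_prop : Continuous fun y : ℝ => (y:ℂ) ^ m * ψ (t + y * (s - t))).intervalIntegrable _ _
  · exact (by fun_prop : Continuous fun y : ℝ => (y:ℂ) ^ (m+1) * deriv ψ (t + y * (s - t))).aestronglyMeasurable
  · refine Eventually.of_forall fun y hy x _ => ?_
    rw [Set.uIoc_of_le zero_le_one] at hy
    rw [norm_mul, norm_pow, Complex.norm_real, Real.norm_of_nonneg hy.1.le]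
    have := hC (t + y * (x - t))
    have h2 : y ^ (m+1) ≤ 1 := pow_le_one₀ hy.1.le hy.2
    have h3 := norm_nonneg (deriv ψ (t + y * (x - t)))
    nlinarith
  · simp
  · refine Eventually.of_forall fun y hy x _ => ?_
    have h2 : HasDerivAt ψ (deriv ψ (t + y * (x - t))) (t + y * (x - t)) :=
      (hψ.differentiable (by simp)).differentiableAt.hasDerivAt
    have h3 : HasDerivAt (fun x : ℝ => t + y * (x - t)) y x := by
      have := (((hasDerivAt_id x).sub_const t).const_mul y).const_add t
      simpa using this
    have h4 := (h2.scomp x h3).const_mul ((y:ℂ)^m)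
    refine h4.congr_deriv ?_
    rw [pow_succ, Complex.real_smul]; ring

theorem J_iter {L : ℝ} (hL : 0 < L) (k : ℕ) : ∀ {ψ : ℝ → ℂ} (_ : ContDiff ℝ (⊤ : ℕ∞) ψ)
    (_ : ∀ s, ψ (s + L) = ψ s) (m : ℕ) (t s : ℝ),
    iteratedDeriv k (fun s => ∫ y in (0:ℝ)..1, (y:ℂ) ^ m * ψ (t + y * (s - t))) s =
      ∫ y in (0:ℝ)..1, (y:ℂ) ^ (m+k) * iteratedDeriv k ψ (t + y * (s - t)) := by
  induction k with
  | zero => intro ψ _ _ m t s; simp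
  | succ k ih =>
    intro ψ hψ hper m t s
    rw [iteratedDeriv_succ', iteratedDeriv_succ']
    have : deriv (fun s => ∫ y in (0:ℝ)..1, (y:ℂ) ^ m * ψ (t + y * (s - t))) =
        fun s => ∫ y in (0:ℝ)..1, (y:ℂ) ^ (m+1) * deriv ψ (t + y * (s - t)) := by
      funext s; exact (J_hasDerivAt hL hψ hper m t s).deriv
    rw [this, ih (contDiff_infty_iff_deriv.1 hψ).2 (per_deriv hper), add_assoc, add_comm 1 k]

theorem had_bd {L : ℝ} (hL : 0 < L) {ψ : ℝ → ℂ} (hψ : ContDiff ℝ (⊤ : ℕ∞) ψ)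
    (hper : ∀ s, ψ (s + L) = ψ s) (k : ℕ) {B : ℝ} (hB : ∀ x, ‖iteratedDeriv (k+1) ψ x‖ ≤ B) (t s : ℝ) :
    ‖iteratedDeriv k (fun s => had ψ (s, t)) s‖ ≤ B := by
  have e : (fun s => had ψ (s, t)) = fun s => ∫ y in (0:ℝ)..1, (y:ℂ) ^ 0 * deriv ψ (t + y * (s - t)) := by
    funext s; simp [had]
  rw [e, J_iter hL k (contDiff_infty_iff_deriv.1 hψ).2 (per_deriv hper)]
  have := intervalIntegral.norm_integral_le_of_norm_le_const (a := (0:ℝ)) (b := 1) (C := B)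
    (f := fun y : ℝ => (y:ℂ) ^ (0+k) * iteratedDeriv k (deriv ψ) (t + y * (s - t))) (fun y hy => by
      rw [Set.uIoc_of_le zero_le_one] at hy
      rw [norm_mul, norm_pow, Complex.norm_real, Real.norm_of_nonneg hy.1.le, ← iteratedDeriv_succ']
      have := hB (t + y * (s - t))
      have h2 : y ^ (0+k) ≤ 1 := pow_le_one₀ hy.1.le hy.2
      have h3 := norm_nonneg (iteratedDeriv (k+1) ψ (t + y * (s - t)))
      nlinarith)
  simpa using this

theorem had_zc_shift {L : ℝ} (s t : ℝ) : had (zc L) (s, t) = zc L t * had (zc L) (s - t, 0) := by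
  simp only [had, (zc_hasDerivAt L _).deriv]
  rw [← intervalIntegral.integral_const_mul]
  congr 1; funext y
  have : zc L (t + y * (s - t)) = zc L t * zc L (0 + y * (s - t - 0)) := by
    simp only [zc]; rw [← Complex.exp_add]; congr 1; push_cast; ring
  rw [this]; ring

theorem E_bd {L : ℝ} (hL : 0 < L) (k : ℕ) :
    ∃ C, ∀ x, |x| ≤ L / 2 → ‖iteratedDeriv k (fun x => (had (zc L) (x, 0))⁻¹) x‖ ≤ C := by
  have ho : IsOpen (Set.Ioo (-L) L) := isOpen_Ioo
  have h1 : ContDiffOn ℝ (⊤ : ℕ∞) (fun x => (had (zc L) (x, 0))⁻¹) (Set.Ioo (-L) L) := by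
    intro x hx
    apply ContDiffAt.contDiffWithinAt
    refine ContDiffAt.inv ?_ (had_zc_ne hL (by simpa [abs_lt] using hx))
    exact ((had_smooth (zc_smooth L)).comp (by fun_prop : ContDiff ℝ (⊤ : ℕ∞) fun x : ℝ => (x, (0:ℝ)))).contDiffAt
  have h2 := h1.continuousOn_iteratedDerivWithin (m := k) (by exact_mod_cast le_top) ho.uniqueDiffOn
  have h3 : ContinuousOn (iteratedDeriv k (fun x => (had (zc L) (x, 0))⁻¹)) (Set.Icc (-(L/2)) (L/2)) := by
    refine (h2.congr (fun x hx => (iteratedDerivWithin_of_isOpen ho hx).symm)).mono ?_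
    intro x hx; constructor <;> linarith [hx.1, hx.2]
  obtain ⟨C, hC⟩ := isCompact_Icc.exists_bound_of_continuousOn h3
  exact ⟨C, fun x hx => hC x (abs_le.1 hx)⟩

theorem DD_bd {L : ℝ} (hL : 0 < L) (k : ℕ) : ∃ C, 0 ≤ C ∧ ∀ (ψ : ℝ → ℂ) (_ : ContDiff ℝ (⊤ : ℕ∞) ψ)
    (_ : ∀ s, ψ (s + L) = ψ s) (B : ℝ) (_ : ∀ i ≤ k + 1, ∀ x, ‖iteratedDeriv i ψ x‖ ≤ B) (s t : ℝ),
    ‖iteratedDeriv k (fun s => DD L ψ (s, t)) s‖ ≤ C * B := by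
  choose E hE using fun i => E_bd hL i
  set E0 := ∑ i ∈ Finset.range (k+1), |E i| with hE0
  have hE0n : 0 ≤ E0 := Finset.sum_nonneg fun i _ => abs_nonneg _
  have hE1 : ∀ i ≤ k, E i ≤ E0 := fun i hi => (le_abs_self _).trans
    (Finset.single_le_sum (f := fun i => |E i|) (fun i _ => abs_nonneg _) (Finset.mem_range.2 (by omega)))
  refine ⟨2 ^ k * E0, by positivity, fun ψ hψ hper B hB s t => ?_⟩
  have hB0 : 0 ≤ B := (norm_nonneg _).trans (hB 0 (by omega) 0)
  obtain ⟨n, hn⟩ := exists_red hL s t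
  -- shift
  have e1 : iteratedDeriv k (fun s => DD L ψ (s, t)) s = iteratedDeriv k (fun s => DD L ψ (s, t)) (s + n * L) := by
    have : (fun s => DD L ψ (s, t)) = fun s => DD L ψ (s + n * L, t) := by
      funext x; exact (per_int (ψ := fun s => DD L ψ (s, t)) (fun s => DD_per1 hL hper s t) n x).symm
    conv_lhs => rw [this]
    rw [iteratedDeriv_comp_add_const (f := fun s => DD L ψ (s, t))]
  rw [e1]
  set s' := s + n * L with hs'
  have hnb : ∀ᶠ x in 𝓝 s', |x - t| < L := by
    have : Continuous fun x : ℝ => |x - t| := by fun_prop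
    exact this.continuousAt.eventually_lt continuousAt_const (by change |s' - t| < L; linarith)
  have e2 : (fun s => DD L ψ (s, t)) =ᶠ[𝓝 s'] fun x => had ψ (x, t) * ((zc L t)⁻¹ * (had (zc L) (x - t, 0))⁻¹) := by
    filter_upwards [hnb] with x hx
    have := DD_near hL hψ hper 0 (s := x) (t := t) (by simpa using hx)
    rw [this]; simp only [Int.cast_zero, zero_mul, sub_zero]
    rw [had_zc_shift x t, div_eq_mul_inv, mul_inv]
  rw [e2.iteratedDeriv_eq k]
  have hh : ContDiff ℝ (⊤ : ℕ∞) (fun x => had ψ (x, t)) :=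
    (had_smooth hψ).comp (by fun_prop : ContDiff ℝ (⊤ : ℕ∞) fun x : ℝ => (x, t))
  have hinv : ContDiffAt ℝ (⊤ : ℕ∞) (fun x => (had (zc L) (x - t, 0))⁻¹) s' := by
    refine ContDiffAt.inv ?_ (had_zc_ne hL (by simp only [sub_zero]; linarith))
    exact ((had_smooth (zc_smooth L)).comp (by fun_prop : ContDiff ℝ (⊤ : ℕ∞) fun x : ℝ => (x - t, (0:ℝ)))).contDiffAt
  have hk : ((k:ℕ) : WithTop ℕ∞) ≤ ((⊤ : ℕ∞) : WithTop ℕ∞) := by exact_mod_cast le_top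
  have := mul_bd (f := fun x => had ψ (x, t)) (g := fun x => (zc L t)⁻¹ * (had (zc L) (x - t, 0))⁻¹)
    (k := k) (s := s') (a := B) (b := E0) (hh.contDiffAt.of_le hk) ((contDiffAt_const.mul hinv).of_le hk) hB0
    (fun i hi => had_bd hL hψ hper i (hB (i+1) (by omega)) t s') (fun i hi => by
      rw [iteratedDeriv_const_mul_field, norm_mul, norm_inv, zc_norm, inv_one, one_mul,
        iteratedDeriv_comp_sub_const (f := fun x => (had (zc L) (x, 0))⁻¹)]
      exact (hE i _ hn).trans (hE1 i hi))
  linarith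

open Real MeasureTheory Filter Topology

theorem per_iter {E : Type*} [NormedAddCommGroup E] [NormedSpace ℝ E] {ψ : ℝ → E} {L : ℝ}
    (h : ∀ s, ψ (s + L) = ψ s) (k : ℕ) (s : ℝ) : iteratedDeriv k ψ (s + L) = iteratedDeriv k ψ s := by
  have := congrFun (iteratedDeriv_comp_add_const k ψ L) s
  rw [← this]
  congr 1
  funext x; exact h x

theorem Cnorm_bdd {L : ℝ} (hL : 0 < L) {m : ℕ} {g : ℝ → ℝ} (hg : ContDiff ℝ m g)
    (hper : ∀ s, g (s + L) = g s) :
    BddAbove (Set.range fun p : Fin (m + 1) × ℝ => |iteratedDeriv (p.1 : ℕ) g p.2|) := by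
  have : ∀ k : Fin (m+1), ∃ C, ∀ s, ‖iteratedDeriv (k:ℕ) g s‖ ≤ C := fun k =>
    per_bdd hL (hg.continuous_iteratedDeriv k (by exact_mod_cast Nat.lt_succ_iff.1 k.2)) (per_iter hper k)
  choose C hC using this
  refine ⟨∑ k, |C k|, ?_⟩
  rintro _ ⟨p, rfl⟩
  exact ((hC p.1 p.2).trans (le_abs_self _)).trans
    (Finset.single_le_sum (f := fun i => |C i|) (fun i _ => abs_nonneg _) (Finset.mem_univ _))

theorem le_Cnorm {L : ℝ} (hL : 0 < L) {m : ℕ} {g : ℝ → ℝ} (hg : ContDiff ℝ m g)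
    (hper : ∀ s, g (s + L) = g s) {k : ℕ} (hk : k ≤ m) (x : ℝ) : |iteratedDeriv k g x| ≤ Cnorm m g :=
  le_ciSup (f := fun p : Fin (m + 1) × ℝ => |iteratedDeriv (p.1 : ℕ) g p.2|) (Cnorm_bdd hL hg hper)
    (⟨k, by omega⟩, x)

theorem Cnorm_nonneg (m : ℕ) (g : ℝ → ℝ) : 0 ≤ Cnorm m g := Real.iSup_nonneg fun _ => abs_nonneg _

noncomputable def ww (L : ℝ) (l : ℝ → ℂ) (φ : ℝ → ℝ) (p : ℝ × ℝ) : ℝ :=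
  (DD L (fun x => (φ x : ℂ)) p * (((π / L : ℝ) : ℂ) * Complex.I * (zc L p.1 + zc L p.2))).re
    + RR L l p * φ p.1

theorem ofReal_smooth {φ : ℝ → ℝ} (hφ : ContDiff ℝ (⊤ : ℕ∞) φ) : ContDiff ℝ (⊤ : ℕ∞) (fun x => (φ x : ℂ)) :=
  Complex.ofRealCLM.contDiff.comp hφ

theorem iter_clm {E F : Type*} [NormedAddCommGroup E] [NormedSpace ℝ E] [NormedAddCommGroup F] [NormedSpace ℝ F]
    (A : E →L[ℝ] F) {f : ℝ → E} (hf : ContDiff ℝ (⊤ : ℕ∞) f) (k : ℕ) (x : ℝ) :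
    iteratedDeriv k (fun x => A (f x)) x = A (iteratedDeriv k f x) := by
  induction k generalizing f with
  | zero => simp
  | succ k ih =>
    rw [iteratedDeriv_succ', iteratedDeriv_succ', ← ih (contDiff_infty_iff_deriv.1 hf).2]
    congr 1
    funext y
    exact (A.hasFDerivAt.comp_hasDerivAt y (hf.differentiable (by simp)).differentiableAt.hasDerivAt).deriv

theorem ww_smooth {L : ℝ} (hL : 0 < L) {l : ℝ → ℂ} (hl : ContDiff ℝ (⊤ : ℕ∞) l)
    (hper : ∀ s, l (s + L) = l s) 
    (harc : ∀ s, ‖deriv l s‖ = 1) (hinj : Set.InjOn l (Set.Ico 0 L)) {φ : ℝ → ℝ}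
    (hφ : ContDiff ℝ (⊤ : ℕ∞) φ) (hφp : ∀ s, φ (s + L) = φ s) : ContDiff ℝ (⊤ : ℕ∞) (ww L l φ) := by
  have h1 := DD_smooth hL (ofReal_smooth hφ) (fun s => by simp [hφp])
  have h2 := RR_smooth hL hl hper harc hinj
  have h3 := zc_smooth L
  have h4 : ContDiff ℝ (⊤ : ℕ∞) (fun p : ℝ × ℝ => DD L (fun x => (φ x : ℂ)) p * (((π / L : ℝ) : ℂ) * Complex.I * (zc L p.1 + zc L p.2))) := by
    fun_prop
  exact (Complex.reCLM.contDiff.comp h4).add (h2.mul (hφ.comp contDiff_fst))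

theorem ww_per1 {L : ℝ} (hL : 0 < L) {l : ℝ → ℂ} (hper : ∀ s, l (s + L) = l s) {φ : ℝ → ℝ}
    (hφp : ∀ s, φ (s + L) = φ s) (s t : ℝ) : ww L l φ (s + L, t) = ww L l φ (s, t) := by
  simp only [ww, RR_per1 hL hper, hφp, zc_period hL, DD_per1 hL (ψ := fun x => (φ x : ℂ)) (fun s => by simp [hφp])]

theorem ww_per2 {L : ℝ} (hL : 0 < L) {l : ℝ → ℂ} (hper : ∀ s, l (s + L) = l s) {φ : ℝ → ℝ}
    (hφp : ∀ s, φ (s + L) = φ s) (s t : ℝ) : ww L l φ (s, t + L) = ww L l φ (s, t) := by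
  simp only [ww, RR_per2 hL hper, zc_period hL, DD_per2 hL (ψ := fun x => (φ x : ℂ)) (fun s => by simp [hφp])]

theorem ww_eq {L : ℝ} (hL : 0 < L) {l : ℝ → ℂ} {φ : ℝ → ℝ}
    (hφp : ∀ s, φ (s + L) = φ s) {s t : ℝ} (h : zc L s ≠ zc L t) :
    ww L l φ (s, t) = cc L (s - t) * (φ s - φ t) + RR L l (s, t) * φ s := by
  simp only [ww]
  congr 1
  rw [cot_eq hL h, mul_left_comm, ← DD_spec hL (ψ := fun x => (φ x : ℂ)) (fun s => by simp [hφp]), ← Complex.ofReal_sub,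
    ← Complex.ofReal_mul, Complex.ofReal_re]

theorem ww_bd {L : ℝ} (hL : 0 < L) {l : ℝ → ℂ} (hl : ContDiff ℝ (⊤ : ℕ∞) l)
    (hper : ∀ s, l (s + L) = l s) 
    (harc : ∀ s, ‖deriv l s‖ = 1) (hinj : Set.InjOn l (Set.Ico 0 L)) (k : ℕ) :
    ∃ C, 0 ≤ C ∧ ∀ φ : ℝ → ℝ, ContDiff ℝ (⊤ : ℕ∞) φ → (∀ s, φ (s + L) = φ s) → ∀ B,
      (∀ i ≤ k + 1, ∀ x, |iteratedDeriv i φ x| ≤ B) →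
      ∀ s t, |iteratedDeriv k (fun s => ww L l φ (s, t)) s| ≤ C * B := by
  have hR := RR_smooth hL hl hper harc hinj
  have hz := zc_smooth L
  choose D hD0 hD using fun i => DD_bd hL i
  choose R hR' using fun i => slice_bd hL i hR (RR_per1 hL hper) (RR_per2 hL hper)
  choose Z hZ' using fun i => slice_bd hL (F := fun p : ℝ × ℝ => ((π / L : ℝ) : ℂ) * Complex.I * (zc L p.1 + zc L p.2)) i
    (by fun_prop) (fun s t => by simp only [zc_period hL]) (fun s t => by simp only [zc_period hL])
  have key : ∀ (A : ℕ → ℝ) i, i ≤ k → A i ≤ ∑ i ∈ Finset.range (k+1), |A i| := fun A i hi => (le_abs_self _).trans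
    (Finset.single_le_sum (f := fun i => |A i|) (fun i _ => abs_nonneg _) (Finset.mem_range.2 (by omega)))
  have kn : ∀ (A : ℕ → ℝ), 0 ≤ ∑ i ∈ Finset.range (k+1), |A i| := fun A => Finset.sum_nonneg fun i _ => abs_nonneg _
  set D0 := ∑ i ∈ Finset.range (k+1), |D i|
  set R0 := ∑ i ∈ Finset.range (k+1), |R i|
  set Z0 := ∑ i ∈ Finset.range (k+1), |Z i|
  have hk : ((k:ℕ) : WithTop ℕ∞) ≤ ((⊤ : ℕ∞) : WithTop ℕ∞) := by exact_mod_cast le_top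
  have := kn D; have := kn R; have := kn Z
  refine ⟨2 ^ k * (D0 * Z0) + 2 ^ k * R0, by positivity, fun φ hφ hφp B hB s t => ?_⟩
  have hB0 : 0 ≤ B := (abs_nonneg _).trans (hB 0 (by omega) 0)
  have hφc := ofReal_smooth hφ
  have hcp : ∀ s, ((φ (s + L) : ℝ) : ℂ) = (φ s : ℂ) := fun s => by simp [hφp]
  have hDs : ContDiff ℝ (⊤ : ℕ∞) (fun s => DD L (fun x => (φ x : ℂ)) (s, t)) :=
    (DD_smooth hL hφc hcp).comp (by fun_prop : ContDiff ℝ (⊤ : ℕ∞) fun x : ℝ => (x, t))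
  have hRs : ContDiff ℝ (⊤ : ℕ∞) (fun s => RR L l (s, t)) :=
    hR.comp (by fun_prop : ContDiff ℝ (⊤ : ℕ∞) fun x : ℝ => (x, t))
  have hZs : ContDiff ℝ (⊤ : ℕ∞) (fun s => ((π / L : ℝ) : ℂ) * Complex.I * (zc L s + zc L t)) := by fun_prop
  have hiter : ∀ i x, ‖iteratedDeriv i (fun x => (φ x : ℂ)) x‖ = |iteratedDeriv i φ x| := fun i x => by
    have := iter_clm Complex.ofRealCLM hφ i x
    simp only [Complex.ofRealCLM_apply] at this
    rw [this, Complex.norm_real, Real.norm_eq_abs]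
  have b1 := mul_bd (s := s) (k := k) (a := D0 * B) (b := Z0) (hDs.contDiffAt.of_le hk) (hZs.contDiffAt.of_le hk) (by positivity)
    (fun i hi => (hD i _ hφc hcp B (fun j hj x => by rw [hiter]; exact hB j (by omega) x) s t).trans
      (mul_le_mul_of_nonneg_right (key D i hi) hB0))
    (fun i hi => (hZ' i s t).trans (key Z i hi))
  have b2 := mul_bd (s := s) (k := k) (a := R0) (b := B) (hRs.contDiffAt.of_le hk) (hφ.contDiffAt.of_le hk) (kn R)
    (fun i hi => (hR' i s t).trans (key R i hi)) (fun i hi => hB i (by omega) s)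
  have hp := hDs.mul hZs
  have e : iteratedDeriv k (fun s => ww L l φ (s, t)) s = Complex.reCLM (iteratedDeriv k
      (fun x => DD L (fun x => (φ x : ℂ)) (x, t) * (((π / L : ℝ) : ℂ) * Complex.I * (zc L x + zc L t))) s)
      + iteratedDeriv k (fun x => RR L l (x, t) * φ x) s := by
    rw [← iter_clm Complex.reCLM hp]
    exact iteratedDeriv_fun_add (((Complex.reCLM.contDiff.comp hp).of_le hk).contDiffAt) (((hRs.mul hφ).of_le hk).contDiffAt)
  rw [e]
  refine (abs_add_le _ _).trans ?_
  have b3 := Complex.abs_re_le_norm (iteratedDeriv k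
      (fun x => DD L (fun x => (φ x : ℂ)) (x, t) * (((π / L : ℝ) : ℂ) * Complex.I * (zc L x + zc L t))) s)
  rw [Real.norm_eq_abs] at b2
  simp only [Complex.reCLM_apply]
  nlinarith [b1, b2, b3]

open Real MeasureTheory Filter Topology

theorem lip_of_deriv {w : ℝ → ℝ} (hw : Differentiable ℝ w) {B : ℝ} (hB : ∀ x, |deriv w x| ≤ B) (x y : ℝ) :
    |w x - w y| ≤ B * |x - y| := by
  have := convex_univ.norm_image_sub_le_of_norm_deriv_le (f := w) (s := Set.univ) (C := B)
    (fun x _ => hw x) (fun x _ => hB x) (Set.mem_univ y) (Set.mem_univ x)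
  simpa using this

theorem per_deriv_bd {h : ℝ} (hh : 0 < h) (j : ℕ) : ∀ {W : ℝ → ℝ} (_ : ContDiff ℝ (j+1 : ℕ) W)
    (_ : ∀ x, W (x + h) = W x) {D : ℝ} (_ : ∀ x, |iteratedDeriv (j+1) W x| ≤ D) (x : ℝ),
    |deriv W x| ≤ h ^ j * D := by
  induction j with
  | zero => intro W _ _ D hD x; simpa using hD x
  | succ j ih =>
    intro W hW hp D hD x
    have hd : ContDiff ℝ (j+1 : ℕ) (deriv W) := by
      have : ContDiff ℝ ((j+1 : ℕ) + 1) W := by exact_mod_cast hW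
      exact (contDiff_succ_iff_deriv.1 this).2.2
    have h2 := ih hd (per_deriv hp) (D := D) (fun x => by rw [← iteratedDeriv_succ']; exact hD x)
    obtain ⟨c, hc, hc0⟩ := exists_deriv_eq_zero (f := W) (a := x) (b := x + h) (by linarith)
      hW.continuous.continuousOn (hp x).symm
    have h3 := lip_of_deriv (hd.differentiable (by simp)) h2 x c
    rw [hc0, sub_zero] at h3
    have h4 : |x - c| ≤ h := by rw [abs_le]; constructor <;> linarith [hc.1, hc.2]
    have h5 : 0 ≤ h ^ j * D := (abs_nonneg _).trans (h2 x)
    calc |deriv W x| ≤ h ^ j * D * |x - c| := h3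
      _ ≤ h ^ j * D * h := by gcongr
      _ = h ^ (j+1) * D := by ring

theorem quad_grid {L : ℝ} (hL : 0 < L) {κ : ℕ} (hκ : 1 ≤ κ) {w : ℝ → ℝ} (hw : ContDiff ℝ κ w)
    (hp : ∀ x, w (x + L) = w x) {B : ℝ} (hB : ∀ x, |iteratedDeriv κ w x| ≤ B) {N : ℕ} (hN : 1 ≤ N) :
    |L / N * ∑ i ∈ Finset.range N, w ((i + 1/2) * L / N) - ∫ x in (0:ℝ)..L, w x| ≤ (L / N) ^ κ * (L * B) := by
  obtain ⟨j, rfl⟩ : ∃ j, κ = j + 1 := ⟨κ - 1, by omega⟩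
  have hN0 : (0:ℝ) < N := by exact_mod_cast hN
  set h := L / N with hh
  have hh0 : 0 < h := by positivity
  have hNh : N * h = L := by rw [hh]; field_simp
  set W : ℝ → ℝ := fun y => h * ∑ m ∈ Finset.range N, w (y + m * h) with hW
  have hws : ∀ m : ℕ, ContDiff ℝ (j+1 : ℕ) (fun y => w (y + m * h)) := fun m => hw.comp (by fun_prop)
  have hWs : ContDiff ℝ (j+1 : ℕ) W := contDiff_const.mul (ContDiff.sum fun m _ => hws m)
  have hWp : ∀ y, W (y + h) = W y := by
    intro y
    simp only [hW]; congr 1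
    have e1 := Finset.sum_range_succ (fun m : ℕ => w (y + m * h)) N
    have e2 := Finset.sum_range_succ' (fun m : ℕ => w (y + m * h)) N
    have e3 : w (y + N * h) = w y := by rw [hNh, hp]
    have e4 : ∀ m : ℕ, w (y + h + m * h) = w (y + ((m+1 : ℕ) : ℝ) * h) := fun m => by congr 1; push_cast; ring
    simp only [e4]
    simp only [Nat.cast_zero, zero_mul, add_zero] at e2
    linarith
  have hWd : ∀ y, |iteratedDeriv (j+1) W y| ≤ L * B := by
    intro y
    simp only [hW]
    rw [iteratedDeriv_const_mul_field, iteratedDeriv_fun_sum (fun m _ => (hws m).contDiffAt), abs_mul, abs_of_pos hh0]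
    have : |∑ m ∈ Finset.range N, iteratedDeriv (j+1) (fun y => w (y + m * h)) y| ≤ N * B := by
      refine (Finset.abs_sum_le_sum_abs _ _).trans ?_
      refine (Finset.sum_le_card_nsmul _ _ B ?_).trans (by simp)
      intro m _
      rw [iteratedDeriv_comp_add_const]; exact hB _
    calc _ ≤ h * (N * B) := by gcongr
      _ = L * B := by rw [← hNh]; ring
  have hd := per_deriv_bd hh0 j hWs hWp hWd
  have hlip := lip_of_deriv (hWs.differentiable (by simp)) hd
  have hIW : ∫ x in (0:ℝ)..h, W x = h * ∫ x in (0:ℝ)..L, w x := by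
    simp only [hW]
    have hc : Continuous w := hw.continuous
    rw [intervalIntegral.integral_const_mul, intervalIntegral.integral_finsetSum
      (fun (m : ℕ) _ => (by fun_prop : Continuous fun x => w (x + m * h)).intervalIntegrable _ _)]
    congr 1
    have := intervalIntegral.sum_integral_adjacent_intervals (f := w) (μ := volume) (a := fun m : ℕ => m * h) (n := N)
      (fun k _ => hc.intervalIntegrable _ _)
    simp only [Nat.cast_zero, zero_mul, hNh] at this
    rw [← this]
    refine Finset.sum_congr rfl fun m _ => ?_
    rw [intervalIntegral.integral_comp_add_right (f := w)]
    congr 1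
    · ring
    · push_cast; ring
  have hWc : Continuous W := hWs.continuous
  have key : |∫ x in (0:ℝ)..h, (W (h/2) - W x)| ≤ (h ^ j * (L * B) * h) * |h - 0| := by
    rw [← Real.norm_eq_abs]
    refine intervalIntegral.norm_integral_le_of_norm_le_const (fun x hx => ?_)
    rw [Set.uIoc_of_le hh0.le] at hx
    rw [Real.norm_eq_abs]
    refine (hlip _ _).trans ?_
    have h5 : 0 ≤ h ^ j * (L * B) := (abs_nonneg _).trans (hd 0)
    gcongr
    rw [abs_le]; constructor <;> linarith [hx.1, hx.2]
  rw [intervalIntegral.integral_sub (by simp) (hWc.intervalIntegrable _ _), hIW] at key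
  simp only [intervalIntegral.integral_const, sub_zero, smul_eq_mul] at key
  rw [← mul_sub, abs_mul, abs_of_pos hh0, mul_comm _ h] at key
  have key2 := le_of_mul_le_mul_left key hh0
  have e : W (h/2) = h * ∑ i ∈ Finset.range N, w ((i + 1/2) * L / N) := by
    simp only [hW]; congr 1
    refine Finset.sum_congr rfl fun i _ => ?_
    congr 1; rw [hh]; field_simp; ring
  rw [← e]
  calc _ ≤ _ := key2
    _ = _ := by ring

theorem quad {L : ℝ} (hL : 0 < L) {κ : ℕ} (hκ : 1 ≤ κ) (M : ℝ) (hM : 0 < M) :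
    ∃ C > 0, ∀ (w : ℝ → ℝ) (_ : ContDiff ℝ κ w)
    (_ : ∀ x, w (x + L) = w x) (B : ℝ) (_ : ∀ x, |deriv w x| ≤ B) (_ : ∀ x, |iteratedDeriv κ w x| ≤ B)
    (N : ℕ) (_ : 1 ≤ N) (p : Fin N → ℝ)
    (_ : ∀ i, |p i - (((i : ℕ) : ℝ) + 1/2) * L / (N : ℝ)| ≤ M / (N : ℝ) ^ (κ + 1)),
    |L / N * ∑ i, w (p i) - ∫ x in (0:ℝ)..L, w x| ≤ C / N ^ κ * B := by
  refine ⟨L ^ κ * L + L * M, by positivity, fun w hw hp B hB1 hB N hN p hpi => ?_⟩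
  have hN0 : (0:ℝ) < N := by exact_mod_cast hN
  have hN1 : (1:ℝ) ≤ N := by exact_mod_cast hN
  have h1 := quad_grid hL hκ hw hp hB hN
  have hB0 : 0 ≤ B := (abs_nonneg _).trans (hB 0)
  rw [← Fin.sum_univ_eq_sum_range (fun i => w ((i + 1/2) * L / N)) N] at h1
  have h2 : |∑ i, w (p i) - ∑ i : Fin N, w (((i : ℕ) + 1/2) * L / N)| ≤ N * (B * (M / (N : ℝ) ^ (κ + 1))) := by
    rw [← Finset.sum_sub_distrib]
    refine (Finset.abs_sum_le_sum_abs _ _).trans ?_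
    refine (Finset.sum_le_card_nsmul _ _ (B * (M / (N : ℝ) ^ (κ + 1))) ?_).trans (by simp)
    intro i _
    refine (lip_of_deriv (hw.differentiable (by simp; omega)) hB1 _ _).trans ?_
    exact mul_le_mul_of_nonneg_left (hpi i) hB0
  have h3 : |L / N * ∑ i, w (p i) - L / N * ∑ i : Fin N, w (((i : ℕ) + 1/2) * L / N)| ≤ L * M / N ^ κ * B := by
    rw [← mul_sub, abs_mul, abs_of_pos (by positivity)]
    calc _ ≤ L / N * (N * (B * (M / (N : ℝ) ^ (κ + 1)))) := by gcongr
      _ = (L * M / N ^ κ * B) * (1 / N) := by field_simp; ring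
      _ ≤ (L * M / N ^ κ * B) * 1 := by
        gcongr
        rw [div_le_one hN0]; exact hN1
      _ = _ := by ring
  have h4 : (L / N) ^ κ * (L * B) = L ^ κ * L / N ^ κ * B := by rw [div_pow]; ring
  rw [h4] at h1
  have := abs_sub_le (L / N * ∑ i, w (p i)) (L / N * ∑ i : Fin N, w (((i : ℕ) + 1/2) * L / N)) (∫ x in (0:ℝ)..L, w x)
  calc _ ≤ _ := this
    _ ≤ L * M / N ^ κ * B + L ^ κ * L / N ^ κ * B := add_le_add h3 h1
    _ = _ := by ring

open Real MeasureTheory Filter Topology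

theorem sum_shift {N : ℕ} {F : ℤ → ℝ} (hF : ∀ m, F (m + N) = F m) (j : ℤ) :
    ∑ i ∈ Finset.range N, F (i + j) = ∑ i ∈ Finset.range N, F i := by
  have step : ∀ j : ℤ, ∑ i ∈ Finset.range N, F (i + (j + 1)) = ∑ i ∈ Finset.range N, F (i + j) := by
    intro j
    have e1 := Finset.sum_range_succ (fun m : ℕ => F (m + j)) N
    have e2 := Finset.sum_range_succ' (fun m : ℕ => F (m + j)) N
    have e3 : F (N + j) = F j := by rw [add_comm, hF]
    have e4 : ∀ m : ℕ, F (m + (j + 1)) = F (((m + 1 : ℕ) : ℤ) + j) := fun m => by congr 1; push_cast; ring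
    simp only [e4]
    simp only [Nat.cast_zero, zero_add] at e2
    linarith
  induction j using Int.induction_on with
  | zero => simp
  | succ i ih => rw [step, ih]
  | pred i ih => rw [← step (-(i:ℤ) - 1)]; simpa using ih

noncomputable def qq (N : ℕ) (m : ℤ) : ℝ := cos (π * (m + 1/2) / N) / sin (π * (m + 1/2) / N)

theorem qsin_ne {N : ℕ} (hN : 1 ≤ N) (m : ℤ) : sin (π * (m + 1/2) / N) ≠ 0 := by
  rw [Real.sin_ne_zero_iff]
  intro n h
  have hN0 : (0:ℝ) < N := by exact_mod_cast hN
  have : (n:ℝ) * N = m + 1/2 := by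
    have hpi := pi_ne_zero
    field_simp at h
    linarith
  have h3 : ((2 * (n * N) : ℤ) : ℝ) = ((2 * m + 1 : ℤ) : ℝ) := by push_cast; linarith
  have h4 : 2 * (n * (N:ℤ)) = 2 * m + 1 := by exact_mod_cast h3
  omega

theorem qq_per {N : ℕ} (hN : 1 ≤ N) (m : ℤ) : qq N (m + N) = qq N m := by
  have hN0 : (0:ℝ) < N := by exact_mod_cast hN
  unfold qq
  have : π * (((m + N : ℤ) : ℝ) + 1/2) / N = π * (m + 1/2) / N + π := by push_cast; field_simp; ring
  rw [this, cos_add_pi, sin_add_pi, neg_div_neg_eq]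

theorem qq_refl {N : ℕ} (m : ℤ) : qq N (-1 - m) = - qq N m := by
  unfold qq
  have : π * (((-1 - m : ℤ) : ℝ) + 1/2) / N = -(π * (m + 1/2) / N) := by push_cast; ring
  rw [this, cos_neg, sin_neg, div_neg]

theorem qq_sum0 {N : ℕ} (hN : 1 ≤ N) : ∑ i ∈ Finset.range N, qq N i = 0 := by
  have h := Finset.sum_range_reflect (fun i : ℕ => qq N i) N
  have h2 : ∑ i ∈ Finset.range N, qq N ((N - 1 - i : ℕ) : ℤ) = ∑ i ∈ Finset.range N, - qq N i := by
    refine Finset.sum_congr rfl fun i hi => ?_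
    have hi' := Finset.mem_range.1 hi
    rw [← qq_refl, ← qq_per hN (-1 - (i:ℤ))]
    congr 1; omega
  rw [Finset.sum_neg_distrib] at h2
  linarith

theorem qq_col {N : ℕ} (hN : 1 ≤ N) (j : ℤ) : ∑ i : Fin N, qq N (((i:ℕ):ℤ) - j) = 0 := by
  rw [Fin.sum_univ_eq_sum_range (fun i => qq N ((i:ℤ) - j)) N]
  have := sum_shift (F := qq N) (qq_per hN) (-j)
  simp only [← sub_eq_add_neg] at this
  rw [this, qq_sum0 hN]

theorem qq_row {N : ℕ} (hN : 1 ≤ N) (i : ℤ) : ∑ j : Fin N, qq N (i - ((j:ℕ):ℤ)) = 0 := by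
  have := qq_col hN (i + 1)
  have h2 : ∀ j : Fin N, qq N (i - ((j:ℕ):ℤ)) = - qq N (((j:ℕ):ℤ) - (i+1)) := fun j => by
    rw [← qq_refl]; congr 1; ring
  simp only [h2, Finset.sum_neg_distrib, this, neg_zero]

theorem cot_cot {x y : ℝ} (hx : sin x ≠ 0) (hy : sin y ≠ 0) (hxy : sin (x - y) ≠ 0) :
    cos x / sin x * (cos y / sin y) = cos (x - y) / sin (x - y) * (cos y / sin y - cos x / sin x) - 1 := by
  have h : cos y / sin y - cos x / sin x = sin (x - y) / (sin x * sin y) := by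
    rw [sin_sub]; field_simp
  rw [h, cos_sub]
  rw [show ∀ a b c d : ℝ, a / b * (b / d) = a * (b / b) / d from fun a b c d => by ring]
  · rw [div_self hxy]; field_simp; ring
  · exact 0

theorem qq_gram_ne {N : ℕ} (hN : 1 ≤ N) {j k : Fin N} (hjk : j ≠ k) :
    ∑ i : Fin N, qq N (((i:ℕ):ℤ) - ((j:ℕ):ℤ)) * qq N (((i:ℕ):ℤ) - ((k:ℕ):ℤ)) = - N := by
  have hN0 : (0:ℝ) < N := by exact_mod_cast hN
  set a := π * (((k:ℕ):ℝ) - ((j:ℕ):ℝ)) / N with ha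
  have hs : sin a ≠ 0 := by
    rw [Real.sin_ne_zero_iff]
    intro n h
    have hpi := pi_pos
    have h1 : (n:ℝ) * N = ((k:ℕ):ℝ) - ((j:ℕ):ℝ) := by
      rw [ha] at h
      field_simp at h
      linarith
    have h2 : n * (N:ℤ) = ((k:ℕ):ℤ) - ((j:ℕ):ℤ) := by exact_mod_cast h1
    have hk := k.2
    have hj := j.2
    have hne : (j:ℕ) ≠ k := fun h => hjk (Fin.ext h)
    have h3 : n = 0 := by
      by_contra h0
      rcases lt_or_gt_of_ne h0 with h | h
      · have : n ≤ -1 := by omega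
        nlinarith
      · have : 1 ≤ n := by omega
        nlinarith
    subst h3; omega
  have h1 : ∀ i : Fin N, qq N (((i:ℕ):ℤ) - ((j:ℕ):ℤ)) * qq N (((i:ℕ):ℤ) - ((k:ℕ):ℤ)) =
      cos a / sin a * (qq N (((i:ℕ):ℤ) - ((k:ℕ):ℤ)) - qq N (((i:ℕ):ℤ) - ((j:ℕ):ℤ))) - 1 := by
    intro i
    have e : a = π * (((((i:ℕ):ℤ) - ((j:ℕ):ℤ) : ℤ):ℝ) + 1/2) / N - π * (((((i:ℕ):ℤ) - ((k:ℕ):ℤ) : ℤ):ℝ) + 1/2) / N := by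
      rw [ha]; push_cast; ring
    unfold qq
    rw [cot_cot (qsin_ne hN _) (qsin_ne hN _) (by rw [← e]; exact hs), ← e]
  simp only [h1, Finset.sum_sub_distrib, ← Finset.mul_sum, qq_col hN]
  simp

theorem qq_gram_eq {N : ℕ} (hN : 1 ≤ N) (j : Fin N) :
    ∑ i : Fin N, qq N (((i:ℕ):ℤ) - ((j:ℕ):ℤ)) * qq N (((i:ℕ):ℤ) - ((j:ℕ):ℤ)) = N ^ 2 - N := by
  have h : ∑ k : Fin N, ∑ i : Fin N, qq N (((i:ℕ):ℤ) - ((j:ℕ):ℤ)) * qq N (((i:ℕ):ℤ) - ((k:ℕ):ℤ)) = 0 := by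
    rw [Finset.sum_comm]
    simp only [← Finset.mul_sum, qq_row hN, mul_zero, Finset.sum_const_zero]
  rw [← Finset.add_sum_erase _ _ (Finset.mem_univ j)] at h
  have h2 : ∑ k ∈ Finset.univ.erase j, ∑ i : Fin N, qq N (((i:ℕ):ℤ) - ((j:ℕ):ℤ)) * qq N (((i:ℕ):ℤ) - ((k:ℕ):ℤ))
      = ∑ k ∈ Finset.univ.erase j, (-(N:ℝ)) :=
    Finset.sum_congr rfl fun k hk => qq_gram_ne hN (Finset.ne_of_mem_erase hk).symm
  rw [h2, Finset.sum_const, Finset.card_erase_of_mem (Finset.mem_univ _), Finset.card_univ, Fintype.card_fin,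
    nsmul_eq_mul, Nat.cast_sub hN] at h
  push_cast at h
  linarith

theorem qq_gram {N : ℕ} (hN : 1 ≤ N) (j k : Fin N) :
    ∑ i : Fin N, qq N (((i:ℕ):ℤ) - ((j:ℕ):ℤ)) * qq N (((i:ℕ):ℤ) - ((k:ℕ):ℤ)) = (if j = k then (N:ℝ)^2 else 0) - N := by
  split_ifs with h
  · subst h; exact qq_gram_eq hN j
  · rw [qq_gram_ne hN h]; ring

theorem H_norm {N : ℕ} (hN : 1 ≤ N) (g : Fin N → ℝ) :
    ∑ i : Fin N, ((N:ℝ)⁻¹ * ∑ j : Fin N, qq N (((i:ℕ):ℤ) - ((j:ℕ):ℤ)) * g j) ^ 2 =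
      ∑ j, g j ^ 2 - N * ((N:ℝ)⁻¹ * ∑ j, g j) ^ 2 := by
  have hN0 : (0:ℝ) < N := by exact_mod_cast hN
  have h1 : ∑ i : Fin N, (∑ j : Fin N, qq N (((i:ℕ):ℤ) - ((j:ℕ):ℤ)) * g j) ^ 2 =
      N ^ 2 * ∑ j, g j ^ 2 - N * (∑ j, g j) ^ 2 := by
    have e1 : ∀ i : Fin N, (∑ j : Fin N, qq N (((i:ℕ):ℤ) - ((j:ℕ):ℤ)) * g j) ^ 2 =
      ∑ j : Fin N, ∑ k : Fin N, (g j * g k) * (qq N (((i:ℕ):ℤ) - ((j:ℕ):ℤ)) * qq N (((i:ℕ):ℤ) - ((k:ℕ):ℤ))) := fun i => by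
      rw [sq, Finset.sum_mul_sum]
      exact Finset.sum_congr rfl fun j _ => Finset.sum_congr rfl fun k _ => by ring
    simp only [e1]
    rw [Finset.sum_comm]
    have e2 : ∀ j : Fin N, ∑ i : Fin N, ∑ k : Fin N, (g j * g k) * (qq N (((i:ℕ):ℤ) - ((j:ℕ):ℤ)) * qq N (((i:ℕ):ℤ) - ((k:ℕ):ℤ)))
        = N ^ 2 * g j ^ 2 - N * (g j * ∑ k, g k) := fun j => by
      rw [Finset.sum_comm]
      simp only [← Finset.mul_sum, qq_gram hN, mul_sub, Finset.sum_sub_distrib, mul_ite, mul_zero,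
        Finset.sum_ite_eq, Finset.mem_univ, if_true, ← Finset.sum_mul]
      ring
    simp only [e2, Finset.sum_sub_distrib, ← Finset.mul_sum, ← Finset.sum_mul]
    ring
  simp only [mul_pow, ← Finset.mul_sum]
  rw [h1]
  field_simp

theorem qq_csc {N : ℕ} (hN : 1 ≤ N) (j : Fin N) :
    ∑ i : Fin N, (1 + qq N (((i:ℕ):ℤ) - ((j:ℕ):ℤ)) ^ 2) = (N:ℝ) ^ 2 := by
  have := qq_gram_eq hN j
  simp only [sq (qq N _), Finset.sum_add_distrib, this]
  simp

theorem cot_pert {a b : ℝ} (hb : sin b ≠ 0) (h : |a - b| ≤ |sin b| / 2) :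
    sin a ≠ 0 ∧ |cos a / sin a - cos b / sin b| ≤ 2 * |a - b| * (1 + (cos b / sin b) ^ 2) := by
  have h1 : |sin a - sin b| ≤ |a - b| := by
    have := Real.abs_sin_sub_sin_le a b
    exact this
  have h2 : |sin b| / 2 ≤ |sin a| := by
    have := abs_sub_abs_le_abs_sub (sin b) (sin a)
    rw [abs_sub_comm] at this
    linarith
  have hb' : 0 < |sin b| := abs_pos.2 hb
  have ha' : 0 < |sin a| := by linarith
  have ha : sin a ≠ 0 := abs_pos.1 ha'
  refine ⟨ha, ?_⟩
  have e1 : cos a / sin a - cos b / sin b = sin (b - a) / (sin a * sin b) := by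
    rw [sin_sub]; field_simp
  have e2 : 1 + (cos b / sin b) ^ 2 = 1 / |sin b| ^ 2 := by
    rw [sq_abs]; field_simp; linarith [sin_sq_add_cos_sq b]
  rw [e1, e2, abs_div, abs_mul]
  have h3 : |sin (b - a)| ≤ |a - b| := by rw [abs_sub_comm a b]; exact Real.abs_sin_le_abs
  rw [div_le_iff₀ (by positivity)]
  calc |sin (b - a)| ≤ |a - b| := h3
    _ = 2 * |a - b| * (1 / |sin b| ^ 2) * (|sin b| / 2 * |sin b|) := by field_simp
    _ ≤ _ := by gcongr

open Real MeasureTheory Filter Topology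

structure Crv (L : ℝ) (l : ℝ → ℂ) : Prop where
  hL : 0 < L
  hl : ContDiff ℝ (⊤ : ℕ∞) l
  hper : ∀ s, l (s + L) = l s
  harc : ∀ s, ‖deriv l s‖ = 1
  hinj : Set.InjOn l (Set.Ico 0 L)

structure Msh (L : ℝ) (κ : ℕ) (M : ℝ) (ms mst : (N : ℕ) → Fin N → ℝ) : Prop where
  hκ : 2 ≤ κ
  hM : 0 < M
  hms : ∀ N, 2 ≤ N → ∀ i : Fin N, ms N i ∈ Set.Ico (0:ℝ) L ∧
      |ms N i - ((i : ℕ) : ℝ) * L / (N : ℝ)| ≤ M / (N : ℝ) ^ (κ + 1)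
  hmst : ∀ N, 2 ≤ N → ∀ i : Fin N, mst N i ∈ Set.Ico (0:ℝ) L ∧
      |mst N i - (((i : ℕ) : ℝ) + 1/2) * L / (N : ℝ)| ≤ M / (N : ℝ) ^ (κ + 1)

theorem qq_le {N : ℕ} (hN : 1 ≤ N) (i j : Fin N) : 1 + qq N (((i:ℕ):ℤ) - ((j:ℕ):ℤ)) ^ 2 ≤ (N:ℝ) ^ 2 := by
  rw [← qq_csc hN j]
  exact Finset.single_le_sum (f := fun i : Fin N => 1 + qq N (((i:ℕ):ℤ) - ((j:ℕ):ℤ)) ^ 2) (fun i _ => by positivity)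
    (Finset.mem_univ i)

theorem node_pert {L : ℝ} (hL : 0 < L) {κ : ℕ} {M : ℝ} {ms mst : (N : ℕ) → Fin N → ℝ} (m : Msh L κ M ms mst) :
    ∃ C > 0, ∃ N₀ : ℕ, 2 ≤ N₀ ∧ ∀ N, N₀ ≤ N → ∀ i j : Fin N, zc L (mst N i) ≠ zc L (ms N j) ∧
      |cc L (mst N i - ms N j) - π / L * qq N (((i:ℕ):ℤ) - ((j:ℕ):ℤ))| ≤
        C / (N:ℝ) ^ (κ + 1) * (1 + qq N (((i:ℕ):ℤ) - ((j:ℕ):ℤ)) ^ 2) := by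
  have hM := m.hM
  obtain ⟨n0, hn0⟩ := exists_nat_ge (4 * π * M / L)
  refine ⟨π / L * (2 * (2 * π * M / L)), by positivity, n0 + 2, by omega, fun N hN i j => ?_⟩
  have hN2 : 2 ≤ N := by omega
  have hN1 : 1 ≤ N := by omega
  have hNr : (1:ℝ) ≤ N := by exact_mod_cast hN1
  have hN0 : (0:ℝ) < N := by linarith
  set x0 : ℝ := (((i:ℕ):ℝ) - ((j:ℕ):ℝ) + 1/2) * L / N with hx0
  set x := mst N i - ms N j with hx
  have h1 : |x - x0| ≤ 2 * M / (N:ℝ)^(κ+1) := by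
    have e : x - x0 = (mst N i - (((i : ℕ) : ℝ) + 1/2) * L / (N : ℝ)) - (ms N j - ((j : ℕ) : ℝ) * L / (N : ℝ)) := by
      rw [hx, hx0]; ring
    rw [e]
    refine (abs_sub _ _).trans ?_
    have := (m.hmst N hN2 i).2
    have := (m.hms N hN2 j).2
    calc _ ≤ M / (N : ℝ) ^ (κ + 1) + M / (N : ℝ) ^ (κ + 1) := by gcongr
      _ = _ := by ring
  set b := π * (((((i:ℕ):ℤ) - ((j:ℕ):ℤ) : ℤ) : ℝ) + 1/2) / N with hb
  have hbx : b = π * x0 / L := by rw [hb, hx0]; push_cast; field_simp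
  have hab : |π * x / L - b| ≤ 2 * π * M / L / (N:ℝ)^(κ+1) := by
    have e : π * x / L - b = π / L * (x - x0) := by rw [hbx]; ring
    rw [e, abs_mul, abs_of_pos (by positivity)]
    calc _ ≤ π / L * (2 * M / (N:ℝ)^(κ+1)) := by gcongr
      _ = _ := by ring
  have hsb : sin b ≠ 0 := qsin_ne hN1 _
  have hq : qq N (((i:ℕ):ℤ) - ((j:ℕ):ℤ)) = cos b / sin b := rfl
  have hle := qq_le hN1 i j
  rw [hq] at hle ⊢
  have hlow : 1 / (N:ℝ) ≤ |sin b| := by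
    have e2 : 1 + (cos b / sin b) ^ 2 = 1 / |sin b| ^ 2 := by
      rw [sq_abs]; field_simp; linarith [sin_sq_add_cos_sq b]
    rw [e2, div_le_iff₀ (by positivity), ← mul_pow] at hle
    have h3 : 1 ≤ N * |sin b| := by
      by_contra hc
      push Not at hc
      have : (N * |sin b|)^2 < 1 := by
        have h0 : 0 ≤ N * |sin b| := by positivity
        nlinarith
      linarith
    rw [div_le_iff₀ hN0]; linarith
  have hsmall : |π * x / L - b| ≤ |sin b| / 2 := by
    refine hab.trans (le_trans ?_ (div_le_div_of_nonneg_right hlow (by norm_num : (0:ℝ) ≤ 2)))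
    have h4 : (N:ℝ) ^ 2 ≤ (N:ℝ)^(κ+1) := pow_le_pow_right₀ hNr (by have := m.hκ; omega)
    have h5 : 4 * π * M / L ≤ N := hn0.trans (by exact_mod_cast (by omega : n0 ≤ N))
    rw [div_le_iff₀ (by positivity)]
    calc 2 * π * M / L = (4 * π * M / L) / 2 := by ring
      _ ≤ N / 2 := by gcongr
      _ = 1 / (N:ℝ) / 2 * (N:ℝ)^2 := by field_simp
      _ ≤ _ := by gcongr
  obtain ⟨ha, hcot⟩ := cot_pert hsb hsmall
  refine ⟨(sin_ne_iff hL _ _).1 ha, ?_⟩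
  have e : cc L x - π / L * (cos b / sin b) = π / L * (cos (π * x / L) / sin (π * x / L) - cos b / sin b) := by
    rw [cc]; ring
  rw [e, abs_mul, abs_of_pos (by positivity)]
  calc _ ≤ π / L * (2 * (2 * π * M / L / (N:ℝ)^(κ+1)) * (1 + (cos b / sin b) ^ 2)) := by
        refine mul_le_mul_of_nonneg_left (hcot.trans ?_) (by positivity)
        gcongr
    _ = _ := by ring

theorem col_sum {L : ℝ} (hL : 0 < L) {κ : ℕ} {M : ℝ} {ms mst : (N : ℕ) → Fin N → ℝ} (m : Msh L κ M ms mst) :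
    ∃ C > 0, ∃ N₀ : ℕ, 2 ≤ N₀ ∧ ∀ N, N₀ ≤ N → ∀ j : Fin N, 
      |L / N * ∑ i, cc L (mst N i - ms N j)| ≤ C / (N:ℝ) ^ κ := by
  obtain ⟨C, hC, N₀, h2, h⟩ := node_pert hL m
  refine ⟨L * C, by positivity, N₀, h2, fun N hN j => ?_⟩
  have hN1 : 1 ≤ N := by omega
  have hN0 : (0:ℝ) < N := by exact_mod_cast hN1
  have e : ∑ i, cc L (mst N i - ms N j) = ∑ i, (cc L (mst N i - ms N j) - π / L * qq N (((i:ℕ):ℤ) - ((j:ℕ):ℤ))) := by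
    rw [Finset.sum_sub_distrib, ← Finset.mul_sum, qq_col hN1]; simp
  rw [e, abs_mul, abs_of_pos (by positivity)]
  calc _ ≤ L / N * ∑ i : Fin N, C / (N:ℝ) ^ (κ + 1) * (1 + qq N (((i:ℕ):ℤ) - ((j:ℕ):ℤ)) ^ 2) := by
        gcongr
        exact (Finset.abs_sum_le_sum_abs _ _).trans (Finset.sum_le_sum fun i _ => (h N hN i j).2)
    _ = _ := by rw [← Finset.mul_sum, qq_csc hN1]; field_simp; ring

noncomputable def Tp (L : ℝ) (l : ℝ → ℂ) (φ : ℝ → ℝ) (t : ℝ) : ℝ := ∫ s in (0:ℝ)..L, ww L l φ (s, t)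

theorem T_quad {L : ℝ} {l : ℝ → ℂ} (c : Crv L l) {κ : ℕ} {M : ℝ} {ms mst : (N : ℕ) → Fin N → ℝ} (m : Msh L κ M ms mst) :
    ∃ C > 0, ∃ N₀ : ℕ, 2 ≤ N₀ ∧ ∀ N, N₀ ≤ N → ∀ φ : ℝ → ℝ, ContDiff ℝ (⊤ : ℕ∞) φ → (∀ s, φ (s + L) = φ s) → ∀ B,
      (∀ i ≤ κ + 1, ∀ x, |iteratedDeriv i φ x| ≤ B) → ∀ j : Fin N, 
      |Tp L l φ (ms N j) - L / N * ∑ i, KK l (mst N i) (ms N j) * φ (mst N i)| ≤ C / (N:ℝ) ^ κ * B := by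
  obtain ⟨hL, hl, hper, harc, hinj⟩ := c
  have hκ := m.hκ
  obtain ⟨C1, hC1, N₁, hN₁, h1⟩ := col_sum hL m
  obtain ⟨C0, hC0, N₂, hN₂, h0⟩ := node_pert hL m
  obtain ⟨C2, hC2, h2⟩ := quad hL (κ := κ) (by omega) M m.hM
  obtain ⟨C3, hC3, h3⟩ := ww_bd hL hl hper harc hinj 1
  obtain ⟨C4, hC4, h4⟩ := ww_bd hL hl hper harc hinj κ
  refine ⟨C1 + C2 * (C3 + C4), by positivity, max N₁ N₂, by omega, fun N hN φ hφ hφp B hB j => ?_⟩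
  have hN1 : 1 ≤ N := by omega
  have hN0 : (0:ℝ) < N := by exact_mod_cast hN1
  have hB0 : 0 ≤ B := (abs_nonneg _).trans (hB 0 (by omega) 0)
  have hw : ContDiff ℝ (⊤ : ℕ∞) (fun s => ww L l φ (s, ms N j)) :=
    (ww_smooth hL hl hper harc hinj hφ hφp).comp (by fun_prop : ContDiff ℝ (⊤ : ℕ∞) fun x : ℝ => (x, ms N j))
  have hk : ((κ:ℕ) : WithTop ℕ∞) ≤ ((⊤ : ℕ∞) : WithTop ℕ∞) := by exact_mod_cast le_top
  have hq := h2 _ (hw.of_le hk) (fun s => ww_per1 hL hper hφp s _) ((C3 + C4) * B)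
    (fun x => by
      have := h3 φ hφ hφp B (fun i hi => hB i (by omega)) x (ms N j)
      rw [iteratedDeriv_one] at this
      nlinarith)
    (fun x => by
      have := h4 φ hφ hφp B (fun i hi => hB i (by omega)) x (ms N j)
      nlinarith) N hN1 (mst N) (fun i => (m.hmst N (by omega) i).2)
  have e : ∑ i, KK l (mst N i) (ms N j) * φ (mst N i) =
      ∑ i, ww L l φ (mst N i, ms N j) + (∑ i, cc L (mst N i - ms N j)) * φ (ms N j) := by
    rw [Finset.sum_mul, ← Finset.sum_add_distrib]
    refine Finset.sum_congr rfl fun i _ => ?_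
    have hz := (h0 N (by omega) i j).1
    rw [ww_eq hL hφp hz, KK_eq hL hl hper harc hinj hz]; ring
  have hc := h1 N (by omega) j
  have hφb := hB 0 (by omega) (ms N j)
  rw [iteratedDeriv_zero] at hφb
  have e2 : Tp L l φ (ms N j) - L / N * ∑ i, KK l (mst N i) (ms N j) * φ (mst N i) =
    -(L / N * ∑ i, ww L l φ (mst N i, ms N j) - Tp L l φ (ms N j)) - (L / N * ∑ i, cc L (mst N i - ms N j)) * φ (ms N j) := by
    rw [e]; ring
  rw [e2]
  refine (abs_sub _ _).trans ?_
  rw [abs_neg, abs_mul]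
  calc _ ≤ C2 / N ^ κ * ((C3 + C4) * B) + C1 / N ^ κ * B := by
        refine add_le_add hq ?_
        gcongr
    _ = _ := by ring

open Real MeasureTheory Filter Topology

def XX {ι : Type} (L : ℝ) (s : ι → ℝ) (ε : ℝ) : Set ℝ :=
  {x : ℝ | x ∈ Set.Ico (0:ℝ) L ∧ ∀ j, ∀ k : ℤ, ε ≤ |x - s j - k * L|}

theorem XX_closed {ι : Type} (L : ℝ) (s : ι → ℝ) (ε : ℝ) :
    IsClosed {x : ℝ | ∀ j, ∀ k : ℤ, ε ≤ |x - s j - k * L|} := by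
  simp only [Set.ofPred_forall]
  exact isClosed_iInter fun j => isClosed_iInter fun k => isClosed_le continuous_const (by fun_prop)

theorem XX_meas {ι : Type} (L : ℝ) (s : ι → ℝ) (ε : ℝ) : MeasurableSet (XX L s ε) :=
  measurableSet_Ico.inter (XX_closed L s ε).measurableSet

theorem zc_dist {L : ℝ} (hL : 0 < L) (x t : ℝ) (k : ℤ) :
    ‖zc L x - zc L t‖ * (L / (2 * π)) ≤ |x - t - k * L| := by
  have e : zc L (x - k * L) = zc L x := (zc_eq_iff hL _ _).2 ⟨-k, by push_cast; ring⟩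
  rw [← e, zc_sub_norm hL]
  have h : |sin (π * (x - k * L - t) / L)| ≤ |π * (x - k * L - t) / L| := Real.abs_sin_le_abs
  have e2 : |π * (x - k * L - t) / L| = π / L * |x - t - k * L| := by
    rw [show π * (x - k * L - t) / L = π / L * (x - t - k * L) by ring, abs_mul, abs_of_pos (by positivity)]
  rw [e2] at h
  calc _ ≤ 2 * (π / L * |x - t - k * L|) * (L / (2 * π)) := by gcongr
    _ = _ := by field_simp

theorem zc_dist_pos {L : ℝ} (hL : 0 < L) {x t : ℝ} (h : zc L x ≠ zc L t) :
    0 < ‖zc L x - zc L t‖ * (L / (2 * π)) := by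
  have : 0 < ‖zc L x - zc L t‖ := norm_pos_iff.2 (sub_ne_zero.2 h)
  positivity

theorem node_countable {L : ℝ} (hL : 0 < L) (t : ℝ) : {x | zc L x = zc L t}.Countable := by
  have : {x | zc L x = zc L t} = Set.range (fun k : ℤ => t + k * L) := by
    ext x; simp only [Set.mem_ofPred_eq, zc_eq_iff hL, Set.mem_range]
    exact exists_congr fun k => eq_comm
  rw [this]; exact Set.countable_range _

theorem XX_tendsto {ι : Type} [Finite ι] {L : ℝ} (hL : 0 < L) (s : ι → ℝ) {u : ℝ → ℝ}
    (hu : IntegrableOn u (Set.Ico 0 L)) :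
    Tendsto (fun ε => ∫ x in XX L s ε, u x) (𝓝[>] 0) (𝓝 (∫ x in Set.Ico 0 L, u x)) := by
  simp only [← integral_indicator (XX_meas L s _), ← integral_indicator (measurableSet_Ico (a := (0:ℝ)) (b := L))]
  have hu' : Integrable ((Set.Ico 0 L).indicator u) := (integrable_indicator_iff measurableSet_Ico).2 hu
  have hsub : ∀ ε, XX L s ε ⊆ Set.Ico 0 L := fun ε x hx => hx.1
  have e : ∀ ε, (XX L s ε).indicator u = (XX L s ε).indicator ((Set.Ico 0 L).indicator u) := fun ε => by
    rw [Set.indicator_indicator, Set.inter_eq_left.2 (hsub ε)]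
  refine tendsto_integral_filter_of_dominated_convergence (fun x => ‖(Set.Ico 0 L).indicator u x‖) ?_ ?_ hu'.norm ?_
  · refine Eventually.of_forall fun ε => ?_
    rw [e]
    exact (hu'.indicator (XX_meas L s ε)).aestronglyMeasurable
  · refine Eventually.of_forall fun ε => Eventually.of_forall fun x => ?_
    rw [e]
    exact norm_indicator_le_norm_self _ _
  · have hc : (⋃ j, {x | zc L x = zc L (s j)}).Countable := Set.countable_iUnion fun j => node_countable hL _
    filter_upwards [hc.ae_notMem volume] with x hx
    simp only [Set.mem_iUnion, Set.mem_ofPred_eq, not_exists] at hx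
    have h1 : ∀ᶠ ε in 𝓝[>] (0:ℝ), ∀ j, ε ≤ ‖zc L x - zc L (s j)‖ * (L / (2 * π)) := by
      rw [eventually_all]
      intro j
      exact nhdsWithin_le_nhds (eventually_le_nhds (zc_dist_pos hL (hx j)))
    refine tendsto_const_nhds.congr' ?_
    filter_upwards [h1] with ε hε
    by_cases hxI : x ∈ Set.Ico 0 L
    · rw [Set.indicator_of_mem hxI, Set.indicator_of_mem]
      exact ⟨hxI, fun j k => (hε j).trans (zc_dist hL _ _ _)⟩
    · rw [Set.indicator_of_notMem hxI, Set.indicator_of_notMem (fun h => hxI h.1)]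

theorem cc_neg (L x : ℝ) : cc L (-x) = - cc L x := by
  simp only [cc, mul_neg, neg_div, cos_neg, sin_neg, div_neg]

theorem cc_per {L : ℝ} (hL : 0 < L) (x : ℝ) : cc L (x + L) = cc L x := by
  have : π * (x + L) / L = π * x / L + π := by field_simp
  simp only [cc, this, cos_add_pi, sin_add_pi, neg_div_neg_eq]

theorem cc_pv_zero {L : ℝ} (hL : 0 < L) (t ε : ℝ) :
    ∫ x in XX L (fun _ : Unit => t) ε, cc L (x - t) = 0 := by
  set h : ℝ → ℝ := {x : ℝ | ∀ k : ℤ, ε ≤ |x - k * L|}.indicator (cc L) with hh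
  have h_odd : ∀ x, h (-x) = - h x := by
    intro x
    have hm : (-x ∈ {x : ℝ | ∀ k : ℤ, ε ≤ |x - k * L|}) ↔ (x ∈ {x : ℝ | ∀ k : ℤ, ε ≤ |x - k * L|}) := by
      constructor
      · intro hx k
        have := hx (-k); rw [← abs_neg] at this; convert this using 2; push_cast; ring
      · intro hx k
        have := hx (-k); rw [← abs_neg] at this; convert this using 2; push_cast; ring
    by_cases hx : x ∈ {x : ℝ | ∀ k : ℤ, ε ≤ |x - k * L|}
    · rw [hh, Set.indicator_of_mem (hm.2 hx), Set.indicator_of_mem hx, cc_neg]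
    · rw [hh, Set.indicator_of_notMem (fun h => hx (hm.1 h)), Set.indicator_of_notMem hx, neg_zero]
  have h_per : Function.Periodic h L := by
    intro x
    have hm : (x + L ∈ {x : ℝ | ∀ k : ℤ, ε ≤ |x - k * L|}) ↔ (x ∈ {x : ℝ | ∀ k : ℤ, ε ≤ |x - k * L|}) := by
      constructor
      · intro hx k
        have := hx (k+1); convert this using 2; push_cast; ring
      · intro hx k
        have := hx (k-1); convert this using 2; push_cast; ring
    by_cases hx : x ∈ {x : ℝ | ∀ k : ℤ, ε ≤ |x - k * L|}
    · rw [hh, Set.indicator_of_mem (hm.2 hx), Set.indicator_of_mem hx, cc_per hL]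
    · rw [hh, Set.indicator_of_notMem (fun h => hx (hm.1 h)), Set.indicator_of_notMem hx]
  have e1 : ∫ x in XX L (fun _ : Unit => t) ε, cc L (x - t) = ∫ x in (0:ℝ)..L, h (x - t) := by
    rw [intervalIntegral.integral_of_le hL.le, ← integral_Ico_eq_integral_Ioc,
      ← integral_indicator (XX_meas _ _ _), ← integral_indicator measurableSet_Ico]
    congr 1; funext x
    by_cases hx : x ∈ Set.Ico 0 L
    · rw [Set.indicator_of_mem hx, hh]
      by_cases hx2 : x - t ∈ {x : ℝ | ∀ k : ℤ, ε ≤ |x - k * L|}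
      · rw [Set.indicator_of_mem hx2, Set.indicator_of_mem]
        exact ⟨hx, fun _ => hx2⟩
      · rw [Set.indicator_of_notMem hx2, Set.indicator_of_notMem]
        exact fun h => hx2 (h.2 ())
    · rw [Set.indicator_of_notMem hx, Set.indicator_of_notMem (fun h => hx h.1)]
  rw [e1, intervalIntegral.integral_comp_sub_right (f := h)]
  have e2 := h_per.intervalIntegral_add_eq (0 - t) (-(L/2))
  have e3 : (0 - t) + L = L - t := by ring
  have e4 : -(L/2) + L = L/2 := by ring
  rw [e3, e4] at e2
  rw [e2]
  have e5 := intervalIntegral.integral_comp_neg (f := h) (a := -(L/2)) (b := L/2)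
  simp only [h_odd, neg_neg, intervalIntegral.integral_neg] at e5
  linarith

theorem cc_cont {L : ℝ} (hL : 0 < L) {x t : ℝ} (h : zc L x ≠ zc L t) : ContinuousAt (fun x => cc L (x - t)) x := by
  have := (sin_ne_iff hL x t).2 h
  unfold cc
  refine continuousAt_const.mul (ContinuousAt.div ?_ ?_ this)
  · fun_prop
  · fun_prop

theorem cc_int {ι : Type} {L : ℝ} (hL : 0 < L) (s : ι → ℝ) {ε : ℝ} (hε : 0 < ε) (j : ι) :
    IntegrableOn (fun x => cc L (x - s j)) (XX L s ε) := by
  have hK : IsCompact (Set.Icc 0 L ∩ {x : ℝ | ∀ j, ∀ k : ℤ, ε ≤ |x - s j - k * L|}) :=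
    isCompact_Icc.inter_right (XX_closed L s ε)
  have hc : ContinuousOn (fun x => cc L (x - s j)) (Set.Icc 0 L ∩ {x : ℝ | ∀ j, ∀ k : ℤ, ε ≤ |x - s j - k * L|}) := by
    intro x hx
    apply ContinuousAt.continuousWithinAt
    apply cc_cont hL
    intro hz
    obtain ⟨k, hk⟩ := (zc_eq_iff hL _ _).1 hz
    have := hx.2 j k
    rw [hk] at this
    simp at this
    linarith
  exact (hc.integrableOn_compact hK).mono_set fun x hx => ⟨⟨hx.1.1, hx.1.2.le⟩, hx.2⟩

theorem cc_pv {ι : Type} [Finite ι] {L : ℝ} (hL : 0 < L) (s : ι → ℝ)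
    (hs : ∀ i j, i ≠ j → zc L (s i) ≠ zc L (s j)) (j : ι) :
    Tendsto (fun ε => ∫ x in XX L s ε, cc L (x - s j)) (𝓝[>] 0) (𝓝 0) := by
  obtain ⟨η, hη, hη0⟩ : ∃ η, (∀ i, i ≠ j → η ≤ ‖zc L (s i) - zc L (s j)‖ * (L / (2 * π))) ∧ 0 < η := by
    have h1 : ∀ᶠ ε in 𝓝[>] (0:ℝ), ∀ i, i ≠ j → ε ≤ ‖zc L (s i) - zc L (s j)‖ * (L / (2 * π)) := by
      rw [eventually_all]
      intro i
      by_cases hij : i = j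
      · exact Eventually.of_forall fun ε h => absurd hij h
      · filter_upwards [nhdsWithin_le_nhds (eventually_le_nhds (zc_dist_pos hL (hs i j hij)))] with ε h _ using h
    exact (h1.and self_mem_nhdsWithin).exists
  set Z := XX L (fun _ : Unit => s j) (η/2) with hZ
  have hZm : MeasurableSet Z := XX_meas _ _ _
  have hcZ : IntegrableOn (fun x => cc L (x - s j)) Z := cc_int hL (fun _ : Unit => s j) (by linarith) ()
  set u := Z.indicator (fun x => cc L (x - s j)) with hu
  have hui : IntegrableOn u (Set.Ico 0 L) := ((integrable_indicator_iff hZm).2 hcZ).integrableOn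
  have t1 := XX_tendsto hL s hui
  have t2 := XX_tendsto hL (fun _ : Unit => s j) hui
  have t3 := t1.sub t2
  rw [sub_self] at t3
  refine t3.congr' ?_
  have hev : ∀ᶠ ε in 𝓝[>] (0:ℝ), ε ≤ η / 2 := nhdsWithin_le_nhds (eventually_le_nhds (by linarith))
  filter_upwards [hev, self_mem_nhdsWithin] with ε hε hε0
  have hε0 : 0 < ε := hε0
  have i1 := cc_int hL s hε0 j
  have i2 := cc_int hL (fun _ : Unit => s j) hε0 ()
  have hz := cc_pv_zero hL (s j) ε
  set X := XX L s ε
  set Y := XX L (fun _ : Unit => s j) ε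
  have hX : MeasurableSet X := XX_meas _ _ _
  have hY : MeasurableSet Y := XX_meas _ _ _
  have hXI : X ⊆ Set.Ico 0 L := fun x hx => hx.1
  have hYI : Y ⊆ Set.Ico 0 L := fun x hx => hx.1
  have key : ∫ x in X, (cc L (x - s j) - u x) = ∫ x in Y, (cc L (x - s j) - u x) := by
    rw [← integral_indicator hX, ← integral_indicator hY]
    congr 1; funext x
    by_cases hxI : x ∈ Set.Ico 0 L
    swap
    · rw [Set.indicator_of_notMem (fun h => hxI (hXI h)), Set.indicator_of_notMem (fun h => hxI (hYI h))]
    by_cases hxZ : x ∈ Z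
    · have : cc L (x - s j) - u x = 0 := by rw [hu, Set.indicator_of_mem hxZ, sub_self]
      simp only [Set.indicator, this, ite_self]
    · have hmem : x ∈ X ↔ x ∈ Y := by
        constructor
        · exact fun h => ⟨hxI, fun _ k => h.2 j k⟩
        · intro h
          refine ⟨hxI, fun i k => ?_⟩
          by_cases hij : i = j
          · subst hij; exact h.2 () k
          · have : ∃ k' : ℤ, |x - s j - k' * L| < η / 2 := by
              by_contra hcon
              push Not at hcon
              exact hxZ ⟨hxI, fun _ k' => hcon k'⟩
            obtain ⟨k', hk'⟩ := this
            have h1 := (hη i hij).trans (zc_dist hL (s i) (s j) (k' - k))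
            have h2 : |s i - s j - ((k' - k : ℤ) : ℝ) * L| ≤ |x - s j - k' * L| + |x - s i - k * L| := by
              have e : s i - s j - ((k' - k : ℤ) : ℝ) * L = (x - s j - k' * L) - (x - s i - k * L) := by push_cast; ring
              rw [e]; exact abs_sub _ _
            linarith
      by_cases hxX : x ∈ X
      · rw [Set.indicator_of_mem hxX, Set.indicator_of_mem (hmem.1 hxX)]
      · rw [Set.indicator_of_notMem hxX, Set.indicator_of_notMem (fun h => hxX (hmem.2 h))]
  rw [integral_sub i1 (hui.mono_set hXI), integral_sub i2 (hui.mono_set hYI), hz] at key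
  linarith

theorem KK_pv {L : ℝ} {l : ℝ → ℂ} (c : Crv L l) {N : ℕ} (s : Fin N → ℝ)
    (hs : ∀ i j, i ≠ j → zc L (s i) ≠ zc L (s j)) (gam : Fin N → ℝ) {φ : ℝ → ℝ}
    (hφ : ContDiff ℝ (⊤ : ℕ∞) φ) (hφp : ∀ s, φ (s + L) = φ s) :
    Tendsto (fun ε => ∫ x in XX L s ε, ((N:ℝ)⁻¹ * ∑ j, gam j * KK l x (s j)) * φ x) (𝓝[>] 0)
      (𝓝 ((N:ℝ)⁻¹ * ∑ j, gam j * Tp L l φ (s j))) := by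
  obtain ⟨hL, hl, hper, harc, hinj⟩ := c
  have hwc : ∀ j, Continuous (fun x => ww L l φ (x, s j)) := fun j => by
    have := (ww_smooth hL hl hper harc hinj hφ hφp).continuous
    fun_prop
  have hwi : ∀ j, IntegrableOn (fun x => ww L l φ (x, s j)) (Set.Ico 0 L) := fun j =>
    ((hwc j).continuousOn.integrableOn_compact isCompact_Icc).mono_set Set.Ico_subset_Icc_self
  have h1 : ∀ j, Tendsto (fun ε => ∫ x in XX L s ε, ww L l φ (x, s j)) (𝓝[>] 0) (𝓝 (Tp L l φ (s j))) := fun j => by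
    have := XX_tendsto hL s (hwi j)
    rwa [integral_Ico_eq_integral_Ioc, ← intervalIntegral.integral_of_le hL.le] at this
  have h2 : ∀ j, Tendsto (fun ε => gam j * (∫ x in XX L s ε, ww L l φ (x, s j)) +
      gam j * φ (s j) * ∫ x in XX L s ε, cc L (x - s j)) (𝓝[>] 0) (𝓝 (gam j * Tp L l φ (s j))) := fun j => by
    have := ((h1 j).const_mul (gam j)).add ((cc_pv hL s hs j).const_mul (gam j * φ (s j)))
    simpa using this
  have h3 := (tendsto_finsetSum Finset.univ fun j _ => h2 j).const_mul (N:ℝ)⁻¹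
  refine h3.congr' ?_
  filter_upwards [self_mem_nhdsWithin] with ε hε
  have hε : 0 < ε := hε
  have hXI : XX L s ε ⊆ Set.Ico 0 L := fun x hx => hx.1
  have e : ∫ x in XX L s ε, ((N:ℝ)⁻¹ * ∑ j, gam j * KK l x (s j)) * φ x =
      ∫ x in XX L s ε, (N:ℝ)⁻¹ * ∑ j, (gam j * ww L l φ (x, s j) + gam j * φ (s j) * cc L (x - s j)) := by
    refine setIntegral_congr_fun (XX_meas _ _ _) fun x hx => ?_
    change ((N:ℝ)⁻¹ * ∑ j, gam j * KK l x (s j)) * φ x = _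
    rw [mul_assoc, Finset.sum_mul]
    congr 1
    refine Finset.sum_congr rfl fun j _ => ?_
    have hz : zc L x ≠ zc L (s j) := by
      intro hz
      obtain ⟨k, hk⟩ := (zc_eq_iff hL _ _).1 hz
      have := hx.2 j k
      rw [hk] at this
      simp at this
      linarith
    rw [KK_eq hL hl hper harc hinj hz, ww_eq hL hφp hz]; ring
  have i1 : ∀ j, IntegrableOn (fun x => gam j * ww L l φ (x, s j)) (XX L s ε) := fun j => ((hwi j).mono_set hXI).const_mul _
  have i2 : ∀ j, IntegrableOn (fun x => gam j * φ (s j) * cc L (x - s j)) (XX L s ε) := fun j => (cc_int hL s hε j).const_mul _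
  have i3 : ∀ j, IntegrableOn (fun x => gam j * ww L l φ (x, s j) + gam j * φ (s j) * cc L (x - s j)) (XX L s ε) :=
    fun j => (i1 j).add (i2 j)
  rw [e, integral_const_mul, integral_finsetSum _ (fun j _ => i3 j)]
  congr 1
  refine Finset.sum_congr rfl fun j _ => ?_
  rw [integral_add (i1 j) (i2 j), integral_const_mul, integral_const_mul]

theorem nodes_distinct {L : ℝ} (hL : 0 < L) {κ : ℕ} {M : ℝ} {ms mst : (N : ℕ) → Fin N → ℝ} (m : Msh L κ M ms mst) :
    ∃ N₀ : ℕ, 2 ≤ N₀ ∧ ∀ N, N₀ ≤ N → ∀ i j : Fin N, i ≠ j → zc L (ms N i) ≠ zc L (ms N j) := by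
  have hM := m.hM
  obtain ⟨n0, hn0⟩ := exists_nat_gt (2 * M / L)
  refine ⟨n0 + 2, by omega, fun N hN i j hij => ?_⟩
  have hN2 : 2 ≤ N := by omega
  have hNr : (1:ℝ) ≤ N := by exact_mod_cast (by omega : 1 ≤ N)
  have hN0 : (0:ℝ) < N := by linarith
  obtain ⟨a1, a2⟩ := m.hms N hN2 i
  obtain ⟨b1, b2⟩ := m.hms N hN2 j
  have hlt : |ms N i - ms N j| < L := by
    rw [abs_lt]; constructor <;> linarith [a1.1, a1.2, b1.1, b1.2]
  refine zc_ne_of_lt hL hlt fun heq => ?_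
  have h1 : |((i:ℕ):ℝ) * L / N - ((j:ℕ):ℝ) * L / N| ≤ 2 * (M / (N:ℝ)^(κ+1)) := by
    have e : ((i:ℕ):ℝ) * L / N - ((j:ℕ):ℝ) * L / N = (ms N j - ((j:ℕ):ℝ) * L / N) - (ms N i - ((i:ℕ):ℝ) * L / N) := by
      rw [heq]; ring
    rw [e]
    refine (abs_sub _ _).trans (by linarith)
  have h2 : (1:ℝ) ≤ |((i:ℕ):ℝ) - ((j:ℕ):ℝ)| := by
    have : (1:ℤ) ≤ |((i:ℕ):ℤ) - ((j:ℕ):ℤ)| := by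
      apply Int.one_le_abs
      intro h
      exact hij (Fin.ext (by omega))
    exact_mod_cast this
  have h3 : |((i:ℕ):ℝ) * L / N - ((j:ℕ):ℝ) * L / N| = |((i:ℕ):ℝ) - ((j:ℕ):ℝ)| * (L / N) := by
    rw [show ((i:ℕ):ℝ) * L / N - ((j:ℕ):ℝ) * L / N = (((i:ℕ):ℝ) - ((j:ℕ):ℝ)) * (L / N) by ring, abs_mul,
      abs_of_pos (a := L / N) (by positivity)]
  have h4 : L / N ≤ 2 * (M / (N:ℝ)^(κ+1)) := by
    rw [h3] at h1
    have : 0 < L / N := by positivity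
    nlinarith
  have h5 : (N:ℝ)^2 ≤ (N:ℝ)^(κ+1) := pow_le_pow_right₀ hNr (by have := m.hκ; omega)
  have h6 : 2 * (M / (N:ℝ)^(κ+1)) ≤ 2 * (M / (N:ℝ)^2) := by gcongr
  have h7 : 2 * M / L < N := hn0.trans_le (by exact_mod_cast (by omega : n0 ≤ N))
  have h8 := h4.trans h6
  have h9 : 2 * (M / (N:ℝ)^2) < L / N := by
    rw [div_lt_iff₀ hL] at h7
    rw [show 2 * (M / (N:ℝ)^2) = 2 * M / N^2 by ring, div_lt_div_iff₀ (by positivity) (by positivity)]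
    nlinarith
  linarith

open Real MeasureTheory Filter Topology

noncomputable def GG (l : ℝ → ℂ) (s t : ℝ) : ℝ := Real.log ‖l s - l t‖

noncomputable def lam (L x : ℝ) : ℝ := |Real.log ‖zc L x - 1‖|

noncomputable def mu (L : ℝ) : Measure ℝ := volume.restrict (Set.Ioc 0 L)

instance mu_fin (L : ℝ) : IsFiniteMeasure (mu L) := by unfold mu; infer_instance

theorem integral_mu {L : ℝ} (hL : 0 < L) (f : ℝ → ℝ) : ∫ x, f x ∂(mu L) = ∫ x in (0:ℝ)..L, f x := by
  rw [mu, intervalIntegral.integral_of_le hL.le]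

theorem zc_zero (L : ℝ) : zc L 0 = 1 := by simp [zc]

theorem lam_sub {L : ℝ} (hL : 0 < L) (s t : ℝ) : lam L (s - t) = |Real.log ‖zc L s - zc L t‖| := by
  rw [lam, ← zc_zero L, zc_sub_norm hL, zc_sub_norm hL, sub_zero]

theorem lam_nonneg (L x : ℝ) : 0 ≤ lam L x := abs_nonneg _

theorem lam_per {L : ℝ} (hL : 0 < L) (x : ℝ) : lam L (x + L) = lam L x := by
  rw [lam, lam, zc_period hL]

theorem lam_neg {L : ℝ} (hL : 0 < L) (s t : ℝ) : lam L (s - t) = lam L (t - s) := by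
  rw [lam_sub hL, lam_sub hL, norm_sub_rev]

theorem lam_meas (L : ℝ) : Measurable (lam L) := by
  have := (zc_smooth L).continuous
  unfold lam
  have h1 : Measurable fun x => Real.log ‖zc L x - 1‖ := Real.measurable_log.comp (by fun_prop : Continuous fun x => ‖zc L x - 1‖).measurable
  exact h1.norm

theorem log_zc_int {L : ℝ} (hL : 0 < L) (t a b : ℝ) : IntervalIntegrable (fun s => Real.log ‖zc L s - zc L t‖) volume a b := by
  have h1 : IntervalIntegrable (fun x => Real.log (sin x)) volume (π * (a - t) / L) (π * (b - t) / L) := intervalIntegrable_log_sin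
  have h2 : IntervalIntegrable (fun x => Real.log (sin (π / L * x - π * t / L))) volume a b := by
    have := (h1.comp_sub_right (π * t / L)).comp_mul_left (c := π / L)
    have hp : π / L ≠ 0 := by positivity
    convert this using 1
    · field_simp; ring
    · field_simp; ring
  have h3 : IntervalIntegrable (fun x => Real.log 2 + Real.log (sin (π / L * x - π * t / L))) volume a b :=
    intervalIntegrable_const.add h2
  refine h3.congr_ae ?_
  have hc := node_countable hL t
  filter_upwards [(hc.ae_notMem volume).filter_mono (ae_mono Measure.restrict_le_self)] with x hx
  have hx' : zc L x ≠ zc L t := hx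
  have hs := (sin_ne_iff hL x t).2 hx'
  rw [zc_sub_norm hL, Real.log_mul (by norm_num) (abs_ne_zero.2 hs), Real.log_abs]
  congr 3; ring

theorem lam_int {L : ℝ} (hL : 0 < L) (a b : ℝ) : IntervalIntegrable (lam L) volume a b := by
  have := (log_zc_int hL 0 a b).abs
  simp only [zc_zero] at this
  exact this

theorem lam_shift_int {L : ℝ} (hL : 0 < L) (t : ℝ) : Integrable (fun s => lam L (s - t)) (mu L) := by
  have := (log_zc_int hL t 0 L).abs
  simp only [← lam_sub hL] at this
  exact (intervalIntegrable_iff_integrableOn_Ioc_of_le hL.le).1 this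

theorem lam_shift {L : ℝ} (hL : 0 < L) (t : ℝ) : ∫ s, lam L (s - t) ∂(mu L) = ∫ s in (0:ℝ)..L, lam L s := by
  rw [integral_mu hL, intervalIntegral.integral_comp_sub_right (f := lam L)]
  have := (show Function.Periodic (lam L) L from lam_per hL).intervalIntegral_add_eq (0 - t) 0
  rw [zero_add, show 0 - t + L = L - t by ring] at this
  exact this

theorem kint1 {L : ℝ} (hL : 0 < L) (A : ℝ) (hA : 0 ≤ A) {h : ℝ → ℝ} (hh : Integrable h (mu L)) :
    Integrable (fun p : ℝ × ℝ => (A + lam L (p.1 - p.2)) * h p.2) ((mu L).prod (mu L)) := by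
  have hm : AEStronglyMeasurable (fun p : ℝ × ℝ => (A + lam L (p.1 - p.2)) * h p.2) ((mu L).prod (mu L)) := by
    refine AEStronglyMeasurable.mul ?_ hh.aestronglyMeasurable.comp_snd
    exact (((lam_meas L).comp (measurable_fst.sub measurable_snd)).const_add A).aestronglyMeasurable
  rw [integrable_prod_iff' hm]
  constructor
  · refine Eventually.of_forall fun y => ?_
    have h3 : Integrable (fun x => A + lam L (x - y)) (mu L) := (integrable_const A).add (lam_shift_int hL y)
    exact h3.mul_const (h y)
  · have e : (fun y => ∫ x, ‖(A + lam L (x - y)) * h y‖ ∂(mu L)) = fun y => (∫ x, A ∂(mu L) + ∫ s in (0:ℝ)..L, lam L s) * ‖h y‖ := by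
      funext y
      simp only [norm_mul]
      rw [integral_mul_const, ← lam_shift hL y, ← integral_add (integrable_const A) (lam_shift_int hL y)]
      congr 2; funext x
      rw [Real.norm_of_nonneg (add_nonneg hA (lam_nonneg _ _))]
    simp only at e ⊢
    rw [e]
    exact hh.norm.const_mul _

theorem kint2 {L : ℝ} (hL : 0 < L) (A : ℝ) (hA : 0 ≤ A) {h : ℝ → ℝ} (hh : Integrable h (mu L)) :
    Integrable (fun p : ℝ × ℝ => (A + lam L (p.1 - p.2)) * h p.1) ((mu L).prod (mu L)) := by
  have := (kint1 hL A hA hh).swap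
  refine this.congr (Eventually.of_forall fun p => ?_)
  simp only [Function.comp, Prod.fst_swap, Prod.snd_swap]
  rw [lam_neg hL]

theorem GG_bd {L : ℝ} {l : ℝ → ℂ} (c : Crv L l) : ∃ A, 0 ≤ A ∧ ∀ s t, |GG l s t| ≤ A + lam L (s - t) := by
  obtain ⟨hL, hl, hper, harc, hinj⟩ := c
  have hD := (DD_smooth hL hl hper).continuous
  have hne := DD_ne hL hper harc hinj
  have hc : Continuous fun p => Real.log ‖DD L l p‖ := hD.norm.log fun p => norm_ne_zero_iff.2 (hne p)
  obtain ⟨A, hA⟩ := per_bdd2 hL hc (fun s t => by rw [DD_per1 hL hper]) (fun s t => by rw [DD_per2 hL hper])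
  refine ⟨A, (norm_nonneg _).trans (hA 0), fun s t => ?_⟩
  have hA0 : 0 ≤ A := (norm_nonneg _).trans (hA 0)
  rw [GG, DD_spec hL hper, norm_mul, lam_sub hL]
  by_cases hz : zc L s = zc L t
  · rw [hz]; simp [hA0]
  · rw [Real.log_mul (norm_ne_zero_iff.2 (hne _)) (norm_ne_zero_iff.2 (sub_ne_zero.2 hz))]
    exact (abs_add_le _ _).trans (by have := hA (s, t); rw [Real.norm_eq_abs] at this; gcongr)

theorem GG_meas {L : ℝ} {l : ℝ → ℂ} (c : Crv L l) : Measurable (fun p : ℝ × ℝ => GG l p.1 p.2) := by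
  have := c.hl.continuous
  unfold GG
  exact Real.measurable_log.comp (by fun_prop : Continuous fun p : ℝ × ℝ => ‖l p.1 - l p.2‖).measurable

theorem mul_log_cont : Continuous (fun w : ℂ => w * ((Real.log ‖w‖ : ℝ) : ℂ)) := by
  rw [continuous_iff_continuousAt]
  intro w
  by_cases hw : w = 0
  · subst hw
    rw [ContinuousAt, zero_mul, tendsto_zero_iff_norm_tendsto_zero]
    have h1 : Continuous fun w : ℂ => ‖‖w‖ * Real.log ‖w‖‖ := (Real.continuous_mul_log.comp continuous_norm).norm
    have h2 := h1.tendsto 0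
    simp only [norm_zero, zero_mul] at h2
    refine h2.congr fun x => ?_
    rw [norm_mul, norm_mul, Complex.norm_real, norm_norm]
  · have h1 : ContinuousAt (fun w : ℂ => Real.log ‖w‖) w := continuous_norm.continuousAt.log (norm_ne_zero_iff.2 hw)
    exact continuousAt_id.mul (Complex.continuous_ofReal.continuousAt.comp h1)

theorem Tp_eq {L : ℝ} {l : ℝ → ℂ} (c : Crv L l) {φ : ℝ → ℝ}
    (hφ : ContDiff ℝ (⊤ : ℕ∞) φ) (hφp : ∀ s, φ (s + L) = φ s) (t : ℝ) :
    Tp L l φ t = - ∫ s, GG l s t * deriv φ s ∂(mu L) := by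
  obtain ⟨A, hA, hG⟩ := GG_bd c
  have hGm := GG_meas c
  obtain ⟨hL, hl, hper, harc, hinj⟩ := c
  have hd : Continuous (deriv φ) := (contDiff_infty_iff_deriv.1 hφ).2.continuous
  have hDD := (DD_smooth hL hl hper).continuous
  have hne := DD_ne hL hper harc hinj
  have hzc := (zc_smooth L).continuous
  have hDφ := (DD_smooth hL (ofReal_smooth hφ) (fun s => by simp [hφp])).continuous
  set H : ℝ → ℝ := fun s => GG l s t * (φ s - φ t) with hH
  have hHe : H = fun s => (DD L (fun x => (φ x : ℂ)) (s, t) * ((zc L s - zc L t) * ((Real.log ‖zc L s - zc L t‖ : ℝ) : ℂ)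
      + (zc L s - zc L t) * ((Real.log ‖DD L l (s, t)‖ : ℝ) : ℂ))).re := by
    funext s
    have e1 := DD_spec hL (ψ := fun x => (φ x : ℂ)) (fun s => by simp [hφp]) s t
    have e2 : DD L (fun x => (φ x : ℂ)) (s, t) * ((zc L s - zc L t) * ((Real.log ‖zc L s - zc L t‖ : ℝ) : ℂ)
      + (zc L s - zc L t) * ((Real.log ‖DD L l (s, t)‖ : ℝ) : ℂ)) = (((φ s - φ t) * (Real.log ‖zc L s - zc L t‖ + Real.log ‖DD L l (s, t)‖) : ℝ) : ℂ) := by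
      push_cast
      rw [e1]; ring
    rw [e2, Complex.ofReal_re, hH]
    simp only [GG]
    by_cases hz : zc L s = zc L t
    · have : φ s - φ t = 0 := by
        have := e1; rw [hz, sub_self, mul_zero] at this
        exact_mod_cast this
      rw [this]; ring
    · rw [DD_spec hL hper, norm_mul, Real.log_mul (norm_ne_zero_iff.2 (hne _)) (norm_ne_zero_iff.2 (sub_ne_zero.2 hz))]
      ring
  have hHc : Continuous H := by
    rw [hHe]
    have h1 : Continuous fun s => (zc L s - zc L t) * ((Real.log ‖zc L s - zc L t‖ : ℝ) : ℂ) :=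
      mul_log_cont.comp (hzc.sub continuous_const)
    have h2 : Continuous fun s => Real.log ‖DD L l (s, t)‖ :=
      ((by fun_prop : Continuous fun s => ‖DD L l (s, t)‖)).log fun p => norm_ne_zero_iff.2 (hne _)
    exact Complex.continuous_re.comp ((hDφ.comp (by fun_prop)).mul (h1.add ((hzc.sub continuous_const).mul (Complex.continuous_ofReal.comp h2))))
  have hw := (ww_smooth hL hl hper harc hinj hφ hφp).continuous
  have hR := (RR_smooth hL hl hper harc hinj).continuous
  have hGi : Integrable (fun s => GG l s t * deriv φ s) (mu L) := by
    obtain ⟨B, hB⟩ := per_bdd hL hd (per_deriv hφp)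
    refine Integrable.mono' (((integrable_const A).add (lam_shift_int hL t)).mul_const B) ?_ ?_
    · exact ((hGm.comp (measurable_id.prodMk measurable_const)).mul hd.measurable).aestronglyMeasurable
    · refine Eventually.of_forall fun s => ?_
      rw [norm_mul]
      exact mul_le_mul (hG s t) (hB s) (norm_nonneg _) (add_nonneg hA (lam_nonneg _ _))
  have hGi' : IntervalIntegrable (fun s => GG l s t * deriv φ s) volume 0 L :=
    (intervalIntegrable_iff_integrableOn_Ioc_of_le hL.le).2 hGi
  have i1 : IntervalIntegrable (fun s => ww L l φ (s, t)) volume 0 L :=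
    (by fun_prop : Continuous fun s => ww L l φ (s, t)).intervalIntegrable _ _
  have i2 : IntervalIntegrable (fun s => RR L l (s, t) * φ t) volume 0 L :=
    (by fun_prop : Continuous fun s => RR L l (s, t) * φ t).intervalIntegrable _ _
  have key := MeasureTheory.integral_eq_of_hasDerivAt_off_countable_of_le H
    (fun s => (ww L l φ (s, t) - RR L l (s, t) * φ t) + GG l s t * deriv φ s) hL.le (node_countable hL t) hHc.continuousOn
    (fun s hs => by
      have hz : zc L s ≠ zc L t := hs.2
      have hlne : l s - l t ≠ 0 := by
        rw [DD_spec hL hper]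
        exact mul_ne_zero (hne _) (sub_ne_zero.2 hz)
      have d1 : HasDerivAt (fun s => l s - l t) (deriv l s) s :=
        ((hl.differentiable (by simp)).differentiableAt.hasDerivAt).sub_const _
      have d2 := hasDerivAt_log_norm d1 hlne
      rw [← dotR_div] at d2
      have d3 : HasDerivAt (fun s => φ s - φ t) (deriv φ s) s :=
        ((hφ.differentiable (by simp)).differentiableAt.hasDerivAt).sub_const _
      refine (d2.mul d3).congr_deriv ?_
      have hK := KK_eq hL hl hper harc hinj hz
      rw [KK] at hK
      rw [hK, ww_eq hL hφp hz, GG]; ring)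
    ((i1.sub i2).add hGi')
  rw [intervalIntegral.integral_add (i1.sub i2) hGi', intervalIntegral.integral_sub i1 i2,
    intervalIntegral.integral_mul_const, RR_integral hL hl hper harc hinj, zero_mul, sub_zero] at key
  have hHp : H L = H 0 := by
    have h1 := hper 0; have h2 := hφp 0
    rw [zero_add] at h1 h2
    simp only [hH, GG, h1, h2]
  rw [hHp, sub_self] at key
  rw [integral_mu hL, Tp]
  linarith

open Real MeasureTheory Filter Topology

noncomputable def perz (L : ℝ) (ψ : ℝ → ℝ) (x : ℝ) : ℝ := ψ (L * Int.fract (x / L))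

theorem perz_per {L : ℝ} (hL : 0 < L) (ψ : ℝ → ℝ) (x : ℝ) : perz L ψ (x + L) = perz L ψ x := by
  rw [perz, perz, add_div, div_self hL.ne', Int.fract_add_one]

theorem perz_Ico {L : ℝ} (hL : 0 < L) (ψ : ℝ → ℝ) {x : ℝ} (k : ℤ) (h1 : k * L ≤ x) (h2 : x < (k + 1) * L) :
    perz L ψ x = ψ (x - k * L) := by
  have : Int.fract (x / L) = x / L - k := by
    rw [Int.fract_eq_iff]
    have e1 : (k : ℝ) ≤ x / L := (le_div_iff₀ hL).2 h1
    have e2 : x / L < k + 1 := (div_lt_iff₀ hL).2 h2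
    exact ⟨by linarith, by linarith, k, by ring⟩
  rw [perz, this]; congr 1; field_simp

theorem perz_smooth {L : ℝ} (hL : 0 < L) {ψ : ℝ → ℝ} (hψ : ContDiff ℝ (⊤ : ℕ∞) ψ) (hs : tsupport ψ ⊆ Set.Ioo 0 L) :
    ContDiff ℝ (⊤ : ℕ∞) (perz L ψ) := by
  have hz : ∀ x, x ∉ Set.Ioo 0 L → ψ x = 0 := fun x hx => image_eq_zero_of_notMem_tsupport fun h => hx (hs h)
  rw [contDiff_iff_contDiffAt]
  intro x
  set k : ℤ := ⌊x / L⌋ with hk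
  have hk1 : (k : ℝ) * L ≤ x := (le_div_iff₀ hL).1 (Int.floor_le _)
  have hk2 : x < (k + 1) * L := (div_lt_iff₀ hL).1 (Int.lt_floor_add_one _)
  have : ContDiffAt ℝ (⊤ : ℕ∞) (fun y => ψ (y - k * L) + ψ (y - (k - 1) * L)) x := by fun_prop
  refine this.congr_of_eventuallyEq ?_
  have hn : Set.Ioo ((k - 1) * L) ((k + 1) * L) ∈ 𝓝 x := Ioo_mem_nhds (by nlinarith) hk2
  filter_upwards [hn] with y hy
  obtain ⟨hy1, hy2⟩ := hy
  by_cases h : k * L ≤ y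
  · rw [perz_Ico hL ψ k h hy2, hz (y - (k - 1) * L) (fun h' => by have := h'.2; nlinarith), add_zero]
  · push Not at h
    rw [perz_Ico hL ψ (k - 1) (by push_cast; exact hy1.le) (by push_cast; simpa using h), hz (y - k * L) (fun h' => by have := h'.1; linarith), zero_add]
    push_cast; rfl

/-- primitive of a mean zero periodic function -/
theorem prim_exists {L : ℝ} {p : ℝ → ℝ} (hp : ContDiff ℝ (⊤ : ℕ∞) p) (hpp : ∀ x, p (x + L) = p x)
    (h0 : ∫ x in (0:ℝ)..L, p x = 0) : ∃ φ : ℝ → ℝ, ContDiff ℝ (⊤ : ℕ∞) φ ∧ (∀ x, φ (x + L) = φ x) ∧ deriv φ = p := by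
  have hc := hp.continuous
  have hd : ∀ x, HasDerivAt (fun x => ∫ y in (0:ℝ)..x, p y) (p x) x := fun x =>
    intervalIntegral.integral_hasDerivAt_right (hc.intervalIntegrable _ _) (hc.stronglyMeasurableAtFilter _ _) hc.continuousAt
  have hd' : deriv (fun x => ∫ y in (0:ℝ)..x, p y) = p := funext fun x => (hd x).deriv
  refine ⟨fun x => ∫ y in (0:ℝ)..x, p y, ?_, ?_, hd'⟩
  · rw [contDiff_infty_iff_deriv]
    exact ⟨fun x => (hd x).differentiableAt, by rw [hd']; exact hp⟩
  · intro x
    have e := (show Function.Periodic p L from hpp).intervalIntegral_add_eq x 0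
    rw [zero_add, h0] at e
    simp only
    rw [← intervalIntegral.integral_add_adjacent_intervals (hc.intervalIntegrable 0 x) (hc.intervalIntegrable x (x + L)), e, add_zero]

/-- the du Bois-Reymond lemma on the circle -/
theorem ae_const {L : ℝ} (hL : 0 < L) {u : ℝ → ℝ} (hu : Integrable u (mu L))
    (h : ∀ φ : ℝ → ℝ, ContDiff ℝ (⊤ : ℕ∞) φ → (∀ x, φ (x + L) = φ x) → ∫ x, u x * deriv φ x ∂(mu L) = 0) :
    ∃ c, ∀ᵐ x ∂(mu L), u x = c := by
  set c := (∫ x, u x ∂(mu L)) / L with hc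
  refine ⟨c, ?_⟩
  have hL1 : ∫ x, (1:ℝ) ∂(mu L) = L := by rw [integral_mu hL]; simp
  have key : ∀ ψ : ℝ → ℝ, ContDiff ℝ (⊤ : ℕ∞) ψ → (∀ x, ψ (x + L) = ψ x) → ∫ x, (u x - c) * ψ x ∂(mu L) = 0 := by
    intro ψ hψ hψp
    have hψc := hψ.continuous
    set d := (∫ x, ψ x ∂(mu L)) / L with hd
    have hψi : Integrable ψ (mu L) := (intervalIntegrable_iff_integrableOn_Ioc_of_le hL.le).1 (hψc.intervalIntegrable 0 L)
    have hcst : ∀ a : ℝ, Integrable (fun _ : ℝ => a) (mu L) := fun a => integrable_const a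
    have hI0 : ∫ x, (ψ x - d) ∂(mu L) = 0 := by
      rw [integral_sub hψi (hcst d)]
      have : ∫ _ : ℝ, d ∂(mu L) = d * L := by
        have := integral_const_mul (μ := mu L) d (fun _ => (1:ℝ))
        rw [hL1] at this; simpa using this
      rw [this, hd]; field_simp; ring
    obtain ⟨φ, h1, h2, h3⟩ := prim_exists (p := fun x => ψ x - d) (hψ.sub contDiff_const) (fun x => by rw [hψp]) (by rw [← integral_mu hL]; exact hI0)
    have h4 := h φ h1 h2
    rw [h3] at h4
    obtain ⟨B, hB⟩ := per_bdd hL hψc hψp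
    have huψ : Integrable (fun x => u x * ψ x) (mu L) := hu.mul_bdd (c := B) hψc.aestronglyMeasurable (Eventually.of_forall hB)
    have e1 : ∫ x, u x * (ψ x - d) ∂(mu L) = ∫ x, u x * ψ x ∂(mu L) - (∫ x, u x ∂(mu L)) * d := by
      rw [← integral_mul_const, ← integral_sub huψ (hu.mul_const d)]
      congr 1; funext x; ring
    have e2 : ∫ x, (u x - c) * ψ x ∂(mu L) = ∫ x, u x * ψ x ∂(mu L) - c * ∫ x, ψ x ∂(mu L) := by
      rw [← integral_const_mul, ← integral_sub huψ (hψi.const_mul c)]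
      congr 1; funext x; ring
    rw [e2]
    rw [h4] at e1
    rw [hc]
    have : (∫ x, u x ∂mu L) / L * ∫ x, ψ x ∂mu L = (∫ x, u x ∂mu L) * d := by rw [hd]; ring
    linarith
  have hv : Integrable (fun x => u x - c) (mu L) := hu.sub (integrable_const c)
  have hli : LocallyIntegrableOn (fun x => u x - c) (Set.Ioo 0 L) volume :=
    (IntegrableOn.mono_set (show IntegrableOn _ (Set.Ioc 0 L) volume from hv) Set.Ioo_subset_Ioc_self).locallyIntegrableOn
  have h5 := isOpen_Ioo.ae_eq_zero_of_integral_contDiff_smul_eq_zero hli (fun ψ hψ hcs hts => by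
    have h6 := key (perz L ψ) (perz_smooth hL hψ hts) (perz_per hL ψ)
    have hz : ∀ x, x ∉ Set.Ioo 0 L → ψ x = 0 := fun x hx => image_eq_zero_of_notMem_tsupport fun h => hx (hts h)
    rw [← setIntegral_eq_integral_of_forall_compl_eq_zero (s := Set.Ioo 0 L) (fun x hx => by rw [hz x hx, zero_smul])]
    rw [mu, integral_Ioc_eq_integral_Ioo] at h6
    refine Eq.trans ?_ h6
    refine setIntegral_congr_fun measurableSet_Ioo fun x hx => ?_
    simp only [smul_eq_mul]
    rw [perz_Ico hL ψ 0 (by simpa using hx.1.le) (by simpa using hx.2)]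
    simp [mul_comm])
  rw [mu, ← restrict_Ioo_eq_restrict_Ioc, ae_restrict_iff' measurableSet_Ioo]
  filter_upwards [h5] with x hx h
  linarith [hx h]

open Real MeasureTheory Filter Topology

theorem GGgg_int {L : ℝ} {l : ℝ → ℂ} (c : Crv L l) {g : ℝ → ℝ} (hg : MemLp g 2 (mu L)) :
    Integrable (fun p : ℝ × ℝ => GG l p.1 p.2 * (g p.1 * g p.2)) ((mu L).prod (mu L)) := by
  obtain ⟨A, hA, hG⟩ := GG_bd c
  have hGm := GG_meas c
  have hg2 : Integrable (fun x => g x ^ 2) (mu L) := hg.integrable_sq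
  have hgm := hg.aestronglyMeasurable
  refine Integrable.mono' ((kint1 c.hL A hA hg2).add (kint2 c.hL A hA hg2)) ?_ ?_
  · exact hGm.aestronglyMeasurable.mul (hgm.comp_fst.mul hgm.comp_snd)
  · refine Eventually.of_forall fun p => ?_
    have h1 := hG p.1 p.2
    have h0 : 0 ≤ A + lam L (p.1 - p.2) := add_nonneg hA (lam_nonneg _ _)
    rw [norm_mul, Real.norm_eq_abs, Real.norm_eq_abs]
    have h2 : |g p.1 * g p.2| ≤ g p.2 ^ 2 + g p.1 ^ 2 := by
      rw [abs_mul]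
      nlinarith [sq_abs (g p.1), sq_abs (g p.2), sq_nonneg (|g p.1| - |g p.2|), sq_nonneg (g p.1), sq_nonneg (g p.2)]
    calc |GG l p.1 p.2| * |g p.1 * g p.2| ≤ (A + lam L (p.1 - p.2)) * (g p.2 ^ 2 + g p.1 ^ 2) :=
          mul_le_mul h1 h2 (abs_nonneg _) h0
      _ = _ := by simp only [Pi.add_apply]; ring

theorem GGg_int {L : ℝ} {l : ℝ → ℂ} (c : Crv L l) {g : ℝ → ℝ} (hg : Integrable g (mu L)) {b : ℝ → ℝ} (hb : Continuous b)
    {B : ℝ} (hB : ∀ x, ‖b x‖ ≤ B) :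
    Integrable (fun p : ℝ × ℝ => b p.1 * (GG l p.1 p.2 * g p.2)) ((mu L).prod (mu L)) := by
  obtain ⟨A, hA, hG⟩ := GG_bd c
  have hGm := GG_meas c
  refine Integrable.mono' (((kint1 c.hL A hA hg.norm).const_mul B)) ?_ ?_
  · exact (hb.comp continuous_fst).aestronglyMeasurable.mul (hGm.aestronglyMeasurable.mul hg.aestronglyMeasurable.comp_snd)
  · refine Eventually.of_forall fun p => ?_
    rw [norm_mul, norm_mul]
    exact mul_le_mul (hB _) (mul_le_mul_of_nonneg_right (hG _ _) (norm_nonneg _)) (by positivity) ((norm_nonneg _).trans (hB p.1))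

theorem energy_zero {L : ℝ} {l : ℝ → ℂ} (c : Crv L l) {g : ℝ → ℝ} (hg : MemLp g 2 (mu L))
    (h0 : ∫ x, g x ∂(mu L) = 0)
    (hT : ∀ φ : ℝ → ℝ, ContDiff ℝ (⊤ : ℕ∞) φ → (∀ x, φ (x + L) = φ x) → ∫ x, g x * Tp L l φ x ∂(mu L) = 0) :
    ∫ p : ℝ × ℝ, GG l p.1 p.2 * (g p.1 * g p.2) ∂((mu L).prod (mu L)) = 0 := by
  have hg1 : Integrable g (mu L) := hg.integrable (by norm_num)
  have hu : Integrable (fun s => ∫ t, GG l s t * g t ∂(mu L)) (mu L) := by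
    have := (GGg_int c hg1 (b := fun _ => 1) continuous_const (B := 1) (fun _ => by simp)).integral_prod_left
    simpa using this
  obtain ⟨C, hC⟩ := ae_const c.hL hu (fun φ hφ hφp => by
    have hd : Continuous (deriv φ) := (contDiff_infty_iff_deriv.1 hφ).2.continuous
    obtain ⟨B, hB⟩ := per_bdd c.hL hd (per_deriv hφp)
    have hI := GGg_int c hg1 hd hB
    have e := integral_integral_swap (f := fun s t => deriv φ s * (GG l s t * g t)) hI
    have e2 : ∫ t, ∫ s, deriv φ s * (GG l s t * g t) ∂(mu L) ∂(mu L) = - ∫ t, g t * Tp L l φ t ∂(mu L) := by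
      rw [← integral_neg]
      congr 1; funext t
      rw [Tp_eq c hφ hφp, mul_neg, neg_neg, ← integral_const_mul]
      congr 1; funext s; ring
    rw [hT φ hφ hφp, neg_zero] at e2
    rw [e2] at e
    rw [← e]
    congr 1; funext s
    rw [integral_const_mul]; ring)
  rw [integral_prod _ (GGgg_int c hg)]
  have : ∫ s, ∫ t, GG l s t * (g s * g t) ∂(mu L) ∂(mu L) = ∫ s, C * g s ∂(mu L) := by
    refine integral_congr_ae ?_
    filter_upwards [hC] with s hs
    rw [← hs, ← integral_mul_const]
    congr 1; funext t; ring
  simp only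
  rw [this, integral_const_mul, h0, mul_zero]

noncomputable def vv (l : ℝ → ℂ) (a : Fin 4) (s : ℝ) : ℝ :=
  ![1, ‖l s‖ ^ 2, √2 * (l s).re, √2 * (l s).im] a / (1 + ‖l s‖ ^ 2)

noncomputable def kk (l : ℝ → ℂ) (s t : ℝ) : ℝ := ∑ a, vv l a s * vv l a t

theorem kk_eq (l : ℝ → ℂ) (s t : ℝ) : 1 - kk l s t = ‖l s - l t‖ ^ 2 / ((1 + ‖l s‖ ^ 2) * (1 + ‖l t‖ ^ 2)) := by
  have h2 : √2 * √2 = 2 := Real.mul_self_sqrt (by norm_num)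
  have h1 : (1 + ‖l s‖ ^ 2) ≠ 0 := by positivity
  have h3 : (1 + ‖l t‖ ^ 2) ≠ 0 := by positivity
  have e : ∀ z : ℂ, ‖z‖ ^ 2 = z.re ^ 2 + z.im ^ 2 := fun z => by rw [← Complex.normSq_eq_norm_sq, Complex.normSq_apply]; ring
  have : kk l s t = (1 + ‖l s‖ ^ 2 * ‖l t‖ ^ 2 + (√2 * √2) * ((l s).re * (l t).re + (l s).im * (l t).im)) / ((1 + ‖l s‖ ^ 2) * (1 + ‖l t‖ ^ 2)) := by
    simp only [kk, vv, Fin.sum_univ_four, Matrix.cons_val]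
    field_simp
    ring
  rw [this, h2, eq_div_iff (by positivity), sub_mul, div_mul_cancel₀ _ (by positivity)]
  rw [e (l s - l t), e (l s), e (l t)]
  simp only [Complex.sub_re, Complex.sub_im]
  ring

theorem kk_nonneg (l : ℝ → ℂ) (s t : ℝ) : 0 ≤ kk l s t := by
  have h := kk_eq l s t
  have h2 : ‖l s - l t‖ ^ 2 ≤ (1 + ‖l s‖ ^ 2) * (1 + ‖l t‖ ^ 2) := by
    have h3 := norm_sub_le (l s) (l t)
    have := pow_le_pow_left₀ (norm_nonneg _) h3 2
    nlinarith [sq_nonneg (‖l s‖ * ‖l t‖ - 1)]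
  have := div_le_one_of_le₀ h2 (by positivity)
  linarith

theorem kk_le (l : ℝ → ℂ) (s t : ℝ) : kk l s t ≤ 1 := by
  have h := kk_eq l s t
  have : 0 ≤ ‖l s - l t‖ ^ 2 / ((1 + ‖l s‖ ^ 2) * (1 + ‖l t‖ ^ 2)) := by positivity
  linarith

theorem GG_kk (l : ℝ → ℂ) (s t : ℝ) (h : l s ≠ l t) : -Real.log (1 - kk l s t) =
    -2 * GG l s t + Real.log (1 + ‖l s‖ ^ 2) + Real.log (1 + ‖l t‖ ^ 2) := by
  have h1 : (1 + ‖l s‖ ^ 2) ≠ 0 := by positivity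
  have h3 : (1 + ‖l t‖ ^ 2) ≠ 0 := by positivity
  have h4 : ‖l s - l t‖ ≠ 0 := norm_ne_zero_iff.2 (sub_ne_zero.2 h)
  rw [kk_eq, Real.log_div (pow_ne_zero 2 h4) (mul_ne_zero h1 h3), Real.log_mul h1 h3, Real.log_pow, GG]
  push_cast; ring

theorem vv_cont {l : ℝ → ℂ} (hl : Continuous l) (a : Fin 4) : Continuous (vv l a) := by
  unfold vv
  refine Continuous.div ?_ (by fun_prop) (fun x => by positivity)
  fin_cases a <;> simp <;> fun_prop

theorem vv_bd (l : ℝ → ℂ) (a : Fin 4) (s : ℝ) : ‖vv l a s‖ ≤ 1 := by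
  have h := kk_le l s s
  have h1 : vv l a s * vv l a s ≤ kk l s s := Finset.single_le_sum (f := fun a => vv l a s * vv l a s) (fun i _ => mul_self_nonneg _) (Finset.mem_univ a)
  rw [Real.norm_eq_abs]
  exact abs_le_one_iff_mul_self_le_one.2 (h1.trans h)

theorem diag_null {L : ℝ} {l : ℝ → ℂ} (c : Crv L l) : ∀ᵐ p ∂((mu L).prod (mu L)), l p.1 ≠ l p.2 := by
  have hc := c.hl.continuous
  have hm : MeasurableSet {p : ℝ × ℝ | l p.1 = l p.2} :=
    (isClosed_eq (by fun_prop) (by fun_prop)).measurableSet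
  have : ((mu L).prod (mu L)) {p : ℝ × ℝ | l p.1 = l p.2} = 0 := by
    rw [Measure.measure_prod_null hm]
    refine Eventually.of_forall fun s => ?_
    have h1 : (Prod.mk s ⁻¹' {p : ℝ × ℝ | l p.1 = l p.2}) ⊆ {x | zc L x = zc L s} := by
      intro t ht
      have ht' : l s = l t := ht
      by_contra hz
      have hz' : zc L s ≠ zc L t := fun h => hz h.symm
      have := DD_spec c.hL c.hper s t
      rw [ht', sub_self] at this
      exact mul_ne_zero (DD_ne c.hL c.hper c.harc c.hinj (s, t)) (sub_ne_zero.2 hz') this.symm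
    refine measure_mono_null h1 ?_
    exact (Measure.absolutelyContinuous_of_le Measure.restrict_le_self) ((node_countable c.hL s).measure_zero volume)
  rw [ae_iff]
  simpa using this

open Real MeasureTheory Filter Topology

theorem vprod_cont {l : ℝ → ℂ} (hl : Continuous l) {n : ℕ} (f : Fin n → Fin 4) : Continuous fun s => ∏ i, vv l (f i) s :=
  continuous_finsetProd _ fun i _ => vv_cont hl (f i)

theorem vprod_bd (l : ℝ → ℂ) {n : ℕ} (f : Fin n → Fin 4) (s : ℝ) : ‖∏ i, vv l (f i) s‖ ≤ 1 := by
  rw [norm_prod]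
  exact Finset.prod_le_one (fun i _ => norm_nonneg _) fun i _ => vv_bd l _ s

theorem kk_pow (l : ℝ → ℂ) (n : ℕ) (s t : ℝ) : kk l s t ^ n = ∑ f : Fin n → Fin 4, (∏ i, vv l (f i) s) * ∏ i, vv l (f i) t := by
  rw [kk, Fintype.sum_pow]
  simp only [Finset.prod_mul_distrib]

theorem moment_int {L : ℝ} {l : ℝ → ℂ} (c : Crv L l) {g : ℝ → ℝ} (hg : Integrable g (mu L)) (n : ℕ) :
    Integrable (fun p : ℝ × ℝ => kk l p.1 p.2 ^ n * (g p.1 * g p.2)) ((mu L).prod (mu L)) ∧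
    ∫ p : ℝ × ℝ, kk l p.1 p.2 ^ n * (g p.1 * g p.2) ∂((mu L).prod (mu L)) =
      ∑ f : Fin n → Fin 4, (∫ s, (∏ i, vv l (f i) s) * g s ∂(mu L)) ^ 2 := by
  have hi : ∀ f : Fin n → Fin 4, Integrable (fun s => (∏ i, vv l (f i) s) * g s) (mu L) := fun f =>
    hg.bdd_mul (c := 1) (vprod_cont c.hl.continuous f).aestronglyMeasurable (Eventually.of_forall (vprod_bd l f))
  have e : (fun p : ℝ × ℝ => kk l p.1 p.2 ^ n * (g p.1 * g p.2)) = fun p => ∑ f : Fin n → Fin 4,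
      ((∏ i, vv l (f i) p.1) * g p.1) * ((∏ i, vv l (f i) p.2) * g p.2) := by
    funext p
    rw [kk_pow, Finset.sum_mul]
    exact Finset.sum_congr rfl fun f _ => by ring
  have h2 : ∀ f : Fin n → Fin 4, Integrable (fun p : ℝ × ℝ => ((∏ i, vv l (f i) p.1) * g p.1) * ((∏ i, vv l (f i) p.2) * g p.2)) ((mu L).prod (mu L)) :=
    fun f => (hi f).mul_prod (hi f)
  rw [e]
  refine ⟨integrable_finsetSum _ fun f _ => h2 f, ?_⟩
  rw [integral_finsetSum _ fun f _ => h2 f]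
  refine Finset.sum_congr rfl fun f _ => ?_
  rw [integral_prod_mul (fun s => (∏ i, vv l (f i) s) * g s) (fun s => (∏ i, vv l (f i) s) * g s), sq]

theorem moments_zero {L : ℝ} {l : ℝ → ℂ} (c : Crv L l) {g : ℝ → ℝ} (hg : MemLp g 2 (mu L))
    (h0 : ∫ x, g x ∂(mu L) = 0)
    (hE : ∫ p : ℝ × ℝ, GG l p.1 p.2 * (g p.1 * g p.2) ∂((mu L).prod (mu L)) = 0) (n : ℕ) (f : Fin n → Fin 4) :
    ∫ s, (∏ i, vv l (f i) s) * g s ∂(mu L) = 0 := by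
  have hg1 : Integrable g (mu L) := hg.integrable (by norm_num)
  have hlc := c.hl.continuous
  rcases Nat.eq_zero_or_pos n with hn | hn
  · subst hn; simpa using h0
  set m : ℕ → ℝ := fun n => ∑ f : Fin n → Fin 4, (∫ s, (∏ i, vv l (f i) s) * g s ∂(mu L)) ^ 2 with hm
  have hm0 : ∀ n, 0 ≤ m n := fun n => Finset.sum_nonneg fun f _ => sq_nonneg _
  set a : ℝ → ℝ := fun s => Real.log (1 + ‖l s‖ ^ 2) with ha
  have hac : Continuous a := (by fun_prop : Continuous fun s => 1 + ‖l s‖ ^ 2).log fun s => by positivity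
  obtain ⟨B, hB⟩ := per_bdd c.hL hac (fun s => by simp only [ha, c.hper])
  have hag : Integrable (fun s => a s * g s) (mu L) := hg1.bdd_mul (c := B) hac.aestronglyMeasurable (Eventually.of_forall hB)
  have hGi := GGgg_int c hg
  have i1 := hag.mul_prod hg1
  have i2 := hg1.mul_prod hag
  set F : ℝ × ℝ → ℝ := fun p => -Real.log (1 - kk l p.1 p.2) * (g p.1 * g p.2) with hF
  have hae : F =ᵐ[(mu L).prod (mu L)] fun p => -2 * (GG l p.1 p.2 * (g p.1 * g p.2)) + (a p.1 * g p.1) * g p.2 + g p.1 * (a p.2 * g p.2) := by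
    filter_upwards [diag_null c] with p hp
    simp only [hF, ha]
    rw [GG_kk l _ _ hp]; ring
  have hFi : Integrable F ((mu L).prod (mu L)) := (((hGi.const_mul (-2)).add i1).add i2).congr hae.symm
  have hF0 : ∫ p, F p ∂((mu L).prod (mu L)) = 0 := by
    have i3 : Integrable (fun p : ℝ × ℝ => -2 * (GG l p.1 p.2 * (g p.1 * g p.2)) + (a p.1 * g p.1) * g p.2) ((mu L).prod (mu L)) :=
      (hGi.const_mul (-2)).add i1
    rw [integral_congr_ae hae, integral_add i3 i2, integral_add (hGi.const_mul (-2)) i1,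
      integral_const_mul, hE, integral_prod_mul (fun s => a s * g s) g, integral_prod_mul g (fun s => a s * g s), h0]
    ring
  set S : ℕ → ℝ × ℝ → ℝ := fun N p => ∑ j ∈ Finset.range N, (((j:ℝ) + 1)⁻¹ * (kk l p.1 p.2 ^ (j + 1) * (g p.1 * g p.2))) with hS
  have hSi : ∀ N, ∫ p, S N p ∂((mu L).prod (mu L)) = ∑ j ∈ Finset.range N, ((j:ℝ) + 1)⁻¹ * m (j + 1) := by
    intro N
    simp only [hS]
    rw [integral_finsetSum _ fun j _ => (moment_int c hg1 (j + 1)).1.const_mul _]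
    refine Finset.sum_congr rfl fun j _ => ?_
    rw [integral_const_mul, (moment_int c hg1 (j + 1)).2]
  have hlog : ∀ p : ℝ × ℝ, l p.1 ≠ l p.2 → HasSum (fun j : ℕ => kk l p.1 p.2 ^ (j + 1) / ((j:ℝ) + 1)) (-Real.log (1 - kk l p.1 p.2)) := by
    intro p hp
    refine Real.hasSum_pow_div_log_of_abs_lt_one ?_
    rw [abs_of_nonneg (kk_nonneg _ _ _)]
    have h1 := kk_eq l p.1 p.2
    have h4 : 0 < ‖l p.1 - l p.2‖ := norm_pos_iff.2 (sub_ne_zero.2 hp)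
    have : 0 < ‖l p.1 - l p.2‖ ^ 2 / ((1 + ‖l p.1‖ ^ 2) * (1 + ‖l p.2‖ ^ 2)) := by positivity
    linarith
  have hSe : ∀ N p, S N p = (∑ j ∈ Finset.range N, kk l p.1 p.2 ^ (j + 1) / ((j:ℝ) + 1)) * (g p.1 * g p.2) := by
    intro N p
    simp only [hS]
    rw [Finset.sum_mul]
    exact Finset.sum_congr rfl fun j _ => by rw [div_eq_inv_mul]; ring
  have hlim : Tendsto (fun N => ∫ p, S N p ∂((mu L).prod (mu L))) atTop (𝓝 (∫ p, F p ∂((mu L).prod (mu L)))) := by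
    refine tendsto_integral_of_dominated_convergence (fun p => ‖F p‖) (fun N => ?_) hFi.norm (fun N => ?_) ?_
    · exact (integrable_finsetSum _ fun j _ => (moment_int c hg1 (j + 1)).1.const_mul _).aestronglyMeasurable
    · filter_upwards [diag_null c] with p hp
      rw [hSe, hF]
      simp only
      rw [norm_mul, norm_mul (-Real.log (1 - kk l p.1 p.2))]
      refine mul_le_mul_of_nonneg_right ?_ (norm_nonneg _)
      have hn0 : ∀ j : ℕ, 0 ≤ kk l p.1 p.2 ^ (j + 1) / ((j:ℝ) + 1) := fun j => by
        have := kk_nonneg l p.1 p.2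
        positivity
      have h2 := sum_le_hasSum (Finset.range N) (fun j _ => hn0 j) (hlog p hp)
      have h3 := Finset.sum_nonneg (s := Finset.range N) fun j _ => hn0 j
      rw [Real.norm_of_nonneg h3]
      exact h2.trans (le_abs_self _)
    · filter_upwards [diag_null c] with p hp
      simp only [hSe]
      exact (hlog p hp).tendsto_sum_nat.mul_const _
  simp only [hSi, hF0] at hlim
  have hmn : m n = 0 := by
    obtain ⟨k, rfl⟩ : ∃ k, n = k + 1 := ⟨n - 1, by omega⟩
    have hle : ((k:ℝ) + 1)⁻¹ * m (k + 1) ≤ 0 := by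
      refine ge_of_tendsto hlim ?_
      filter_upwards [eventually_gt_atTop k] with N hN
      exact Finset.single_le_sum (f := fun j : ℕ => ((j:ℝ) + 1)⁻¹ * m (j + 1)) (fun j _ => mul_nonneg (by positivity) (hm0 _)) (Finset.mem_range.2 hN)
    have hp : 0 < ((k:ℝ) + 1)⁻¹ := by positivity
    have := hm0 (k + 1)
    nlinarith
  have := (Finset.sum_eq_zero_iff_of_nonneg (fun f _ => sq_nonneg _)).1 hmn f (Finset.mem_univ f)
  exact pow_eq_zero_iff (two_ne_zero) |>.1 this

/-- lift of a periodic function to the circle -/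
noncomputable def lft {L : ℝ} {ψ : ℝ → ℝ} (hψ : Continuous ψ) (hp : ∀ x, ψ (x + L) = ψ x) : C(AddCircle L, ℝ) :=
  ⟨(show Function.Periodic ψ L from hp).lift, continuous_coinduced_dom.2 hψ⟩

theorem lft_coe {L : ℝ} {ψ : ℝ → ℝ} (hψ : Continuous ψ) (hp : ∀ x, ψ (x + L) = ψ x) (x : ℝ) : lft hψ hp (x : AddCircle L) = ψ x := rfl

theorem dens {L : ℝ} {l : ℝ → ℂ} (c : Crv L l) {g : ℝ → ℝ} (hg : Integrable g (mu L))
    (h0 : ∀ (n : ℕ) (f : Fin n → Fin 4), ∫ s, (∏ i, vv l (f i) s) * g s ∂(mu L) = 0)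
    {ψ : ℝ → ℝ} (hψ : Continuous ψ) (hp : ∀ x, ψ (x + L) = ψ x) : ∫ s, ψ s * g s ∂(mu L) = 0 := by
  have hLf : Fact (0 < L) := ⟨c.hL⟩
  have hvp : ∀ a s, vv l a (s + L) = vv l a s := fun a s => by simp only [vv, c.hper]
  set V : Fin 4 → C(AddCircle L, ℝ) := fun a => lft (vv_cont c.hl.continuous a) (hvp a) with hV
  have hcoe : Continuous (fun x : ℝ => (x : AddCircle L)) := AddCircle.continuous_mk' L
  have hFi : ∀ F : C(AddCircle L, ℝ), Integrable (fun s : ℝ => F (s : AddCircle L) * g s) (mu L) := fun F =>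
    hg.bdd_mul (c := ‖F‖) (F.continuous.comp hcoe).aestronglyMeasurable (Eventually.of_forall fun x => F.norm_coe_le_norm _)
  let Λ : C(AddCircle L, ℝ) →ₗ[ℝ] ℝ :=
    { toFun := fun F => ∫ s : ℝ, F (s : AddCircle L) * g s ∂(mu L)
      map_add' := fun F G => by
        rw [← integral_add (hFi F) (hFi G)]
        congr 1; funext s; simp only [ContinuousMap.add_apply]; ring
      map_smul' := fun r F => by
        rw [RingHom.id_apply, smul_eq_mul, ← integral_const_mul]
        congr 1; funext s; simp only [ContinuousMap.smul_apply, smul_eq_mul]; ring }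
  have hΛc : Continuous Λ := by
    refine AddMonoidHomClass.continuous_of_bound Λ (∫ s, ‖g s‖ ∂(mu L)) fun F => ?_
    refine (norm_integral_le_integral_norm _).trans ?_
    rw [← integral_mul_const]
    refine integral_mono (hFi F).norm (hg.norm.mul_const _) fun s => ?_
    simp only [norm_mul]
    rw [mul_comm]
    exact mul_le_mul_of_nonneg_left (F.norm_coe_le_norm _) (norm_nonneg _)
  set A : Subalgebra ℝ C(AddCircle L, ℝ) := Algebra.adjoin ℝ (Set.range V) with hA
  have hAz : ∀ F ∈ A, Λ F = 0 := by
    intro F hF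
    have hF' : F ∈ Submodule.span ℝ (Submonoid.closure (Set.range V) : Set C(AddCircle L, ℝ)) := by
      rw [← Algebra.adjoin_eq_span]; exact hF
    induction hF' using Submodule.span_induction with
    | mem x hx =>
      obtain ⟨lst, h1, h2⟩ := Submonoid.exists_list_of_mem_closure hx
      have h3 : ∀ i : Fin lst.length, ∃ a, V a = lst.get i := fun i => h1 _ (lst.get_mem i)
      choose f hf using h3
      have h4 : x = ∏ i, V (f i) := by
        rw [← h2]
        simp only [hf]
        rw [← List.prod_ofFn, List.ofFn_get]
      have h5 := h0 _ f
      change ∫ s : ℝ, x (s : AddCircle L) * g s ∂(mu L) = 0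
      rw [← h5]
      congr 1; funext s
      rw [h4, ContinuousMap.prod_apply]
      rfl
    | zero => exact map_zero Λ
    | add x y hx hy h1 h2 =>
      have a1 : x ∈ A := by rw [hA, ← Subalgebra.mem_toSubmodule, Algebra.adjoin_eq_span]; exact hx
      have a2 : y ∈ A := by rw [hA, ← Subalgebra.mem_toSubmodule, Algebra.adjoin_eq_span]; exact hy
      rw [map_add, h1 a1, h2 a2, add_zero]
    | smul r x hx h1 =>
      have a1 : x ∈ A := by rw [hA, ← Subalgebra.mem_toSubmodule, Algebra.adjoin_eq_span]; exact hx
      rw [map_smul, h1 a1, smul_zero]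
  have hsep : A.SeparatesPoints := by
    intro x y hxy
    by_contra hno
    push Not at hno
    have hVe : ∀ a, V a x = V a y := fun a => hno (V a) ⟨V a, Algebra.subset_adjoin ⟨a, rfl⟩, rfl⟩
    apply hxy
    obtain ⟨s, hs, rfl⟩ : ∃ s : ℝ, s ∈ Set.Ico 0 L ∧ (s : AddCircle L) = x := by
      have := AddCircle.coe_image_Ico_eq L 0
      have hx : x ∈ ((fun x : ℝ => (x : AddCircle L)) '' Set.Ico 0 (0 + L)) := by rw [this]; trivial
      rw [zero_add] at hx; exact hx
    obtain ⟨t, ht, rfl⟩ : ∃ s : ℝ, s ∈ Set.Ico 0 L ∧ (s : AddCircle L) = y := by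
      have := AddCircle.coe_image_Ico_eq L 0
      have hx : y ∈ ((fun x : ℝ => (x : AddCircle L)) '' Set.Ico 0 (0 + L)) := by rw [this]; trivial
      rw [zero_add] at hx; exact hx
    have e0 : vv l 0 s = vv l 0 t := hVe 0
    have e2 : vv l 2 s = vv l 2 t := hVe 2
    have e3 : vv l 3 s = vv l 3 t := hVe 3
    simp only [vv, Matrix.cons_val] at e0 e2 e3
    have p1 : (0:ℝ) < (1 + ‖l s‖ ^ 2) := by positivity
    have p2 : (0:ℝ) < (1 + ‖l t‖ ^ 2) := by positivity
    have p3 : (0:ℝ) < √2 := by positivity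
    have e4 : 1 + ‖l s‖ ^ 2 = 1 + ‖l t‖ ^ 2 := by
      rw [one_div, one_div] at e0; exact inv_injective e0
    rw [e4, div_left_inj' p2.ne'] at e2 e3
    have := c.hinj hs ht (Complex.ext (mul_left_cancel₀ p3.ne' e2) (mul_left_cancel₀ p3.ne' e3))
    rw [this]
  have hd := ContinuousMap.subalgebra_topologicalClosure_eq_top_of_separatesPoints A hsep
  have hmem : lft hψ hp ∈ A.topologicalClosure := by rw [hd]; trivial
  have hcl : IsClosed {F | Λ F = 0} := isClosed_eq hΛc continuous_const
  have : lft hψ hp ∈ {F | Λ F = 0} := by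
    have h1 : closure (A : Set C(AddCircle L, ℝ)) ⊆ {F | Λ F = 0} := closure_minimal hAz hcl
    apply h1
    rw [← Subalgebra.topologicalClosure_coe]; exact hmem
  exact this

theorem uniqueness {L : ℝ} {l : ℝ → ℂ} (c : Crv L l) {g : ℝ → ℝ} (hg : MemLp g 2 (mu L))
    (h0 : ∫ x, g x ∂(mu L) = 0)
    (hT : ∀ φ : ℝ → ℝ, ContDiff ℝ (⊤ : ℕ∞) φ → (∀ x, φ (x + L) = φ x) → ∫ x, g x * Tp L l φ x ∂(mu L) = 0)
    {ψ : ℝ → ℝ} (hψ : Continuous ψ) (hp : ∀ x, ψ (x + L) = ψ x) : ∫ s, ψ s * g s ∂(mu L) = 0 :=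
  dens c (hg.integrable (by norm_num)) (moments_zero c hg h0 (energy_zero c hg h0 hT)) hψ hp

open Real MeasureTheory Filter Topology

theorem weak_cpt {H : Type*} [NormedAddCommGroup H] [InnerProductSpace ℝ H] [CompleteSpace H] (x : ℕ → H) (B : ℝ)
    (hB : ∀ n, ‖x n‖ ≤ B) (U : Ultrafilter ℕ) :
    ∃ y : H, ∀ z, Tendsto (fun n => inner ℝ (x n) z) U (𝓝 (inner ℝ y z)) := by
  set f : ℕ → WeakDual ℝ H := fun n => StrongDual.toWeakDual (InnerProductSpace.toDual ℝ H (x n)) with hf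
  have hK := WeakDual.isCompact_closedBall (𝕜 := ℝ) (E := H) 0 B
  obtain ⟨w, _, hw⟩ := hK.ultrafilter_le_nhds (U.map f) (by
    rw [le_principal_iff]
    refine Filter.mem_map.2 (Filter.univ_mem' fun n => ?_)
    simp only [Set.mem_preimage, Metric.mem_closedBall, dist_zero_right]
    change ‖InnerProductSpace.toDual ℝ H (x n)‖ ≤ B
    rw [LinearIsometryEquiv.norm_map]; exact hB n)
  refine ⟨(InnerProductSpace.toDual ℝ H).symm (WeakDual.toStrongDual w), fun z => ?_⟩
  rw [InnerProductSpace.toDual_symm_apply]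
  have h1 : Tendsto f U (𝓝 w) := hw
  exact ((WeakDual.eval_continuous z).tendsto w).comp h1

theorem weak_lim {μ : Measure ℝ} (Γ : ℕ → ℝ → ℝ) (hΓ : ∀ n, MemLp (Γ n) 2 μ) (B : ℝ)
    (hB : ∀ n, ∫ x, Γ n x ^ 2 ∂μ ≤ B) (U : Ultrafilter ℕ) :
    ∃ g : ℝ → ℝ, MemLp g 2 μ ∧ ∀ ψ, MemLp ψ 2 μ → Tendsto (fun n => ∫ x, ψ x * Γ n x ∂μ) U (𝓝 (∫ x, ψ x * g x ∂μ)) := by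
  have hin : ∀ (g ψ : Lp ℝ 2 μ), inner ℝ g ψ = ∫ x, ψ x * g x ∂μ := fun g ψ => by
    rw [L2.inner_def]; rfl
  obtain ⟨y, hy⟩ := weak_cpt (fun n => (hΓ n).toLp) (√B) (fun n => by
    refine Real.le_sqrt_of_sq_le (le_trans (le_of_eq ?_) (hB n))
    rw [← real_inner_self_eq_norm_sq, hin]
    refine integral_congr_ae ?_
    filter_upwards [(hΓ n).coeFn_toLp] with x hx
    rw [hx, sq]) U
  refine ⟨y, Lp.memLp y, fun ψ hψ => ?_⟩
  have h1 := hy hψ.toLp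
  have e1 : inner ℝ y hψ.toLp = ∫ x, ψ x * y x ∂μ := by
    rw [hin]; refine integral_congr_ae ?_
    filter_upwards [hψ.coeFn_toLp] with x hx
    rw [hx]
  have e2 : ∀ n, inner ℝ (hΓ n).toLp hψ.toLp = ∫ x, ψ x * Γ n x ∂μ := fun n => by
    rw [hin]; refine integral_congr_ae ?_
    filter_upwards [hψ.coeFn_toLp, (hΓ n).coeFn_toLp] with x hx hx'
    rw [hx, hx']
  simp only [e1, e2] at h1
  exact h1

/-- piecewise constant function -/
noncomputable def pc (L : ℝ) {N : ℕ} (γ : Fin N → ℝ) (x : ℝ) : ℝ :=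
  if h : ⌈x * N / L⌉₊ - 1 < N then γ ⟨⌈x * N / L⌉₊ - 1, h⟩ else 0

theorem pc_meas (L : ℝ) {N : ℕ} (γ : Fin N → ℝ) : Measurable (pc L γ) := by
  have h1 : Measurable fun x : ℝ => ⌈x * N / L⌉₊ := Nat.measurable_ceil.comp (by fun_prop)
  exact (measurable_from_top (f := fun k : ℕ => if h : k - 1 < N then γ ⟨k - 1, h⟩ else 0)).comp h1

theorem pc_bd (L : ℝ) {N : ℕ} (γ : Fin N → ℝ) (x : ℝ) : ‖pc L γ x‖ ≤ ∑ j, |γ j| := by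
  unfold pc
  split_ifs with h
  · exact Finset.single_le_sum (f := fun j => |γ j|) (fun j _ => abs_nonneg _) (Finset.mem_univ _)
  · simpa using Finset.sum_nonneg fun j (_ : j ∈ Finset.univ) => abs_nonneg (γ j)

theorem pc_cell {L : ℝ} (hL : 0 < L) {N : ℕ} (γ : Fin N → ℝ) (j : Fin N) {x : ℝ}
    (h1 : (j : ℕ) * (L / N) < x) (h2 : x ≤ ((j : ℕ) + 1) * (L / N)) : pc L γ x = γ j := by
  have hN : (0:ℝ) < N := by exact_mod_cast (Nat.zero_lt_of_lt j.2)
  have e : ⌈x * N / L⌉₊ = (j:ℕ) + 1 := by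
    rw [Nat.ceil_eq_iff (by omega)]
    constructor
    · rw [lt_div_iff₀ hL]
      simp only [Nat.add_sub_cancel]
      rw [← div_lt_iff₀ hN]; rw [← mul_div_assoc] at h1; exact h1
    · rw [div_le_iff₀ hL]
      push_cast
      rw [← le_div_iff₀ hN]; rw [← mul_div_assoc] at h2; exact h2
  unfold pc
  simp only [e, Nat.add_sub_cancel]
  rw [dif_pos j.2]

theorem pc_memLp (L : ℝ) {N : ℕ} (γ : Fin N → ℝ) : MemLp (pc L γ) 2 (mu L) :=
  MemLp.of_bound (pc_meas L γ).aestronglyMeasurable _ (Eventually.of_forall (pc_bd L γ))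

theorem mu_cells {L : ℝ} (hL : 0 < L) {N : ℕ} (hN : 1 ≤ N) {F : ℝ → ℝ} (hF : Integrable F (mu L)) :
    ∫ x, F x ∂(mu L) = ∑ j : Fin N, ∫ x in ((j:ℕ) * (L / N))..(((j:ℕ) + 1) * (L / N)), F x := by
  have hN0 : (0:ℝ) < N := by exact_mod_cast hN
  have hI : IntervalIntegrable F volume 0 L := (intervalIntegrable_iff_integrableOn_Ioc_of_le hL.le).2 hF
  rw [integral_mu hL]
  have hNh : N * (L / N) = L := by field_simp
  have := intervalIntegral.sum_integral_adjacent_intervals (f := F) (μ := volume) (a := fun m : ℕ => m * (L / N)) (n := N)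
      (fun k hk => by
        refine hI.mono_set ?_
        rw [Set.uIcc_of_le hL.le, Set.uIcc_of_le (by push_cast; nlinarith [div_pos hL hN0])]
        refine Set.Icc_subset_Icc (by positivity) ?_
        have : ((k + 1 : ℕ) : ℝ) ≤ N := by exact_mod_cast hk
        calc _ ≤ (N:ℝ) * (L / N) := by gcongr
          _ = L := hNh)
  simp only [Nat.cast_zero, zero_mul, hNh] at this
  rw [← this, ← Fin.sum_univ_eq_sum_range (fun k : ℕ => ∫ x in (k * (L / N))..(((k + 1 : ℕ):ℝ) * (L / N)), F x)]
  push_cast; rfl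

theorem pc_sq {L : ℝ} (hL : 0 < L) {N : ℕ} (hN : 1 ≤ N) (γ : Fin N → ℝ) :
    ∫ x, pc L γ x ^ 2 ∂(mu L) = L / N * ∑ j, γ j ^ 2 := by
  rw [mu_cells hL hN (pc_memLp L γ).integrable_sq, Finset.mul_sum]
  have hN0 : (0:ℝ) < N := by exact_mod_cast hN
  refine Finset.sum_congr rfl fun j _ => ?_
  rw [intervalIntegral.integral_congr_ae (g := fun _ => γ j ^ 2) (Eventually.of_forall fun x hx => ?_)]
  · rw [intervalIntegral.integral_const, smul_eq_mul]; ring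
  · rw [Set.uIoc_of_le (by nlinarith [div_pos hL hN0])] at hx
    rw [pc_cell hL γ j hx.1 hx.2]

theorem pc_test {L : ℝ} {κ : ℕ} {M : ℝ} {ms mst : (N : ℕ) → Fin N → ℝ} (hL : 0 < L) (m : Msh L κ M ms mst) {N : ℕ} (hN : 2 ≤ N) (γ : Fin N → ℝ)
    {ψ : ℝ → ℝ} (hψ : Continuous ψ) {K : ℝ} (hK : ∀ x y, |ψ x - ψ y| ≤ K * |x - y|) :
    |∫ x, ψ x * pc L γ x ∂(mu L) - L / N * ∑ j, γ j * ψ (ms N j)| ≤ K * (L + M) / N * (L * ((N:ℝ)⁻¹ * ∑ j, |γ j|)) := by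
  have hN0 : (0:ℝ) < N := by exact_mod_cast (by omega : 0 < N)
  have hN1 : (1:ℝ) ≤ N := by exact_mod_cast (by omega : 1 ≤ N)
  have hK0 : 0 ≤ K := by have := (abs_nonneg _).trans (hK 1 0); simpa using this
  have hψi : Integrable ψ (mu L) := (intervalIntegrable_iff_integrableOn_Ioc_of_le hL.le).1 (hψ.intervalIntegrable 0 L)
  have hi : Integrable (fun x => ψ x * pc L γ x) (mu L) :=
    hψi.mul_bdd (c := ∑ j, |γ j|) (pc_meas L γ).aestronglyMeasurable (Eventually.of_forall (pc_bd L γ))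
  rw [mu_cells hL (by omega : 1 ≤ N) hi, Finset.mul_sum, ← Finset.sum_sub_distrib]
  refine (Finset.abs_sum_le_sum_abs _ _).trans ?_
  rw [Finset.mul_sum, Finset.mul_sum, Finset.mul_sum]
  refine Finset.sum_le_sum fun j _ => ?_
  have hlt : ((j:ℕ):ℝ) * (L / N) ≤ (((j:ℕ):ℝ) + 1) * (L / N) := by nlinarith [div_pos hL hN0]
  have e1 : ∫ x in ((j:ℕ) * (L / N))..(((j:ℕ) + 1) * (L / N)), ψ x * pc L γ x = ∫ x in ((j:ℕ) * (L / N))..(((j:ℕ) + 1) * (L / N)), ψ x * γ j := by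
    refine intervalIntegral.integral_congr_ae (Eventually.of_forall fun x hx => ?_)
    rw [Set.uIoc_of_le hlt] at hx
    rw [pc_cell hL γ j hx.1 hx.2]
  have e2 : L / N * (γ j * ψ (ms N j)) = ∫ x in ((j:ℕ) * (L / N))..(((j:ℕ) + 1) * (L / N)), ψ (ms N j) * γ j := by
    rw [intervalIntegral.integral_const, smul_eq_mul]; ring
  rw [e1, e2, ← intervalIntegral.integral_sub ((by fun_prop : Continuous fun x => ψ x * γ j).intervalIntegrable _ _) (by simp)]
  have key : ‖∫ x in ((j:ℕ) * (L / N))..(((j:ℕ) + 1) * (L / N)), (ψ x * γ j - ψ (ms N j) * γ j)‖ ≤ (K * ((L + M) / N) * |γ j|) * |((((j:ℕ):ℝ) + 1) * (L / N)) - ((j:ℕ) * (L / N))| := by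
    refine intervalIntegral.norm_integral_le_of_norm_le_const fun x hx => ?_
    rw [Set.uIoc_of_le hlt] at hx
    rw [← sub_mul, norm_mul, Real.norm_eq_abs, Real.norm_eq_abs]
    refine mul_le_mul_of_nonneg_right ((hK _ _).trans ?_) (abs_nonneg _)
    refine mul_le_mul_of_nonneg_left ?_ hK0
    have h1 := (m.hms N hN j).2
    have h2 : M / (N:ℝ) ^ (κ + 1) ≤ M / N := by
      have := m.hM
      gcongr
      exact le_self_pow₀ hN1 (by omega)
    have h3 := h1.trans h2
    rw [abs_le] at h3 ⊢
    have h4 : ((j:ℕ):ℝ) * L / N = ((j:ℕ):ℝ) * (L / N) := by ring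
    have h5 : (L + M) / N = L / N + M / N := by ring
    have h6 : 0 < M / N := div_pos m.hM hN0
    have h7 : 0 < L / N := div_pos hL hN0
    rw [h4] at h3
    rw [h5]
    constructor <;> nlinarith [hx.1, hx.2]
  rw [Real.norm_eq_abs] at key
  refine key.trans (le_of_eq ?_)
  have : |((((j:ℕ):ℝ) + 1) * (L / N)) - ((j:ℕ) * (L / N))| = L / N := by
    rw [show ((((j:ℕ):ℝ) + 1) * (L / N)) - ((j:ℕ) * (L / N)) = L / N by ring, abs_of_pos (div_pos hL hN0)]
  rw [this]
  field_simp

open Real MeasureTheory Filter Topology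

theorem cont_of_lip {ψ : ℝ → ℝ} {K : ℝ} (hK : ∀ x y, |ψ x - ψ y| ≤ K * |x - y|) : Continuous ψ := by
  have hK0 : 0 ≤ K := by have := (abs_nonneg _).trans (hK 1 0); simpa using this
  exact (LipschitzWith.of_dist_le_mul (K := ⟨K, hK0⟩) fun x y => by
    rw [Real.dist_eq, Real.dist_eq]; exact hK x y).continuous

theorem memLp_per {L : ℝ} (hL : 0 < L) {ψ : ℝ → ℝ} (hψ : Continuous ψ) (hp : ∀ x, ψ (x + L) = ψ x) : MemLp ψ 2 (mu L) := by
  obtain ⟨B, hB⟩ := per_bdd hL hψ hp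
  exact MemLp.of_bound hψ.aestronglyMeasurable B (Eventually.of_forall hB)

theorem slice_lip {L : ℝ} (hL : 0 < L) {F : ℝ × ℝ → ℝ} (hF : ContDiff ℝ (⊤ : ℕ∞) F)
    (h1 : ∀ s t, F (s + L, t) = F (s, t)) (h2 : ∀ s t, F (s, t + L) = F (s, t)) :
    ∃ K, 0 ≤ K ∧ ∀ s s' t, |F (s, t) - F (s', t)| ≤ K * |s - s'| := by
  obtain ⟨K, hK⟩ := slice_bd hL 1 hF h1 h2
  refine ⟨K, (norm_nonneg _).trans (hK 0 0), fun s s' t => ?_⟩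
  have hd : ContDiff ℝ (⊤ : ℕ∞) fun s => F (s, t) := hF.comp (by fun_prop)
  exact lip_of_deriv (w := fun s => F (s, t)) (hd.differentiable (by simp)) (fun x => by
    have := hK x t; rw [iteratedDeriv_one] at this; exact this) s s'

theorem slice_lip2 {L : ℝ} (hL : 0 < L) {F : ℝ × ℝ → ℝ} (hF : ContDiff ℝ (⊤ : ℕ∞) F)
    (h1 : ∀ s t, F (s + L, t) = F (s, t)) (h2 : ∀ s t, F (s, t + L) = F (s, t)) :
    ∃ K, 0 ≤ K ∧ ∀ t t' s, |F (s, t) - F (s, t')| ≤ K * |t - t'| :=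
  slice_lip hL (F := fun p => F (p.2, p.1)) (hF.comp (by fun_prop)) (fun s t => h2 t s) (fun s t => h1 t s)

theorem Tp_lip {L : ℝ} {l : ℝ → ℂ} (c : Crv L l) {φ : ℝ → ℝ}
    (hφ : ContDiff ℝ (⊤ : ℕ∞) φ) (hφp : ∀ s, φ (s + L) = φ s) : ∃ K, 0 ≤ K ∧ ∀ t t', |Tp L l φ t - Tp L l φ t'| ≤ K * |t - t'| := by
  obtain ⟨hL, hl, hper, harc, hinj⟩ := c
  have hw := ww_smooth hL hl hper harc hinj hφ hφp
  have hc := hw.continuous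
  obtain ⟨K, hK0, hK⟩ := slice_lip2 hL hw (ww_per1 hL hper hφp) (ww_per2 hL hper hφp)
  refine ⟨K * L, by positivity, fun t t' => ?_⟩
  rw [Tp, Tp, ← intervalIntegral.integral_sub ((by fun_prop : Continuous fun s => ww L l φ (s, t)).intervalIntegrable _ _)
    ((by fun_prop : Continuous fun s => ww L l φ (s, t')).intervalIntegrable _ _), ← Real.norm_eq_abs]
  have := intervalIntegral.norm_integral_le_of_norm_le_const (a := 0) (b := L) (f := fun s => ww L l φ (s, t) - ww L l φ (s, t'))
    (C := K * |t - t'|) (fun x _ => hK t t' x)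
  refine this.trans (le_of_eq ?_)
  rw [sub_zero, abs_of_pos hL]; ring

theorem Tp_per {L : ℝ} {l : ℝ → ℂ} (c : Crv L l) {φ : ℝ → ℝ}
    (hφp : ∀ s, φ (s + L) = φ s) (t : ℝ) : Tp L l φ (t + L) = Tp L l φ t := by
  rw [Tp, Tp]
  congr 1; funext s
  rw [ww_per2 c.hL c.hper hφp]

theorem mean_abs_le {N : ℕ} (γ : Fin N → ℝ) : (N:ℝ)⁻¹ * ∑ j, |γ j| ≤ √((N:ℝ)⁻¹ * ∑ j, γ j ^ 2) := by
  refine Real.le_sqrt_of_sq_le ?_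
  rcases Nat.eq_zero_or_pos N with h | h
  · subst h; simp
  have hN : (0:ℝ) < N := by exact_mod_cast h
  have := sq_sum_le_card_mul_sum_sq (s := Finset.univ) (f := fun j => |γ j|)
  simp only [sq_abs, Finset.card_univ, Fintype.card_fin] at this
  rw [mul_pow, inv_pow]
  calc ((N:ℝ) ^ 2)⁻¹ * (∑ j, |γ j|) ^ 2 ≤ ((N:ℝ) ^ 2)⁻¹ * (N * ∑ j, γ j ^ 2) := by gcongr
    _ = _ := by field_simp

noncomputable def aa (l : ℝ → ℂ) (ms mst : (N : ℕ) → Fin N → ℝ) {N : ℕ} (γ : Fin N → ℝ) (i : Fin N) : ℝ :=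
  (N:ℝ)⁻¹ * ∑ j, γ j * KK l (mst N i) (ms N j)

/-- discrete adjoint identity -/
theorem T_disc {L : ℝ} {l : ℝ → ℂ} (c : Crv L l) {κ : ℕ} {M : ℝ} {ms mst : (N : ℕ) → Fin N → ℝ} (m : Msh L κ M ms mst) :
    ∃ C > 0, ∃ N₀ : ℕ, 2 ≤ N₀ ∧ ∀ N, N₀ ≤ N → ∀ φ : ℝ → ℝ, ContDiff ℝ (⊤ : ℕ∞) φ → (∀ s, φ (s + L) = φ s) → ∀ γ : Fin N → ℝ,
      |(N:ℝ)⁻¹ * ∑ j, γ j * Tp L l φ (ms N j) - L / N * ∑ i, aa l ms mst γ i * φ (mst N i)| ≤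
        C / (N:ℝ) ^ κ * Cnorm (κ + 1) φ * ((N:ℝ)⁻¹ * ∑ j, |γ j|) := by
  obtain ⟨C, hC, N₀, hN₀, h⟩ := T_quad c m
  refine ⟨C, hC, N₀, hN₀, fun N hN φ hφ hφp γ => ?_⟩
  have h1 := h N hN φ hφ hφp (Cnorm (κ + 1) φ) (fun i hi x => le_Cnorm c.hL (hφ.of_le (by exact_mod_cast le_top)) hφp hi x)
  have e : L / N * ∑ i, aa l ms mst γ i * φ (mst N i) = (N:ℝ)⁻¹ * ∑ j, γ j * (L / N * ∑ i, KK l (mst N i) (ms N j) * φ (mst N i)) := by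
    simp only [aa, Finset.mul_sum, Finset.sum_mul]
    rw [Finset.sum_comm]
    refine Finset.sum_congr rfl fun j _ => Finset.sum_congr rfl fun i _ => ?_
    ring
  have hN0 : (0:ℝ) ≤ (N:ℝ)⁻¹ := by positivity
  rw [e, ← mul_sub, ← Finset.sum_sub_distrib, abs_mul, abs_of_nonneg hN0, mul_left_comm]
  refine mul_le_mul_of_nonneg_left ?_ hN0
  rw [Finset.mul_sum]
  refine (Finset.abs_sum_le_sum_abs _ _).trans (Finset.sum_le_sum fun j _ => ?_)
  rw [← mul_sub, abs_mul, mul_comm]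
  exact mul_le_mul_of_nonneg_right (h1 j) (abs_nonneg _)

/-- decomposition of the discrete operator -/
theorem aa_decomp {L : ℝ} {l : ℝ → ℂ} (c : Crv L l) {κ : ℕ} {M : ℝ} {ms mst : (N : ℕ) → Fin N → ℝ} (m : Msh L κ M ms mst) :
    ∃ C > 0, ∃ N₀ : ℕ, 2 ≤ N₀ ∧ ∀ N, N₀ ≤ N → ∀ γ : Fin N → ℝ, ∀ i,
      |aa l ms mst γ i - π / L * ((N:ℝ)⁻¹ * ∑ j : Fin N, qq N (((i:ℕ):ℤ) - ((j:ℕ):ℤ)) * γ j) - (N:ℝ)⁻¹ * ∑ j, γ j * RR L l (mst N i, ms N j)|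
        ≤ C / N * ((N:ℝ)⁻¹ * ∑ j, |γ j|) := by
  obtain ⟨C, hC, N₀, hN₀, h⟩ := node_pert c.hL m
  refine ⟨C, hC, N₀, hN₀, fun N hN γ i => ?_⟩
  have hN1 : (1:ℝ) ≤ N := by exact_mod_cast (by omega : 1 ≤ N)
  have e : aa l ms mst γ i - π / L * ((N:ℝ)⁻¹ * ∑ j : Fin N, qq N (((i:ℕ):ℤ) - ((j:ℕ):ℤ)) * γ j) - (N:ℝ)⁻¹ * ∑ j, γ j * RR L l (mst N i, ms N j)
      = (N:ℝ)⁻¹ * ∑ j, γ j * (cc L (mst N i - ms N j) - π / L * qq N (((i:ℕ):ℤ) - ((j:ℕ):ℤ))) := by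
    simp only [aa, Finset.mul_sum]
    rw [← Finset.sum_sub_distrib, ← Finset.sum_sub_distrib]
    refine Finset.sum_congr rfl fun j _ => ?_
    rw [KK_eq c.hL c.hl c.hper c.harc c.hinj (h N hN i j).1]; ring
  have hN0 : (0:ℝ) ≤ (N:ℝ)⁻¹ := by positivity
  rw [e, abs_mul, abs_of_nonneg hN0, mul_left_comm]
  refine mul_le_mul_of_nonneg_left ?_ hN0
  rw [Finset.mul_sum]
  refine (Finset.abs_sum_le_sum_abs _ _).trans (Finset.sum_le_sum fun j _ => ?_)
  rw [abs_mul, mul_comm]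
  refine mul_le_mul_of_nonneg_right ?_ (abs_nonneg _)
  refine (h N hN i j).2.trans ?_
  calc C / (N:ℝ) ^ (κ + 1) * (1 + qq N (((i:ℕ):ℤ) - ((j:ℕ):ℤ)) ^ 2) ≤ C / (N:ℝ) ^ 3 * (N:ℝ) ^ 2 := by
        gcongr
        · have := m.hκ; omega
        · exact qq_le (by omega) i j
    _ = C / N := by field_simp

open Real MeasureTheory Filter Topology

theorem stab_norm {L : ℝ} {l : ℝ → ℂ} (c : Crv L l) {κ : ℕ} {M : ℝ} {ms mst : (N : ℕ) → Fin N → ℝ} (m : Msh L κ M ms mst) :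
    ∃ δ > 0, ∃ N₀ : ℕ, ∀ N, N₀ ≤ N → ∀ γ : Fin N → ℝ, (N:ℝ)⁻¹ * ∑ j, γ j ^ 2 = 1 →
      δ ≤ (N:ℝ)⁻¹ * ∑ i, aa l ms mst γ i ^ 2 + ((N:ℝ)⁻¹ * ∑ j, γ j) ^ 2 := by
  by_contra hcon
  push Not at hcon
  have hL := c.hL
  obtain ⟨C1, hC1, N₁, hN₁, hT⟩ := T_disc c m
  obtain ⟨C2, hC2, N₂, hN₂, hA⟩ := aa_decomp c m
  choose N hN γ hγ1 hγ2 using fun n : ℕ => hcon (1 / ((n:ℝ) + 1)) (by positivity) (n + N₁ + N₂)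
  have hR := RR_smooth hL c.hl c.hper c.harc c.hinj
  obtain ⟨K1, hK10, hK1⟩ := slice_lip hL hR (RR_per1 hL c.hper) (RR_per2 hL c.hper)
  obtain ⟨K2, hK20, hK2⟩ := slice_lip2 hL hR (RR_per1 hL c.hper) (RR_per2 hL c.hper)
  set U : Ultrafilter ℕ := hyperfilter ℕ with hU
  have hUle : (U : Filter ℕ) ≤ atTop := Nat.hyperfilter_le_atTop
  have hN2 : ∀ n, 2 ≤ N n := fun n => by have := hN n; omega
  have hN0 : ∀ n, (0:ℝ) < N n := fun n => by have := hN2 n; exact_mod_cast (by omega : 0 < N n)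
  have hN1 : ∀ n, (1:ℝ) ≤ N n := fun n => by have := hN2 n; exact_mod_cast (by omega : 1 ≤ N n)
  -- basic limits
  have hlimN : Tendsto (fun n => ((N n : ℝ))⁻¹) U (𝓝 0) := by
    refine Tendsto.mono_left ?_ hUle
    refine tendsto_inv_atTop_zero.comp (tendsto_natCast_atTop_atTop.comp ?_)
    exact tendsto_atTop_mono (fun n => show n ≤ N n by have := hN n; omega) tendsto_id
  set e : ℕ → ℝ := fun n => ((N n:ℝ))⁻¹ * ∑ i, aa l ms mst (γ n) i ^ 2 + ((N n:ℝ)⁻¹ * ∑ j, γ n j) ^ 2 with he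
  have ha0 : ∀ n, 0 ≤ ((N n:ℝ))⁻¹ * ∑ i, aa l ms mst (γ n) i ^ 2 := fun n =>
    mul_nonneg (by positivity) (Finset.sum_nonneg fun i _ => sq_nonneg _)
  have he0 : ∀ n, 0 ≤ e n := fun n => add_nonneg (ha0 n) (sq_nonneg _)
  have hlime : Tendsto e U (𝓝 0) := by
    refine Tendsto.mono_left ?_ hUle
    exact squeeze_zero he0 (fun n => (hγ2 n).le) tendsto_one_div_add_atTop_nhds_zero_nat
  set q : ℕ → ℝ := fun n => √(e n) with hq
  have hlimq : Tendsto q U (𝓝 0) := by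
    have := (Real.continuous_sqrt.tendsto 0).comp hlime
    rwa [Real.sqrt_zero] at this
  have hmean : ∀ n, |(N n:ℝ)⁻¹ * ∑ j, γ n j| ≤ q n := fun n => by
    rw [← Real.sqrt_sq_eq_abs]
    exact Real.sqrt_le_sqrt (by simp only [he]; linarith [ha0 n])
  have haq : ∀ n, (N n:ℝ)⁻¹ * ∑ i, |aa l ms mst (γ n) i| ≤ q n := fun n =>
    (mean_abs_le _).trans (Real.sqrt_le_sqrt (by simp only [he]; linarith [sq_nonneg ((N n:ℝ)⁻¹ * ∑ j, γ n j)]))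
  have hγa : ∀ n, (N n:ℝ)⁻¹ * ∑ j, |γ n j| ≤ 1 := fun n => by
    have := mean_abs_le (γ n)
    rwa [hγ1, Real.sqrt_one] at this
  have hγa0 : ∀ n, 0 ≤ (N n:ℝ)⁻¹ * ∑ j, |γ n j| := fun n => mul_nonneg (by positivity) (Finset.sum_nonneg fun i _ => abs_nonneg _)
  -- weak limit
  obtain ⟨g, hg, hw⟩ := weak_lim (fun n => pc L (γ n)) (fun n => pc_memLp L _) L (fun n => by
    rw [pc_sq hL (by have := hN2 n; omega)]
    have := hγ1 n
    rw [div_eq_mul_inv, mul_assoc, this, mul_one]) U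
  have htest : ∀ ψ : ℝ → ℝ, (∀ x, ψ (x + L) = ψ x) → ∀ K, (∀ x y, |ψ x - ψ y| ≤ K * |x - y|) →
      Tendsto (fun n => L / N n * ∑ j, γ n j * ψ (ms (N n) j)) U (𝓝 (∫ x, ψ x * g x ∂(mu L))) := by
    intro ψ hp K hK
    have hc := cont_of_lip hK
    have hK0 : 0 ≤ K := by have := (abs_nonneg _).trans (hK 1 0); simpa using this
    have h1 := hw ψ (memLp_per hL hc hp)
    have h2 : Tendsto (fun n => ∫ x, ψ x * pc L (γ n) x ∂(mu L) - L / N n * ∑ j, γ n j * ψ (ms (N n) j)) U (𝓝 0) := by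
      refine squeeze_zero_norm (a := fun n => (K * (L + M) * L) * ((N n:ℝ))⁻¹) (fun n => ?_) (by simpa using hlimN.const_mul (K * (L + M) * L))
      refine (pc_test hL m (hN2 n) (γ n) hc hK).trans ?_
      have hM := m.hM
      have hp0 : 0 ≤ K * (L + M) / N n := div_nonneg (by positivity) (hN0 n).le
      calc _ ≤ K * (L + M) / N n * (L * 1) := by gcongr; exact hγa n
        _ = _ := by ring
    have h3 := h1.sub h2
    simpa using h3
  have hg0 : ∫ x, g x ∂(mu L) = 0 := by
    have h1 := htest (fun _ => 1) (fun _ => rfl) 0 (fun x y => by simp)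
    simp only [mul_one, one_mul] at h1
    refine tendsto_nhds_unique h1 ?_
    refine squeeze_zero_norm (a := fun n => L * q n) (fun n => ?_) (by simpa using hlimq.const_mul L)
    rw [div_eq_mul_inv, mul_assoc, norm_mul, Real.norm_of_nonneg hL.le]
    exact mul_le_mul_of_nonneg_left (hmean n) hL.le
  have hgT : ∀ φ : ℝ → ℝ, ContDiff ℝ (⊤ : ℕ∞) φ → (∀ x, φ (x + L) = φ x) → ∫ x, g x * Tp L l φ x ∂(mu L) = 0 := by
    intro φ hφ hφp
    obtain ⟨K, hK0, hK⟩ := Tp_lip c hφ hφp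
    have h1 := htest (Tp L l φ) (Tp_per c hφp) K hK
    have h2 : ∫ x, Tp L l φ x * g x ∂(mu L) = 0 := by
      refine tendsto_nhds_unique h1 ?_
      set B := Cnorm (κ + 1) φ with hB
      have hB0 : 0 ≤ B := Cnorm_nonneg _ _
      have hφB : ∀ x, |φ x| ≤ B := fun x => by
        have := le_Cnorm c.hL (m := κ + 1) (hφ.of_le (by exact_mod_cast le_top)) hφp (Nat.zero_le (κ + 1)) x
        rwa [iteratedDeriv_zero] at this
      refine squeeze_zero_norm (a := fun n => L * (C1 * B) * ((N n:ℝ))⁻¹ + L * (L * B) * q n) (fun n => ?_)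
        (by simpa using (hlimN.const_mul (L * (C1 * B))).add (hlimq.const_mul (L * (L * B))))
      have h3 := hT (N n) (by have := hN n; omega) φ hφ hφp (γ n)
      have h4 : |L / N n * ∑ i, aa l ms mst (γ n) i * φ (mst (N n) i)| ≤ L * B * q n := by
        rw [div_eq_mul_inv, mul_assoc, abs_mul, abs_of_pos hL, abs_mul, abs_of_pos (inv_pos.2 (hN0 n))]
        have h5 : |∑ i, aa l ms mst (γ n) i * φ (mst (N n) i)| ≤ (∑ i, |aa l ms mst (γ n) i|) * B := by
          rw [Finset.sum_mul]
          refine (Finset.abs_sum_le_sum_abs _ _).trans (Finset.sum_le_sum fun i _ => ?_)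
          rw [abs_mul]
          exact mul_le_mul_of_nonneg_left (hφB _) (abs_nonneg _)
        calc L * ((N n:ℝ)⁻¹ * |∑ i, aa l ms mst (γ n) i * φ (mst (N n) i)|) ≤ L * ((N n:ℝ)⁻¹ * ((∑ i, |aa l ms mst (γ n) i|) * B)) := by
              gcongr
          _ = L * B * ((N n:ℝ)⁻¹ * ∑ i, |aa l ms mst (γ n) i|) := by ring
          _ ≤ _ := by gcongr; exact haq n
      have h6 : C1 / (N n:ℝ) ^ κ * B * ((N n:ℝ)⁻¹ * ∑ j, |γ n j|) ≤ C1 * B * (N n:ℝ)⁻¹ := by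
        calc C1 / (N n:ℝ) ^ κ * B * ((N n:ℝ)⁻¹ * ∑ j, |γ n j|) ≤ C1 / (N n:ℝ) * B * 1 := by
              have := hN0 n
              gcongr
              · exact le_self_pow₀ (hN1 n) (by have := m.hκ; omega)
              · exact hγa n
          _ = _ := by ring
      have h7 : |(N n:ℝ)⁻¹ * ∑ j, γ n j * Tp L l φ (ms (N n) j)| ≤ C1 * B * (N n:ℝ)⁻¹ + L * B * q n := by
        have h8 := abs_add_le ((N n:ℝ)⁻¹ * ∑ j, γ n j * Tp L l φ (ms (N n) j) - L / N n * ∑ i, aa l ms mst (γ n) i * φ (mst (N n) i)) (L / N n * ∑ i, aa l ms mst (γ n) i * φ (mst (N n) i))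
        rw [sub_add_cancel] at h8
        linarith
      rw [div_eq_mul_inv, mul_assoc, norm_mul, Real.norm_of_nonneg hL.le, Real.norm_eq_abs]
      calc _ ≤ L * (C1 * B * (N n:ℝ)⁻¹ + L * B * q n) := by gcongr
        _ = _ := by ring
    rw [← h2]; congr 1; funext x; ring
  have huniq := fun (ψ : ℝ → ℝ) (hψ : Continuous ψ) (hp : ∀ x, ψ (x + L) = ψ x) => uniqueness c hg hg0 hgT hψ hp
  -- smooth part tends to zero
  set F : ℕ → ℝ → ℝ := fun n s => (N n:ℝ)⁻¹ * ∑ j, γ n j * RR L l (s, ms (N n) j) with hF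
  have hFpt : ∀ s, Tendsto (fun n => F n s) U (𝓝 0) := by
    intro s
    have h1 := htest (fun t => RR L l (s, t)) (fun t => RR_per2 hL c.hper s t) K2 (fun t t' => hK2 t t' s)
    rw [huniq (fun t => RR L l (s, t)) (cont_of_lip fun t t' => hK2 t t' s) (fun t => RR_per2 hL c.hper s t)] at h1
    have h2 := h1.const_mul L⁻¹
    rw [mul_zero] at h2
    refine h2.congr fun n => ?_
    simp only [hF]
    field_simp
  have hFlip : ∀ n s s', |F n s - F n s'| ≤ K1 * |s - s'| := by
    intro n s s'
    simp only [hF]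
    rw [← mul_sub, ← Finset.sum_sub_distrib, abs_mul, abs_of_pos (inv_pos.2 (hN0 n))]
    have h5 : |∑ j, (γ n j * RR L l (s, ms (N n) j) - γ n j * RR L l (s', ms (N n) j))| ≤ (∑ j, |γ n j|) * (K1 * |s - s'|) := by
      rw [Finset.sum_mul]
      refine (Finset.abs_sum_le_sum_abs _ _).trans (Finset.sum_le_sum fun i _ => ?_)
      rw [← mul_sub, abs_mul]
      exact mul_le_mul_of_nonneg_left (hK1 _ _ _) (abs_nonneg _)
    calc _ ≤ (N n:ℝ)⁻¹ * ((∑ j, |γ n j|) * (K1 * |s - s'|)) := by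
          have := hN0 n
          gcongr
      _ = ((N n:ℝ)⁻¹ * ∑ j, |γ n j|) * (K1 * |s - s'|) := by ring
      _ ≤ 1 * (K1 * |s - s'|) := by gcongr; exact hγa n
      _ = _ := one_mul _
  have hFu : ∀ ε > 0, ∀ᶠ n in (U : Filter ℕ), ∀ s ∈ Set.Ico (0:ℝ) L, |F n s| ≤ ε := by
    intro ε hε
    obtain ⟨k, hk⟩ := exists_nat_gt (K1 * L / (ε / 2))
    have hk0 : (0:ℝ) < k := lt_of_le_of_lt (by positivity) hk
    have hall : ∀ᶠ n in (U : Filter ℕ), ∀ i ∈ Finset.range k, |F n (i * L / k)| < ε / 2 := by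
      rw [Filter.eventually_all_finset]
      intro i _
      have := (hFpt (i * L / k)).abs
      rw [abs_zero] at this
      exact this.eventually_lt_const (by positivity)
    filter_upwards [hall] with n hn s hs
    set i := ⌊s * k / L⌋₊ with hi
    have h1 : (i:ℝ) ≤ s * k / L := Nat.floor_le (by have := hs.1; positivity)
    have h2 : s * k / L < i + 1 := Nat.lt_floor_add_one _
    have hik : i < k := by
      have : (i:ℝ) < k := by
        refine h1.trans_lt ?_
        rw [div_lt_iff₀ hL, mul_comm]
        exact mul_lt_mul_of_pos_left hs.2 hk0
      exact_mod_cast this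
    have h3 := hn i (Finset.mem_range.2 hik)
    have h4 := hFlip n s (i * L / k)
    have h5 : |s - i * L / k| ≤ L / k := by
      rw [le_div_iff₀ hL] at h1
      rw [div_lt_iff₀ hL] at h2
      have e1 : i * L / k ≤ s := (div_le_iff₀ hk0).2 h1
      have e2 : s ≤ i * L / k + L / k := by
        rw [← add_div, le_div_iff₀ hk0]; linarith
      rw [abs_le]; constructor
      · have : 0 < L / k := by positivity
        linarith
      · linarith
    have h6 : K1 * |s - i * L / k| ≤ ε / 2 := by
      calc _ ≤ K1 * (L / k) := by gcongr
        _ ≤ ε / 2 := by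
          rw [div_lt_iff₀ (by positivity)] at hk
          rw [← mul_div_assoc, div_le_iff₀ hk0]; linarith
    have h7 := abs_add_le (F n s - F n (i * L / k)) (F n (i * L / k))
    rw [sub_add_cancel] at h7
    linarith
  -- contradiction
  set p : ℝ := (π / L) ^ 2 with hp
  have hp0 : 0 < p := by positivity
  set ε : ℝ := √(p / (2 * (9 + p))) with hε
  have hε0 : 0 < ε := by positivity
  have hε2 : ε ^ 2 = p / (2 * (9 + p)) := Real.sq_sqrt (by positivity)
  have hcN : Tendsto (fun n => C2 * (N n:ℝ)⁻¹) U (𝓝 0) := by simpa using hlimN.const_mul C2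
  obtain ⟨n, ⟨hn1, hn2⟩, hn3⟩ := (((hFu ε hε0).and (hlimq.eventually_lt_const hε0)).and (hcN.eventually_lt_const hε0)).exists
  have hH := H_norm (by have := hN2 n; omega : 1 ≤ N n) (γ n)
  set Hg : Fin (N n) → ℝ := fun i => (N n:ℝ)⁻¹ * ∑ j : Fin (N n), qq (N n) (((i:ℕ):ℤ) - ((j:ℕ):ℤ)) * γ n j with hHg
  have hpt : ∀ i, p * Hg i ^ 2 ≤ 3 * (aa l ms mst (γ n) i ^ 2 + ε ^ 2 + ε ^ 2) := by
    intro i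
    have h1 := hA (N n) (by have := hN n; omega) (γ n) i
    have h2 := hn1 (mst (N n) i) (m.hmst (N n) (hN2 n) i).1
    have h3 : C2 / N n * ((N n:ℝ)⁻¹ * ∑ j, |γ n j|) ≤ ε := by
      calc _ ≤ C2 / N n * 1 := by
            have := hN0 n
            gcongr; exact hγa n
        _ = C2 * (N n:ℝ)⁻¹ := by ring
        _ ≤ ε := hn3.le
    have h4 := h1.trans h3
    set x := aa l ms mst (γ n) i
    set y := π / L * Hg i with hy
    have h5 : |x - y - F n (mst (N n) i)| ≤ ε := h4
    set z := F n (mst (N n) i)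
    have e1 : p * Hg i ^ 2 = y ^ 2 := by rw [hp, hy]; ring
    rw [e1]
    have h6 : (x - y - z) ^ 2 ≤ ε ^ 2 := by rw [← sq_abs]; exact pow_le_pow_left₀ (abs_nonneg _) h5 2
    have h7 : z ^ 2 ≤ ε ^ 2 := by rw [← sq_abs]; exact pow_le_pow_left₀ (abs_nonneg _) h2 2
    nlinarith [sq_nonneg (x + (x - y - z)), sq_nonneg (x + z), sq_nonneg (z - (x - y - z))]
  have hsum := Finset.sum_le_sum fun i (_ : i ∈ Finset.univ) => hpt i
  rw [← Finset.mul_sum, hH] at hsum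
  have e2 : ∑ i : Fin (N n), 3 * (aa l ms mst (γ n) i ^ 2 + ε ^ 2 + ε ^ 2) = 3 * (∑ i, aa l ms mst (γ n) i ^ 2) + 6 * N n * ε ^ 2 := by
    rw [← Finset.mul_sum, Finset.sum_add_distrib, Finset.sum_add_distrib]
    simp only [Finset.sum_const, Finset.card_univ, Fintype.card_fin, nsmul_eq_mul]
    ring
  rw [e2] at hsum
  have hg1 := hγ1 n
  have hq2 : e n ≤ ε ^ 2 := by
    have h1 := pow_le_pow_left₀ (Real.sqrt_nonneg _) hn2.le 2
    rwa [Real.sq_sqrt (he0 n)] at h1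
  have hm1 : ((N n:ℝ)⁻¹ * ∑ j, γ n j) ^ 2 ≤ ε ^ 2 := by
    have := ha0 n
    simp only [he] at hq2
    linarith
  have ha1 : ((N n:ℝ))⁻¹ * ∑ i, aa l ms mst (γ n) i ^ 2 ≤ ε ^ 2 := by
    simp only [he] at hq2
    linarith [sq_nonneg ((N n:ℝ)⁻¹ * ∑ j, γ n j)]
  have hs1 : ∑ j, γ n j ^ 2 = N n := by
    have := hN0 n
    field_simp at hg1; exact hg1
  have hs2 : ∑ i, aa l ms mst (γ n) i ^ 2 ≤ N n * ε ^ 2 := by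
    rw [inv_mul_le_iff₀ (hN0 n)] at ha1; exact ha1
  rw [hs1] at hsum
  have hfin : p * (N n - N n * ε ^ 2) ≤ 9 * N n * ε ^ 2 := by
    have h1 : p * (N n - N n * ε ^ 2) ≤ p * (N n - N n * ((N n:ℝ)⁻¹ * ∑ j, γ n j) ^ 2) := by
      have := hN0 n
      gcongr
    linarith
  have hfin2 : N n * p ≤ N n * ((9 + p) * ε ^ 2) := by linarith
  have hfin3 := le_of_mul_le_mul_left hfin2 (hN0 n)
  rw [hε2] at hfin3
  have : (9 + p) * (p / (2 * (9 + p))) = p / 2 := by field_simp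
  linarith

theorem stab {L : ℝ} {l : ℝ → ℂ} (c : Crv L l) {κ : ℕ} {M : ℝ} {ms mst : (N : ℕ) → Fin N → ℝ} (m : Msh L κ M ms mst) :
    ∃ C > 0, ∃ N₀ : ℕ, ∀ N, N₀ ≤ N → ∀ γ : Fin N → ℝ, (N:ℝ)⁻¹ * ∑ j, γ j ^ 2 ≤
      C * ((N:ℝ)⁻¹ * ∑ i, aa l ms mst γ i ^ 2 + ((N:ℝ)⁻¹ * ∑ j, γ j) ^ 2) := by
  obtain ⟨δ, hδ, N₀, h⟩ := stab_norm c m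
  refine ⟨δ⁻¹, by positivity, N₀, fun N hN γ => ?_⟩
  set σ := (N:ℝ)⁻¹ * ∑ j, γ j ^ 2 with hσ
  have hσ0 : 0 ≤ σ := mul_nonneg (by positivity) (Finset.sum_nonneg fun i _ => sq_nonneg _)
  rcases hσ0.eq_or_lt with h0 | h0
  · rw [← h0]
    exact mul_nonneg (by positivity) (add_nonneg (mul_nonneg (by positivity) (Finset.sum_nonneg fun i _ => sq_nonneg _)) (sq_nonneg _))
  set r := (√σ)⁻¹ with hr
  have hr2 : r ^ 2 = σ⁻¹ := by rw [hr, inv_pow, Real.sq_sqrt hσ0]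
  have h1 := h N hN (fun j => r * γ j) (by
    simp only [mul_pow]
    rw [← Finset.mul_sum, hr2, mul_left_comm, ← hσ, inv_mul_cancel₀ h0.ne'])
  have e1 : ∀ i, aa l ms mst (fun j => r * γ j) i = r * aa l ms mst γ i := by
    intro i
    simp only [aa, Finset.mul_sum]
    exact Finset.sum_congr rfl fun j _ => by ring
  simp only [e1, mul_pow] at h1
  rw [← Finset.mul_sum, ← Finset.mul_sum, mul_pow, hr2] at h1
  have h2 : δ * σ ≤ (N:ℝ)⁻¹ * ∑ i, aa l ms mst γ i ^ 2 + ((N:ℝ)⁻¹ * ∑ j, γ j) ^ 2 := by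
    rw [← le_div_iff₀ h0]
    refine h1.trans (le_of_eq ?_)
    rw [div_eq_inv_mul]
    ring
  rw [← div_eq_inv_mul, le_div_iff₀ hδ]
  linarith

open Real MeasureTheory Filter Topology

/-- absorption argument -/
theorem absorb {L C2 C3 D1 F g m σ d n S : ℝ} (hL : 0 < L) (hC2 : 0 < C2) (hC3 : 0 < C3)
    (hD1 : 0 ≤ D1) (hF : 0 ≤ F) (hm : 0 ≤ m) (hn : 1 ≤ n) (hn2 : 8 * C3 * D1 ^ 2 / L ^ 2 ≤ n)
    (hmσ : m ^ 2 ≤ σ) (hd : |d| ≤ (n * L)⁻¹ * (D1 * m + C2 * F))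
    (hS : S ≤ 2 * F ^ 2 + 2 * d ^ 2) (hσ : σ ≤ C3 * (S + g ^ 2)) :
    m ≤ √(2 * C3 * (3 + 4 * C2 ^ 2 / L ^ 2)) * (F + |g|) := by
  have hn0 : 0 < n := by linarith
  have h1 : d ^ 2 ≤ ((n * L)⁻¹ * (D1 * m + C2 * F)) ^ 2 := by
    rw [← sq_abs]; gcongr
  have h2 : ((n * L)⁻¹ * (D1 * m + C2 * F)) ^ 2 ≤ n⁻¹ * (L ^ 2)⁻¹ * (2 * (D1 ^ 2 * σ) + 2 * (C2 ^ 2 * F ^ 2)) := by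
    have e : ((n * L)⁻¹ * (D1 * m + C2 * F)) ^ 2 = n⁻¹ * (L ^ 2)⁻¹ * (n⁻¹ * (D1 * m + C2 * F) ^ 2) := by
      field_simp
    rw [e]
    refine mul_le_mul_of_nonneg_left ?_ (by positivity)
    have h3 : n⁻¹ * (D1 * m + C2 * F) ^ 2 ≤ (D1 * m + C2 * F) ^ 2 :=
      mul_le_of_le_one_left (sq_nonneg _) (inv_le_one_of_one_le₀ hn)
    have h4 : D1 ^ 2 * m ^ 2 ≤ D1 ^ 2 * σ := by gcongr
    nlinarith [sq_nonneg (D1 * m - C2 * F)]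
  have hσ0 : 0 ≤ σ := (sq_nonneg _).trans hmσ
  have h5 : C3 * (2 * (n⁻¹ * (L ^ 2)⁻¹ * (2 * (D1 ^ 2 * σ)))) ≤ σ / 2 := by
    have : 8 * C3 * D1 ^ 2 / L ^ 2 * n⁻¹ ≤ 1 := by
      rw [← div_eq_mul_inv, div_le_one hn0]; exact hn2
    have e : C3 * (2 * (n⁻¹ * (L ^ 2)⁻¹ * (2 * (D1 ^ 2 * σ)))) = (8 * C3 * D1 ^ 2 / L ^ 2 * n⁻¹) * (σ / 2) := by
      field_simp; ring
    rw [e]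
    exact mul_le_of_le_one_left (by positivity) this
  have h6 : n⁻¹ * (L ^ 2)⁻¹ * (2 * (C2 ^ 2 * F ^ 2)) ≤ 2 * C2 ^ 2 / L ^ 2 * F ^ 2 := by
    have e : n⁻¹ * (L ^ 2)⁻¹ * (2 * (C2 ^ 2 * F ^ 2)) = n⁻¹ * (2 * C2 ^ 2 / L ^ 2 * F ^ 2) := by
      field_simp
    rw [e]
    exact mul_le_of_le_one_left (by positivity) (inv_le_one_of_one_le₀ hn)
  have h7 : d ^ 2 ≤ n⁻¹ * (L ^ 2)⁻¹ * (2 * (D1 ^ 2 * σ)) + 2 * C2 ^ 2 / L ^ 2 * F ^ 2 := by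
    rw [mul_add] at h2; linarith
  have h8 : σ ≤ C3 * (2 * F ^ 2 + 2 * (n⁻¹ * (L ^ 2)⁻¹ * (2 * (D1 ^ 2 * σ)) + 2 * C2 ^ 2 / L ^ 2 * F ^ 2) + g ^ 2) :=
    hσ.trans (by gcongr; linarith)
  have h9 : σ ≤ 2 * C3 * ((2 + 4 * C2 ^ 2 / L ^ 2) * F ^ 2 + g ^ 2) := by
    have e : C3 * (2 * F ^ 2 + 2 * (n⁻¹ * (L ^ 2)⁻¹ * (2 * (D1 ^ 2 * σ)) + 2 * C2 ^ 2 / L ^ 2 * F ^ 2) + g ^ 2)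
      = C3 * (2 * (n⁻¹ * (L ^ 2)⁻¹ * (2 * (D1 ^ 2 * σ)))) + C3 * ((2 + 4 * C2 ^ 2 / L ^ 2) * F ^ 2 + g ^ 2) := by ring
    linarith
  have h10 : (2 + 4 * C2 ^ 2 / L ^ 2) * F ^ 2 + g ^ 2 ≤ (3 + 4 * C2 ^ 2 / L ^ 2) * (F + |g|) ^ 2 := by
    have : 0 ≤ 4 * C2 ^ 2 / L ^ 2 := by positivity
    set Q := 4 * C2 ^ 2 / L ^ 2
    have hg := abs_nonneg g
    have e : (F + |g|) ^ 2 = F ^ 2 + g ^ 2 + 2 * (F * |g|) := by rw [← sq_abs g]; ring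
    have hFg : 0 ≤ F * |g| := by positivity
    rw [e]
    nlinarith [sq_nonneg F, sq_nonneg g, mul_nonneg this (sq_nonneg g), mul_nonneg this hFg]
  have h11 : m ^ 2 ≤ (√(2 * C3 * (3 + 4 * C2 ^ 2 / L ^ 2)) * (F + |g|)) ^ 2 := by
    rw [mul_pow, Real.sq_sqrt (by positivity), mul_assoc (2 * C3)]
    refine hmσ.trans (h9.trans ?_)
    gcongr
  exact abs_le_of_sq_le_sq' h11 (by positivity) |>.2

theorem Tp_one {L : ℝ} {l : ℝ → ℂ} (c : Crv L l) (t : ℝ) : Tp L l (fun _ => 1) t = 0 := by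
  rw [Tp_eq c contDiff_const (fun _ => rfl)]
  simp

set_option maxHeartbeats 1000000 in
theorem main_thm {L : ℝ} {l : ℝ → ℂ} (c : Crv L l) {κ : ℕ} {M : ℝ} {ms mst : (N : ℕ) → Fin N → ℝ} (mm : Msh L κ M ms mst) :
    ∃ C > 0, ∃ N₀ : ℕ, ∀ N : ℕ, N₀ ≤ N →
      ∀ f : ℝ → ℝ, ContDiff ℝ (κ : ℕ∞) f → (∀ x, f (x + L) = f x) →
        (∫ x in (0:ℝ)..L, f x) = 0 →
      ∀ γ : ℝ, ∀ gam : Fin N → ℝ,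
        (∀ i : Fin N, (i : ℕ) < N - 1 → aa l ms mst gam i = f (mst N i)) →
        (N : ℝ)⁻¹ * ∑ j : Fin N, gam j = γ →
      ∀ φ : ℝ → ℝ, ContDiff ℝ (⊤ : ℕ∞) φ → (∀ x, φ (x + L) = φ x) →
        ∃ I : ℝ,
          Tendsto (fun ε : ℝ => ∫ x in XX L (ms N) ε, ((N : ℝ)⁻¹ * ∑ j : Fin N, gam j * KK l x (ms N j)) * φ x)
            (𝓝[>] 0) (𝓝 I) ∧
          |I - ∫ x in (0:ℝ)..L, f x * φ x| ≤
            C / (N : ℝ) ^ κ * (Cnorm κ f + |γ|) * Cnorm (κ + 1) φ := by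
  have hL := c.hL
  have hκ := mm.hκ
  obtain ⟨C1, hC1, N1, hN1, hT⟩ := T_disc c mm
  obtain ⟨C3, hC3, N3, hS⟩ := stab c mm
  obtain ⟨N4, hN4, hD⟩ := nodes_distinct hL mm
  obtain ⟨C2, hC2, hQ⟩ := quad hL (by omega : 1 ≤ κ) M mm.hM
  set E1 := Cnorm (κ + 1) (fun _ => (1:ℝ)) with hE1
  have hE10 : 0 ≤ E1 := Cnorm_nonneg _ _
  set D1 := C1 * E1 with hD1
  have hD10 : 0 ≤ D1 := by positivity
  obtain ⟨n5, hn5⟩ := exists_nat_ge (8 * C3 * D1 ^ 2 / L ^ 2)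
  set A := √(2 * C3 * (3 + 4 * C2 ^ 2 / L ^ 2)) with hA
  have hA0 : 0 ≤ A := Real.sqrt_nonneg _
  refine ⟨(C1 + D1) * A + C2 + C2 * 2 ^ κ, by positivity, N1 + N3 + N4 + n5, ?_⟩
  intro N hN f hf hfp hf0 γ gam hgam hγ φ hφ hφp
  have hN2 : 2 ≤ N := by omega
  have hNr : (1:ℝ) ≤ N := by exact_mod_cast (by omega : 1 ≤ N)
  have hN0 : (0:ℝ) < N := by linarith
  refine ⟨_, KK_pv c (ms N) (hD N (by omega)) gam hφ hφp, ?_⟩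
  have hf' : ContDiff ℝ κ f := hf
  set F := Cnorm κ f with hF
  set Φ := Cnorm (κ + 1) φ with hΦ
  have hF0 : 0 ≤ F := Cnorm_nonneg _ _
  have hΦ0 : 0 ≤ Φ := Cnorm_nonneg _ _
  have hFi : ∀ i ≤ κ, ∀ x, |iteratedDeriv i f x| ≤ F := fun i hi x => le_Cnorm hL hf' hfp hi x
  have hφκ : ContDiff ℝ ((κ + 1 : ℕ)) φ := hφ.of_le (by exact_mod_cast le_top)
  have hΦi : ∀ i ≤ κ + 1, ∀ x, |iteratedDeriv i φ x| ≤ Φ := fun i hi x => le_Cnorm hL hφκ hφp hi x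
  have hF_0 : ∀ x, |f x| ≤ F := fun x => by simpa using hFi 0 (by omega) x
  have hΦ_0 : ∀ x, |φ x| ≤ Φ := fun x => by simpa using hΦi 0 (by omega) x
  set m := (N:ℝ)⁻¹ * ∑ j, |gam j| with hm
  have hm0 : 0 ≤ m := mul_nonneg (by positivity) (Finset.sum_nonneg fun _ _ => abs_nonneg _)
  set σ := (N:ℝ)⁻¹ * ∑ j, gam j ^ 2 with hσ
  have hσ0 : 0 ≤ σ := mul_nonneg (by positivity) (Finset.sum_nonneg fun _ _ => sq_nonneg _)
  have hmσ : m ^ 2 ≤ σ := by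
    have := mean_abs_le gam
    calc m ^ 2 ≤ (√σ) ^ 2 := by gcongr
      _ = σ := Real.sq_sqrt hσ0
  set a := aa l ms mst gam with ha
  -- quadratures
  have hmst := fun i => (mm.hmst N hN2 i).2
  have q1 := hQ f hf' hfp F (fun x => by simpa [iteratedDeriv_one] using hFi 1 (by omega) x) (hFi κ le_rfl) N (by omega) (mst N) hmst
  rw [hf0, sub_zero] at q1
  have hprod : ∀ k, 1 ≤ k → k ≤ κ → ∀ x, |iteratedDeriv k (fun x => f x * φ x) x| ≤ 2 ^ κ * (F * Φ) := by
    intro k hk1 hk x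
    have := mul_bd (f := f) (g := φ) (k := k) (s := x) (a := F) (b := Φ)
      ((hf'.of_le (by exact_mod_cast hk)).contDiffAt) ((hφκ.of_le (by exact_mod_cast (by omega : k ≤ κ + 1))).contDiffAt) hF0
      (fun i hi => hFi i (by omega) x) (fun i hi => hΦi i (by omega) x)
    rw [Real.norm_eq_abs] at this
    refine this.trans ?_
    gcongr
    norm_num
  have q2 := hQ (fun x => f x * φ x) (hf'.mul (hφκ.of_le (by exact_mod_cast (by omega : κ ≤ κ + 1))))
    (fun x => by simp only [hfp, hφp]) (2 ^ κ * (F * Φ))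
    (fun x => by simpa [iteratedDeriv_one] using hprod 1 le_rfl (by omega) x) (hprod κ (by omega) le_rfl) N (by omega) (mst N) hmst
  have t1 := hT N (by omega) (fun _ => 1) contDiff_const (fun _ => rfl) gam
  simp only [Tp_one c, mul_zero, Finset.sum_const_zero, zero_sub, abs_neg, mul_one] at t1
  have t2 := hT N (by omega) φ hφ hφp gam
  rw [← ha] at t1 t2
  rw [← hm] at t1 t2
  -- the last index
  set il : Fin N := ⟨N - 1, by omega⟩ with hil
  set d := a il - f (mst N il) with hd
  have hzero : ∀ i, i ≠ il → a i - f (mst N i) = 0 := by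
    intro i hi
    have h1 : (i:ℕ) ≠ N - 1 := fun h => hi (Fin.ext h)
    have := i.2
    rw [hgam i (by omega), sub_self]
  have s1 : ∑ i, a i - ∑ i, f (mst N i) = d := by
    rw [← Finset.sum_sub_distrib]
    exact Finset.sum_eq_single il (fun i _ hi => hzero i hi) (fun h => absurd (Finset.mem_univ _) h)
  have s2 : ∑ i, a i * φ (mst N i) - ∑ i, f (mst N i) * φ (mst N i) = d * φ (mst N il) := by
    rw [← Finset.sum_sub_distrib]
    simp only [← sub_mul]
    exact Finset.sum_eq_single il (fun i _ hi => by rw [hzero i hi, zero_mul]) (fun h => absurd (Finset.mem_univ _) h)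
  have s3 : ∑ i, (a i - f (mst N i)) ^ 2 = d ^ 2 :=
    Finset.sum_eq_single il (fun i _ hi => by rw [hzero i hi]; norm_num) (fun h => absurd (Finset.mem_univ _) h)
  have hLd : L / N * |d| ≤ ((N:ℝ) ^ κ)⁻¹ * (D1 * m + C2 * F) := by
    have e : L / N * |d| = |L / N * ∑ i, a i - L / N * ∑ i, f (mst N i)| := by
      rw [← mul_sub, s1, abs_mul, abs_of_pos (div_pos hL hN0)]
    rw [e]
    refine (abs_sub _ _).trans ((add_le_add t1 q1).trans (le_of_eq ?_))
    rw [hD1]; ring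
  have hdb : |d| ≤ ((N:ℝ) * L)⁻¹ * (D1 * m + C2 * F) := by
    have h1 : |d| = N / L * (L / N * |d|) := by field_simp
    rw [h1]
    calc N / L * (L / N * |d|) ≤ N / L * (((N:ℝ) ^ κ)⁻¹ * (D1 * m + C2 * F)) := by gcongr
      _ ≤ N / L * (((N:ℝ) ^ 2)⁻¹ * (D1 * m + C2 * F)) := by gcongr
      _ = _ := by field_simp
  have hSb : (N:ℝ)⁻¹ * ∑ i, a i ^ 2 ≤ 2 * F ^ 2 + 2 * d ^ 2 := by
    have h1 : ∑ i, a i ^ 2 ≤ ∑ i : Fin N, (2 * F ^ 2 + 2 * (a i - f (mst N i)) ^ 2) := by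
      refine Finset.sum_le_sum fun i _ => ?_
      have h2 : f (mst N i) ^ 2 ≤ F ^ 2 := by rw [← sq_abs]; gcongr; exact hF_0 _
      nlinarith [sq_nonneg (a i - 2 * f (mst N i))]
    rw [Finset.sum_add_distrib, Finset.sum_const, ← Finset.mul_sum, s3, Finset.card_univ, Fintype.card_fin, nsmul_eq_mul] at h1
    calc (N:ℝ)⁻¹ * ∑ i, a i ^ 2 ≤ (N:ℝ)⁻¹ * (N * (2 * F ^ 2) + 2 * d ^ 2) := by gcongr
      _ = 2 * F ^ 2 + (N:ℝ)⁻¹ * (2 * d ^ 2) := by field_simp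
      _ ≤ _ := by
        have := mul_le_of_le_one_left (by positivity : 0 ≤ 2 * d ^ 2) (inv_le_one_of_one_le₀ hNr)
        linarith
  have hst := hS N (by omega) gam
  rw [hγ] at hst
  have hmA : m ≤ A * (F + |γ|) :=
    absorb hL hC2 hC3 hD10 hF0 hm0 hNr (hn5.trans (by exact_mod_cast (by omega : n5 ≤ N))) hmσ hdb hSb hst
  -- conclusion
  set I := (N:ℝ)⁻¹ * ∑ j, gam j * Tp L l φ (ms N j)
  set J := ∫ x in (0:ℝ)..L, f x * φ x
  have e : I - J = (I - L / N * ∑ i, a i * φ (mst N i)) + L / N * (d * φ (mst N il))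
      + (L / N * ∑ i, f (mst N i) * φ (mst N i) - J) := by rw [← s2]; ring
  have h3 : |L / N * (d * φ (mst N il))| ≤ ((N:ℝ) ^ κ)⁻¹ * (D1 * m + C2 * F) * Φ := by
    rw [abs_mul, abs_mul, abs_of_pos (div_pos hL hN0), ← mul_assoc]
    exact mul_le_mul hLd (hΦ_0 _) (abs_nonneg _) (by positivity)
  have hg0 := abs_nonneg γ
  calc |I - J| ≤ C1 / (N:ℝ) ^ κ * Φ * m + ((N:ℝ) ^ κ)⁻¹ * (D1 * m + C2 * F) * Φ + C2 / (N:ℝ) ^ κ * (2 ^ κ * (F * Φ)) := by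
        rw [e]
        exact (abs_add_le _ _).trans (add_le_add ((abs_add_le _ _).trans (add_le_add t2 h3)) q2)
    _ = ((N:ℝ) ^ κ)⁻¹ * Φ * ((C1 + D1) * m + (C2 + C2 * 2 ^ κ) * F) := by ring
    _ ≤ ((N:ℝ) ^ κ)⁻¹ * Φ * ((C1 + D1) * (A * (F + |γ|)) + (C2 + C2 * 2 ^ κ) * (F + |γ|)) := by
        gcongr
        linarith
    _ = _ := by ring

/-- Weak convergence of the discretized singular integral operator: the tangential
component of the approximate vortex flow converges weakly to `f` at rate `N^{-κ}`. -/
theorem weak_convergence_fapp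
    (L : ℝ) (hL : 0 < L) (l : ℝ → ℂ)
    (hsm : ContDiff ℝ (⊤ : ℕ∞) l) (hper : ∀ s, l (s + L) = l s)
    (harc : ∀ s, ‖deriv l s‖ = 1) (hinj : Set.InjOn l (Set.Ico 0 L))
    (horient : ∃ z₀ : ℂ, (∀ s, l s ≠ z₀) ∧
      (∫ t in (0:ℝ)..L, deriv l t / (l t - z₀)) = 2 * (π : ℂ) * Complex.I)
    (κ : ℕ) (hκ : 2 ≤ κ) (M : ℝ) (hM : 0 < M)
    (ms mst : (N : ℕ) → Fin N → ℝ)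
    (hms : ∀ N, 2 ≤ N → ∀ i : Fin N, ms N i ∈ Set.Ico (0:ℝ) L ∧
      |ms N i - ((i : ℕ) : ℝ) * L / (N : ℝ)| ≤ M / (N : ℝ) ^ (κ + 1))
    (hmst : ∀ N, 2 ≤ N → ∀ i : Fin N, mst N i ∈ Set.Ico (0:ℝ) L ∧
      |mst N i - (((i : ℕ) : ℝ) + 1/2) * L / (N : ℝ)| ≤ M / (N : ℝ) ^ (κ + 1)) :
    ∃ C > 0, ∃ N₀ : ℕ, ∀ N : ℕ, N₀ ≤ N →
      ∀ f : ℝ → ℝ, ContDiff ℝ (κ : ℕ∞) f → (∀ x, f (x + L) = f x) →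
        (∫ x in (0:ℝ)..L, f x) = 0 →
      ∀ γ : ℝ, ∀ gam : Fin N → ℝ,
        (∀ i : Fin N, (i : ℕ) < N - 1 →
          (N : ℝ)⁻¹ * ∑ j : Fin N, gam j *
            (dotR (l (mst N i) - l (ms N j)) (deriv l (mst N i))
              / ‖l (mst N i) - l (ms N j)‖ ^ 2) = f (mst N i)) →
        (N : ℝ)⁻¹ * ∑ j : Fin N, gam j = γ →
      ∀ φ : ℝ → ℝ, ContDiff ℝ (⊤ : ℕ∞) φ → (∀ x, φ (x + L) = φ x) →
        ∃ I : ℝ,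
          Tendsto (fun ε : ℝ =>
              ∫ x in {x : ℝ | x ∈ Set.Ico (0:ℝ) L ∧
                  ∀ j : Fin N, ∀ k : ℤ, ε ≤ |x - ms N j - k * L|},
                ((N : ℝ)⁻¹ * ∑ j : Fin N, gam j *
                  (dotR (l x - l (ms N j)) (deriv l x) / ‖l x - l (ms N j)‖ ^ 2)) * φ x)
            (𝓝[>] 0) (𝓝 I) ∧
          |I - ∫ x in (0:ℝ)..L, f x * φ x| ≤
            C / (N : ℝ) ^ κ * (Cnorm κ f + |γ|) * Cnorm (κ + 1) φ := by
  exact main_thm ⟨hL, hsm, hper, harc, hinj⟩ ⟨hκ, hM, hms, hmst⟩
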